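/- The commutator map c : SU(2) × SU(2) → SU(2), c(u,v) = uvu⁻¹v⁻¹, is a continuous map which is not null-homotopic. -/

import Mathlib

/-- The special unitary group `SU(n)`: the subgroup of the unitary group
`U(n) = Matrix.unitaryGroup (Fin n) ℂ` consisting of matrices of determinant `1`. -/
def SU (n : ℕ) : Subgroup (Matrix.unitaryGroup (Fin n) ℂ) where
  carrier := {A | (A : Matrix (Fin n) (Fin n) ℂ).det = 1}
  mul_mem' := by
    intro a b ha hb
    simp only [Set.mem_setOf_eq] at *
    simp [Matrix.UnitaryGroup.mul_val, Matrix.det_mul, ha, hb]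
  one_mem' := by simp
  inv_mem' := by
    intro a ha
    simp only [Set.mem_setOf_eq] at *
    show ((a⁻¹ : Matrix.unitaryGroup (Fin n) ℂ) : Matrix (Fin n) (Fin n) ℂ).det = 1
    rw [Matrix.UnitaryGroup.inv_val, Matrix.star_eq_conjTranspose, Matrix.det_conjTranspose, ha]
    simp


section

open Matrix
open scoped Kronecker TensorProduct

namespace BottK

/-! ### Bundles as continuous families of idempotent matrices -/

/-- A complex vector bundle over `X`, presented as a continuous family of idempotent matrices. -/
structure Bun (X : Type) [TopologicalSpace X] : Type 1 where
  ι : Type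
  [fin : Fintype ι]
  [dec : DecidableEq ι]
  e : X → Matrix ι ι ℂ
  cont : Continuous e
  idem : ∀ x, e x * e x = e x

attribute [instance] Bun.fin Bun.dec

variable {X Y Z : Type} [TopologicalSpace X] [TopologicalSpace Y] [TopologicalSpace Z]

/-- Isomorphism of bundles (Murray - von Neumann equivalence). -/
def Bun.Iso (A B : Bun X) : Prop :=
  ∃ (a : X → Matrix A.ι B.ι ℂ) (b : X → Matrix B.ι A.ι ℂ), Continuous a ∧ Continuous b ∧
    (∀ x, a x * b x = A.e x) ∧ (∀ x, b x * a x = B.e x)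

theorem Bun.Iso.refl (A : Bun X) : A.Iso A := ⟨A.e, A.e, A.cont, A.cont, A.idem, A.idem⟩

theorem Bun.Iso.symm {A B : Bun X} (h : A.Iso B) : B.Iso A := by
  obtain ⟨a, b, ha, hb, h1, h2⟩ := h
  exact ⟨b, a, hb, ha, h2, h1⟩

theorem Bun.Iso.trans {A B C : Bun X} (h : A.Iso B) (h' : B.Iso C) : A.Iso C := by
  obtain ⟨a, b, ha, hb, h1, h2⟩ := h
  obtain ⟨c, d, hc, hd, h3, h4⟩ := h'
  refine ⟨fun x => a x * c x, fun x => d x * b x, ha.matrix_mul hc, hd.matrix_mul hb, ?_, ?_⟩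
  · intro x
    calc a x * c x * (d x * b x) = a x * (c x * d x) * b x := by simp only [Matrix.mul_assoc]
      _ = (a x * b x) * (a x * b x) := by rw [h3, ← h2]; simp only [Matrix.mul_assoc]
      _ = A.e x := by rw [h1, A.idem]
  · intro x
    calc d x * b x * (a x * c x) = d x * (b x * a x) * c x := by simp only [Matrix.mul_assoc]
      _ = (d x * c x) * (d x * c x) := by rw [h2, ← h3]; simp only [Matrix.mul_assoc]
      _ = C.e x := by rw [h4, C.idem]

instance bunSetoid (X : Type) [TopologicalSpace X] : Setoid (Bun X) :=
  ⟨Bun.Iso, Bun.Iso.refl, Bun.Iso.symm, Bun.Iso.trans⟩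

theorem Bun.Iso.ofEquiv {A B : Bun X} (σ : A.ι ≃ B.ι)
    (h : ∀ x i j, A.e x i j = B.e x (σ i) (σ j)) : A.Iso B := by
  have hA : ∀ x, A.e x = (B.e x).submatrix σ σ := fun x => by ext i j; simp [h]
  refine ⟨fun x => (B.e x).submatrix σ id, fun x => (B.e x).submatrix id σ,
    B.cont.matrix_submatrix _ _, B.cont.matrix_submatrix _ _, ?_, ?_⟩
  · intro x
    rw [hA, ← Matrix.submatrix_mul _ _ _ _ _ Function.bijective_id, B.idem]
  · intro x
    rw [← Matrix.submatrix_mul _ _ _ _ _ σ.bijective, B.idem]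
    rfl

theorem continuous_kron {l m n p : Type} {f : X → Matrix l m ℂ} {g : X → Matrix n p ℂ}
    (hf : Continuous f) (hg : Continuous g) : Continuous fun x => f x ⊗ₖ g x := by
  refine continuous_matrix fun i j => ?_
  exact (hf.matrix_elem i.1 j.1).mul (hg.matrix_elem i.2 j.2)

theorem continuous_fromRows {l m n : Type} {f : X → Matrix l m ℂ} {g : X → Matrix n m ℂ}
    (hf : Continuous f) (hg : Continuous g) : Continuous fun x => Matrix.fromRows (f x) (g x) := by
  refine continuous_matrix fun i j => ?_
  rcases i with i | i
  · exact hf.matrix_elem i j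
  · exact hg.matrix_elem i j

theorem continuous_fromCols {l m n : Type} {f : X → Matrix l m ℂ} {g : X → Matrix l n ℂ}
    (hf : Continuous f) (hg : Continuous g) : Continuous fun x => Matrix.fromCols (f x) (g x) := by
  refine continuous_matrix fun i j => ?_
  rcases j with j | j
  · exact hf.matrix_elem i j
  · exact hg.matrix_elem i j

/-- bundle from a continuous idempotent family -/
@[reducible] def Bun.of {ι : Type} [Fintype ι] [DecidableEq ι] (e : X → Matrix ι ι ℂ)
    (h : Continuous e) (h' : ∀ x, e x * e x = e x) : Bun X := ⟨ι, e, h, h'⟩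

@[reducible] def Bun.add (A B : Bun X) : Bun X where
  ι := A.ι ⊕ B.ι
  e x := fromBlocks (A.e x) 0 0 (B.e x)
  cont := A.cont.matrix_fromBlocks continuous_const continuous_const B.cont
  idem x := by simp [fromBlocks_multiply, A.idem, B.idem]

@[reducible] def Bun.mul (A B : Bun X) : Bun X where
  ι := A.ι × B.ι
  e x := A.e x ⊗ₖ B.e x
  cont := continuous_kron A.cont B.cont
  idem x := by rw [← mul_kronecker_mul, A.idem, B.idem]

@[reducible] def Bun.triv (ι : Type) [Fintype ι] [DecidableEq ι] : Bun X where
  ι := ι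
  e _ := 1
  cont := continuous_const
  idem x := by simp

@[reducible] def Bun.pull (f : C(X, Y)) (A : Bun Y) : Bun X where
  ι := A.ι
  e x := A.e (f x)
  cont := A.cont.comp f.continuous
  idem x := A.idem _

@[reducible] def Bun.compl (A : Bun X) : Bun X where
  ι := A.ι
  e x := 1 - A.e x
  cont := continuous_const.sub A.cont
  idem x := by
    have := A.idem x
    rw [sub_mul, mul_sub, mul_sub, this]; simp

/-- Isomorphism classes of bundles. -/
def VB (X : Type) [TopologicalSpace X] : Type 1 := Quotient (bunSetoid X)

def VB.mk (A : Bun X) : VB X := Quotient.mk _ A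

theorem VB.mk_eq {A B : Bun X} : VB.mk A = VB.mk B ↔ A.Iso B := Quotient.eq

theorem VB.mk_equiv {A B : Bun X} (σ : A.ι ≃ B.ι)
    (h : ∀ x i j, A.e x i j = B.e x (σ i) (σ j)) : VB.mk A = VB.mk B :=
  VB.mk_eq.2 (.ofEquiv σ h)

theorem Bun.Iso.add {A A' B B' : Bun X} (h : A.Iso A') (h' : B.Iso B') :
    (A.add B).Iso (A'.add B') := by
  obtain ⟨a, b, ha, hb, h1, h2⟩ := h
  obtain ⟨c, d, hc, hd, h3, h4⟩ := h'
  refine ⟨fun x => fromBlocks (a x) 0 0 (c x), fun x => fromBlocks (b x) 0 0 (d x),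
    ha.matrix_fromBlocks continuous_const continuous_const hc,
    hb.matrix_fromBlocks continuous_const continuous_const hd, ?_, ?_⟩ <;>
  · intro x
    simp [fromBlocks_multiply, h1, h2, h3, h4]

theorem Bun.Iso.mul {A A' B B' : Bun X} (h : A.Iso A') (h' : B.Iso B') :
    (A.mul B).Iso (A'.mul B') := by
  obtain ⟨a, b, ha, hb, h1, h2⟩ := h
  obtain ⟨c, d, hc, hd, h3, h4⟩ := h'
  refine ⟨fun x => a x ⊗ₖ c x, fun x => b x ⊗ₖ d x,
    continuous_kron ha hc, continuous_kron hb hd, ?_, ?_⟩ <;>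
  · intro x
    rw [← mul_kronecker_mul]
    simp [h1, h2, h3, h4]

theorem Bun.Iso.pull {A A' : Bun Y} (f : C(X, Y)) (h : A.Iso A') :
    (A.pull f).Iso (A'.pull f) := by
  obtain ⟨a, b, ha, hb, h1, h2⟩ := h
  exact ⟨fun x => a (f x), fun x => b (f x), ha.comp f.continuous, hb.comp f.continuous,
    fun x => h1 _, fun x => h2 _⟩

instance : Add (VB X) :=
  ⟨Quotient.lift₂ (fun A B => VB.mk (A.add B)) fun _ _ _ _ h h' => VB.mk_eq.2 (h.add h')⟩
instance : Mul (VB X) :=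
  ⟨Quotient.lift₂ (fun A B => VB.mk (A.mul B)) fun _ _ _ _ h h' => VB.mk_eq.2 (h.mul h')⟩
instance : Zero (VB X) := ⟨VB.mk (Bun.triv Empty)⟩
instance : One (VB X) := ⟨VB.mk (Bun.triv Unit)⟩

theorem VB.mk_add (A B : Bun X) : VB.mk A + VB.mk B = VB.mk (A.add B) := rfl
theorem VB.mk_mul (A B : Bun X) : VB.mk A * VB.mk B = VB.mk (A.mul B) := rfl
theorem VB.zero_def : (0 : VB X) = VB.mk (Bun.triv Empty) := rfl
theorem VB.one_def : (1 : VB X) = VB.mk (Bun.triv Unit) := rfl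

theorem VB.ind {p : VB X → Prop} (h : ∀ A, p (VB.mk A)) (a : VB X) : p a := Quotient.ind h a

theorem VB.add_comm' (a b : VB X) : a + b = b + a := by
  induction a using VB.ind with | _ A
  induction b using VB.ind with | _ B
  refine VB.mk_equiv (Equiv.sumComm _ _) ?_
  rintro x (i | i) (j | j) <;> simp

theorem VB.mul_comm' (a b : VB X) : a * b = b * a := by
  induction a using VB.ind with | _ A
  induction b using VB.ind with | _ B
  refine VB.mk_equiv (Equiv.prodComm _ _) ?_
  rintro x ⟨i, i'⟩ ⟨j, j'⟩
  simp [_root_.mul_comm]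

theorem VB.zero_add' (a : VB X) : 0 + a = a := by
  induction a using VB.ind with | _ A
  refine VB.mk_equiv (Equiv.emptySum Empty A.ι) ?_
  rintro x (i | i) (j | j)
  · exact i.elim
  · exact i.elim
  · exact j.elim
  · rfl

theorem VB.one_mul' (a : VB X) : 1 * a = a := by
  induction a using VB.ind with | _ A
  refine VB.mk_equiv (Equiv.punitProd A.ι) ?_
  rintro x ⟨i, i'⟩ ⟨j, j'⟩
  simp [Equiv.punitProd]

theorem VB.zero_mul' (a : VB X) : 0 * a = 0 := by
  induction a using VB.ind with | _ A
  refine VB.mk_equiv (Equiv.equivOfIsEmpty (Empty × A.ι) Empty) ?_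
  rintro x ⟨i, i'⟩ ⟨j, j'⟩
  exact i.elim

theorem VB.add_assoc' (a b c : VB X) : a + b + c = a + (b + c) := by
  induction a using VB.ind with | _ A
  induction b using VB.ind with | _ B
  induction c using VB.ind with | _ C
  refine VB.mk_equiv (Equiv.sumAssoc A.ι B.ι C.ι) ?_
  rintro x ((i | i) | i) ((j | j) | j) <;> simp

theorem VB.mul_assoc' (a b c : VB X) : a * b * c = a * (b * c) := by
  induction a using VB.ind with | _ A
  induction b using VB.ind with | _ B
  induction c using VB.ind with | _ C
  refine VB.mk_equiv (Equiv.prodAssoc A.ι B.ι C.ι) ?_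
  rintro x ⟨⟨i, i'⟩, i''⟩ ⟨⟨j, j'⟩, j''⟩
  simp [_root_.mul_assoc]

theorem VB.add_mul' (a b c : VB X) : (a + b) * c = a * c + b * c := by
  induction a using VB.ind with | _ A
  induction b using VB.ind with | _ B
  induction c using VB.ind with | _ C
  refine VB.mk_equiv (Equiv.sumProdDistrib A.ι B.ι C.ι) ?_
  rintro x ⟨i | i, i'⟩ ⟨j | j, j'⟩ <;> simp

instance : CommSemiring (VB X) where
  add_assoc := VB.add_assoc'
  zero_add := VB.zero_add'
  add_zero a := by rw [VB.add_comm', VB.zero_add']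
  add_comm := VB.add_comm'
  mul_assoc := VB.mul_assoc'
  one_mul := VB.one_mul'
  mul_one a := by rw [VB.mul_comm', VB.one_mul']
  mul_comm := VB.mul_comm'
  zero_mul := VB.zero_mul'
  mul_zero a := by rw [VB.mul_comm', VB.zero_mul']
  right_distrib := VB.add_mul'
  left_distrib a b c := by rw [VB.mul_comm', VB.add_mul', VB.mul_comm' b, VB.mul_comm' c]
  nsmul := nsmulRec

theorem VB.mk_triv_fin (n : ℕ) : VB.mk (Bun.triv (Fin n) : Bun X) = n := by
  induction n with
  | zero =>
    rw [Nat.cast_zero]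
    exact VB.mk_equiv (Equiv.equivOfIsEmpty (Fin 0) Empty) fun x i => i.elim0
  | succ n ih =>
    rw [Nat.cast_succ, ← ih]
    symm
    refine VB.mk_equiv ((Equiv.sumCongr (Equiv.refl _) (Equiv.ofUnique Unit (Fin 1))).trans
      finSumFinEquiv) ?_
    intro x i j
    have h := fun i j : Fin n ⊕ Unit => (((Equiv.sumCongr (Equiv.refl (Fin n))
      (Equiv.ofUnique Unit (Fin 1))).trans finSumFinEquiv).injective.eq_iff (a := i) (b := j))
    change (fromBlocks 1 0 0 1 : Matrix (Fin n ⊕ Unit) (Fin n ⊕ Unit) ℂ) i j = _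
    rw [fromBlocks_one]
    change _ = (1 : Matrix _ _ ℂ) _ _
    rw [Matrix.one_apply, Matrix.one_apply]
    exact if_congr (h i j).symm rfl rfl

theorem VB.mk_triv (ι : Type) [Fintype ι] [DecidableEq ι] :
    VB.mk (Bun.triv ι : Bun X) = (Fintype.card ι : VB X) := by
  rw [← VB.mk_triv_fin]
  refine VB.mk_equiv (Fintype.equivFin ι) fun x i j => ?_
  change (1 : Matrix _ _ ℂ) _ _ = (1 : Matrix _ _ ℂ) _ _
  rw [Matrix.one_apply, Matrix.one_apply]
  exact if_congr (Fintype.equivFin ι).injective.eq_iff.symm rfl rfl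

def VB.pull (f : C(X, Y)) : VB Y →+* VB X where
  toFun := Quotient.lift (fun A => VB.mk (A.pull f)) fun _ _ h => VB.mk_eq.2 (h.pull f)
  map_one' := rfl
  map_zero' := rfl
  map_add' a b := by
    induction a using VB.ind with | _ A
    induction b using VB.ind with | _ B
    rfl
  map_mul' a b := by
    induction a using VB.ind with | _ A
    induction b using VB.ind with | _ B
    rfl

theorem VB.pull_mk (f : C(X, Y)) (A : Bun Y) : VB.pull f (VB.mk A) = VB.mk (A.pull f) := rfl

/-- orthogonal sums -/
theorem VB.mk_orth {ι : Type} [Fintype ι] [DecidableEq ι] {p q : X → Matrix ι ι ℂ}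
    (hp : Continuous p) (hq : Continuous q) (hp' : ∀ x, p x * p x = p x)
    (hq' : ∀ x, q x * q x = q x) (h1 : ∀ x, p x * q x = 0) (h2 : ∀ x, q x * p x = 0)
    {r : X → Matrix ι ι ℂ} (hr : Continuous r) (hr' : ∀ x, r x * r x = r x)
    (h : ∀ x, r x = p x + q x) :
    VB.mk (Bun.of r hr hr') = VB.mk (Bun.of p hp hp') + VB.mk (Bun.of q hq hq') := by
  refine VB.mk_eq.2 ⟨fun x => fromCols (p x) (q x), fun x => fromRows (p x) (q x),
    continuous_fromCols hp hq, continuous_fromRows hp hq, ?_, ?_⟩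
  · intro x
    rw [fromCols_mul_fromRows, hp', hq', ← h]
  · intro x
    rw [fromRows_mul_fromCols, hp', hq', h1, h2]

theorem VB.mk_add_compl (A : Bun X) : VB.mk A + VB.mk A.compl = (Fintype.card A.ι : VB X) := by
  rw [← VB.mk_triv]
  symm
  refine VB.mk_orth A.cont A.compl.cont A.idem A.compl.idem ?_ ?_ continuous_const
    (by simp) (fun x => by simp)
  · intro x; simp [mul_sub, A.idem]
  · intro x; simp [sub_mul, A.idem]

/-! ### exterior square -/

section swap
variable {ι κ : Type} [Fintype ι] [DecidableEq ι] [Fintype κ] [DecidableEq κ]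

def tau (ι : Type) [DecidableEq ι] : Matrix (ι × ι) (ι × ι) ℂ :=
  (1 : Matrix (ι × ι) (ι × ι) ℂ).submatrix Prod.swap id

theorem tau_mul {m : Type} [Fintype m] (M : Matrix (ι × ι) m ℂ) :
    tau ι * M = M.submatrix Prod.swap id := by
  conv_lhs => rw [← Matrix.submatrix_id_id M]
  rw [tau, ← Matrix.submatrix_mul _ _ _ _ _ Function.bijective_id, Matrix.one_mul]

theorem mul_tau {m : Type} [Fintype m] (M : Matrix m (ι × ι) ℂ) :
    M * tau ι = M.submatrix id Prod.swap := by
  ext i j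
  simp only [tau, Matrix.mul_apply, Matrix.submatrix_apply, Matrix.one_apply, id]
  rw [Finset.sum_eq_single j.swap]
  · simp
  · intro b _ hb
    rw [if_neg, mul_zero]
    rintro rfl
    simp at hb
  · simp

theorem tau_kron (A B : Matrix ι κ ℂ) : tau ι * (A ⊗ₖ B) = (B ⊗ₖ A) * tau κ := by
  rw [tau_mul, mul_tau]
  ext ⟨i, i'⟩ ⟨j, j'⟩
  simp [mul_comm]

theorem tau_tau : tau ι * tau ι = 1 := by
  rw [tau_mul, tau]
  simp

/-- antisymmetrizer -/
noncomputable def asym (ι : Type) [DecidableEq ι] : Matrix (ι × ι) (ι × ι) ℂ :=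
  (2⁻¹ : ℂ) • (1 - tau ι)

theorem asym_mul_asym : asym ι * asym ι = asym ι := by
  simp only [asym, smul_mul_assoc, mul_smul_comm, sub_mul, mul_sub, tau_tau, mul_one, one_mul]
  ext i j
  simp
  ring

theorem asym_kron (A : Matrix ι κ ℂ) : asym ι * (A ⊗ₖ A) = (A ⊗ₖ A) * asym κ := by
  simp only [asym, Matrix.smul_mul, Matrix.mul_smul, Matrix.sub_mul, Matrix.mul_sub, tau_kron,
    Matrix.mul_one, Matrix.one_mul]

theorem asym_kron_apply (A : Matrix ι ι ℂ) (i j i' j' : ι) :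
    (asym ι * (A ⊗ₖ A)) (i, j) (i', j') = 2⁻¹ * (A i i' * A j j' - A j i' * A i j') := by
  simp only [asym, Matrix.smul_mul, Matrix.sub_mul, tau_mul, Matrix.one_mul]
  simp

theorem asym_kron_mul (A : Matrix ι κ ℂ) {μ : Type} [Fintype μ] [DecidableEq μ]
    (B : Matrix κ μ ℂ) :
    (asym ι * (A ⊗ₖ A)) * (asym κ * (B ⊗ₖ B)) = asym ι * ((A * B) ⊗ₖ (A * B)) := by
  rw [asym_kron, Matrix.mul_assoc, ← Matrix.mul_assoc (asym κ), asym_mul_asym,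
    ← Matrix.mul_assoc, ← asym_kron, Matrix.mul_assoc, ← mul_kronecker_mul]
end swap

@[reducible] noncomputable def Bun.lam (A : Bun X) : Bun X where
  ι := A.ι × A.ι
  e x := asym A.ι * (A.e x ⊗ₖ A.e x)
  cont := continuous_const.matrix_mul (continuous_kron A.cont A.cont)
  idem x := by rw [asym_kron_mul, A.idem]

theorem Bun.Iso.lam {A B : Bun X} (h : A.Iso B) : A.lam.Iso B.lam := by
  obtain ⟨a, b, ha, hb, h1, h2⟩ := h
  refine ⟨fun x => asym A.ι * (a x ⊗ₖ a x), fun x => asym B.ι * (b x ⊗ₖ b x),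
    continuous_const.matrix_mul (continuous_kron ha ha),
    continuous_const.matrix_mul (continuous_kron hb hb), ?_, ?_⟩
  · intro x; beta_reduce; rw [asym_kron_mul, h1]
  · intro x; beta_reduce; rw [asym_kron_mul, h2]

noncomputable def VB.lam : VB X → VB X :=
  Quotient.lift (fun A => VB.mk A.lam) fun _ _ h => VB.mk_eq.2 h.lam

theorem VB.lam_mk (A : Bun X) : VB.lam (VB.mk A) = VB.mk A.lam := rfl

theorem VB.lam_orth {ι : Type} [Fintype ι] [DecidableEq ι] {p q : X → Matrix ι ι ℂ}
    (hp : Continuous p) (hq : Continuous q) (hp' : ∀ x, p x * p x = p x)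
    (hq' : ∀ x, q x * q x = q x) (h1 : ∀ x, p x * q x = 0) (h2 : ∀ x, q x * p x = 0)
    {r : X → Matrix ι ι ℂ} (hr : Continuous r) (hr' : ∀ x, r x * r x = r x)
    (h : ∀ x, r x = p x + q x) :
    VB.lam (VB.mk (Bun.of r hr hr')) = VB.lam (VB.mk (Bun.of p hp hp')) +
      VB.mk (Bun.of p hp hp') * VB.mk (Bun.of q hq hq') + VB.lam (VB.mk (Bun.of q hq hq')) := by
  have hpp : ∀ x, (p x ⊗ₖ q x) * (p x ⊗ₖ q x) = p x ⊗ₖ q x := fun x => by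
    rw [← mul_kronecker_mul, hp', hq']
  have hqq : ∀ x, (q x ⊗ₖ p x) * (q x ⊗ₖ p x) = q x ⊗ₖ p x := fun x => by
    rw [← mul_kronecker_mul, hp', hq']
  have hpq : ∀ x, (p x ⊗ₖ q x) * (q x ⊗ₖ p x) = 0 := fun x => by
    rw [← mul_kronecker_mul, h1, h2]; simp
  have hqp : ∀ x, (q x ⊗ₖ p x) * (p x ⊗ₖ q x) = 0 := fun x => by
    rw [← mul_kronecker_mul, h1, h2]; simp
  set M : X → Matrix (ι × ι) (ι × ι) ℂ := fun x => asym ι * (p x ⊗ₖ q x + q x ⊗ₖ p x) with hM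
  have hcomm : ∀ x, asym ι * (p x ⊗ₖ q x + q x ⊗ₖ p x) = (p x ⊗ₖ q x + q x ⊗ₖ p x) * asym ι := by
    intro x
    rw [asym, Matrix.smul_mul, Matrix.mul_smul, Matrix.sub_mul, Matrix.mul_sub,
      Matrix.mul_one, Matrix.one_mul, Matrix.add_mul, Matrix.mul_add, tau_kron, tau_kron, add_comm]
    congr 2
    abel
  have hMc : Continuous M := continuous_const.matrix_mul
    ((continuous_kron hp hq).add (continuous_kron hq hp))
  have hMi : ∀ x, M x * M x = M x := by
    intro x
    simp only [hM]
    rw [Matrix.mul_assoc, ← Matrix.mul_assoc _ (asym ι), ← hcomm, Matrix.mul_assoc (asym ι),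
      ← Matrix.mul_assoc, asym_mul_asym]
    congr 1
    simp only [Matrix.add_mul, Matrix.mul_add, hpp, hqq, hpq, hqp, add_zero, zero_add]
  have key : VB.mk (Bun.of M hMc hMi) = VB.mk ((Bun.of p hp hp').mul (Bun.of q hq hq')) := by
    refine VB.mk_eq.2 ⟨fun x => (1 - tau ι) * (p x ⊗ₖ q x),
      fun x => (p x ⊗ₖ q x) * asym ι, ?_, ?_, ?_, ?_⟩
    · exact continuous_const.matrix_mul (continuous_kron hp hq)
    · exact (continuous_kron hp hq).matrix_mul continuous_const
    · intro x
      change _ = M x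
      rw [Matrix.mul_assoc, ← Matrix.mul_assoc _ _ (asym ι), hpp]
      simp only [hM, asym, Matrix.smul_mul, Matrix.mul_smul]
      congr 1
      simp only [Matrix.sub_mul, Matrix.mul_sub, tau_kron, Matrix.mul_one, Matrix.one_mul,
        Matrix.mul_add]
      rw [← Matrix.mul_assoc, tau_kron, Matrix.mul_assoc, tau_tau, Matrix.mul_one]
      abel
    · intro x
      change _ = p x ⊗ₖ q x
      have h3 : (p x ⊗ₖ q x) * (tau ι * (p x ⊗ₖ q x)) = 0 := by
        rw [tau_kron, ← Matrix.mul_assoc, hpq, Matrix.zero_mul]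
      have h4 : asym ι * (1 - tau ι) = 1 - tau ι := by
        have := asym_mul_asym (ι := ι)
        rw [asym, smul_mul_assoc, mul_smul_comm] at this
        have h5 := congrArg (fun m => (2 : ℂ) • m) this
        simpa [asym, smul_smul] using h5
      rw [← Matrix.mul_assoc, Matrix.mul_assoc _ (asym ι), h4, Matrix.mul_assoc, Matrix.sub_mul,
        Matrix.mul_sub, h3, Matrix.one_mul, hpp, sub_zero]
  have e1 : ∀ x, (p x ⊗ₖ p x) * (p x ⊗ₖ q x + q x ⊗ₖ p x) = 0 := fun x => by
    rw [Matrix.mul_add, ← mul_kronecker_mul, ← mul_kronecker_mul, h1]; simp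
  have e2 : ∀ x, (p x ⊗ₖ q x + q x ⊗ₖ p x) * (p x ⊗ₖ p x) = 0 := fun x => by
    rw [Matrix.add_mul, ← mul_kronecker_mul, ← mul_kronecker_mul, h2]; simp
  have e3 : ∀ x, (q x ⊗ₖ q x) * (p x ⊗ₖ q x + q x ⊗ₖ p x) = 0 := fun x => by
    rw [Matrix.mul_add, ← mul_kronecker_mul, ← mul_kronecker_mul, h2]; simp
  have e4 : ∀ x, (p x ⊗ₖ q x + q x ⊗ₖ p x) * (q x ⊗ₖ q x) = 0 := fun x => by
    rw [Matrix.add_mul, ← mul_kronecker_mul, ← mul_kronecker_mul, h1]; simp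
  have e5 : ∀ x, (p x ⊗ₖ p x) * (q x ⊗ₖ q x) = 0 := fun x => by
    rw [← mul_kronecker_mul, h1]; simp
  have e6 : ∀ x, (q x ⊗ₖ q x) * (p x ⊗ₖ p x) = 0 := fun x => by
    rw [← mul_kronecker_mul, h2]; simp
  have gen : ∀ U V : Matrix (ι × ι) (ι × ι) ℂ, U * asym ι = asym ι * U → U * V = 0 →
      (asym ι * U) * (asym ι * V) = 0 := by
    intro U V hU hUV
    rw [Matrix.mul_assoc, ← Matrix.mul_assoc U, hU, Matrix.mul_assoc, hUV]; simp
  have hsum : ∀ x, asym ι * (r x ⊗ₖ r x) =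
      asym ι * (p x ⊗ₖ p x) + M x + asym ι * (q x ⊗ₖ q x) := by
    intro x
    rw [h, hM, ← Matrix.mul_add, ← Matrix.mul_add]
    congr 1
    rw [add_kronecker, kronecker_add, kronecker_add]
    abel
  have cP := (asym_kron (κ := ι) (ι := ι))
  set P := (Bun.of p hp hp').lam with hP
  set Q := (Bun.of q hq hq').lam with hQ
  have hPM : ∀ x, (P.e x + M x) * (P.e x + M x) = P.e x + M x := by
    intro x
    have a1 : P.e x * M x = 0 := gen _ _ (cP (p x)).symm (e1 x)
    have a2 : M x * P.e x = 0 := gen _ _ (hcomm x).symm (e2 x)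
    rw [add_mul, mul_add, mul_add, P.idem x, hMi, a1, a2]; simp
  rw [VB.mk_mul, ← key, VB.lam_mk, VB.lam_mk, VB.lam_mk]
  have s1 := VB.mk_orth P.cont hMc P.idem hMi (fun x => gen _ _ (cP (p x)).symm (e1 x))
    (fun x => gen _ _ (hcomm x).symm (e2 x)) (P.cont.add hMc) hPM (fun x => rfl)
  have s2 := VB.mk_orth (P.cont.add hMc) Q.cont hPM Q.idem (r := (Bun.of r hr hr').lam.e) ?_ ?_
    (Bun.of r hr hr').lam.cont (Bun.of r hr hr').lam.idem hsum
  · refine s2.trans ?_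
    rw [s1]
  · intro x
    have b1 : P.e x * Q.e x = 0 := gen _ _ (cP (p x)).symm (e5 x)
    have b2 : M x * Q.e x = 0 := gen _ _ (hcomm x).symm (e4 x)
    change (P.e x + M x) * Q.e x = 0
    rw [add_mul, b1, b2, add_zero]
  · intro x
    have b1 : Q.e x * P.e x = 0 := gen _ _ (cP (q x)).symm (e6 x)
    have b2 : Q.e x * M x = 0 := gen _ _ (cP (q x)).symm (e3 x)
    change Q.e x * (P.e x + M x) = 0
    rw [mul_add, b1, b2, add_zero]

theorem VB.lam_add (a b : VB X) : VB.lam (a + b) = VB.lam a + a * b + VB.lam b := by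
  induction a using VB.ind with | _ A
  induction b using VB.ind with | _ B
  have c1 : Continuous fun x => (fromBlocks (A.e x) 0 0 0 : Matrix (A.ι ⊕ B.ι) (A.ι ⊕ B.ι) ℂ) :=
    A.cont.matrix_fromBlocks continuous_const continuous_const continuous_const
  have c2 : Continuous fun x => (fromBlocks 0 0 0 (B.e x) : Matrix (A.ι ⊕ B.ι) (A.ι ⊕ B.ι) ℂ) :=
    Continuous.matrix_fromBlocks continuous_const continuous_const continuous_const B.cont
  have i1 : ∀ x, (fromBlocks (A.e x) 0 0 0 : Matrix (A.ι ⊕ B.ι) (A.ι ⊕ B.ι) ℂ) *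
      fromBlocks (A.e x) 0 0 0 = fromBlocks (A.e x) 0 0 0 := by
    intro x; simp [fromBlocks_multiply, A.idem]
  have i2 : ∀ x, (fromBlocks 0 0 0 (B.e x) : Matrix (A.ι ⊕ B.ι) (A.ι ⊕ B.ι) ℂ) *
      fromBlocks 0 0 0 (B.e x) = fromBlocks 0 0 0 (B.e x) := by
    intro x; simp [fromBlocks_multiply, B.idem]
  have main := VB.lam_orth c1 c2 i1 i2 (fun x => by simp [fromBlocks_multiply])
    (fun x => by simp [fromBlocks_multiply]) (A.add B).cont (A.add B).idem
    (fun x => by simp [fromBlocks_add])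
  have hA : VB.mk (Bun.of _ c1 i1) = VB.mk A := by
    refine VB.mk_eq.2 ⟨fun x => fromRows (A.e x) 0, fun x => fromCols (A.e x) 0,
      continuous_fromRows A.cont continuous_const, continuous_fromCols A.cont continuous_const,
      ?_, ?_⟩
    · intro x; rw [fromRows_mul_fromCols]; simp [A.idem]
    · intro x; rw [fromCols_mul_fromRows]; simp [A.idem]
  have hB : VB.mk (Bun.of _ c2 i2) = VB.mk B := by
    refine VB.mk_eq.2 ⟨fun x => fromRows 0 (B.e x), fun x => fromCols 0 (B.e x),
      continuous_fromRows continuous_const B.cont, continuous_fromCols continuous_const B.cont,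
      ?_, ?_⟩
    · intro x; rw [fromRows_mul_fromCols]; simp [B.idem]
    · intro x; rw [fromCols_mul_fromRows]; simp [B.idem]
  rw [hA, hB] at main
  exact main

/-- `H` is a line bundle if all `2 × 2` minors vanish -/
def Bun.Line (H : Bun X) : Prop := ∀ x i j i' j', H.e x i i' * H.e x j j' = H.e x j i' * H.e x i j'

theorem VB.lam_line {H : Bun X} (h : H.Line) : VB.lam (VB.mk H) = 0 := by
  rw [VB.lam_mk]
  have h0 : ∀ x, H.lam.e x = 0 := by
    intro x
    ext ⟨i, j⟩ ⟨i', j'⟩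
    change (asym H.ι * (H.e x ⊗ₖ H.e x)) (i, j) (i', j') = 0
    rw [asym_kron_apply, h, sub_self, mul_zero]
  exact VB.mk_eq.2 ⟨fun _ => 0, fun _ => 0, continuous_const, continuous_const,
    fun x => by rw [h0]; simp, fun x => by ext i; exact i.elim⟩

theorem VB.lam_mul_line (a : VB X) {H : Bun X} (h : H.Line) :
    VB.lam (a * VB.mk H) = VB.lam a * (VB.mk H * VB.mk H) := by
  induction a using VB.ind with | _ A
  refine VB.mk_equiv (Equiv.prodProdProdComm A.ι H.ι A.ι H.ι) ?_
  rintro x ⟨⟨i, k⟩, ⟨j, l⟩⟩ ⟨⟨i', k'⟩, ⟨j', l'⟩⟩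
  change (asym (A.ι × H.ι) * ((A.e x ⊗ₖ H.e x) ⊗ₖ (A.e x ⊗ₖ H.e x))) ((i, k), (j, l))
    ((i', k'), (j', l')) = (asym A.ι * (A.e x ⊗ₖ A.e x)) (i, j) (i', j') *
      (H.e x k k' * H.e x l l')
  rw [asym_kron_apply, asym_kron_apply]
  simp only [kroneckerMap_apply]
  linear_combination (2⁻¹ : ℂ) * A.e x j i' * A.e x i j' * h x k l k' l'

theorem VB.lam_pull (f : C(X, Y)) (a : VB Y) : VB.lam (VB.pull f a) = VB.pull f (VB.lam a) := by
  induction a using VB.ind with | _ A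
  rfl

theorem VB.lam_one : VB.lam (1 : VB X) = 0 := by
  refine VB.lam_line (H := Bun.triv Unit) ?_
  rintro x ⟨⟩ ⟨⟩ ⟨⟩ ⟨⟩
  rfl

end BottK

end

section
open Matrix
open scoped Kronecker TensorProduct

namespace BottK
variable {X Y Z : Type} [TopologicalSpace X] [TopologicalSpace Y] [TopologicalSpace Z]

/-! ### The Grothendieck ring -/

/-- topological K-theory of `X` (meaningful for compact `X`) -/
def K0 (X : Type) [TopologicalSpace X] : Type 1 := ℤ ⊗[ℕ] VB X

noncomputable instance : CommRing (K0 X) := inferInstanceAs (CommRing (ℤ ⊗[ℕ] VB X))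

noncomputable def K0.of : VB X →+* K0 X :=
  (Algebra.TensorProduct.includeRight : VB X →ₐ[ℕ] ℤ ⊗[ℕ] VB X).toRingHom

theorem K0.tmul_eq (n : ℤ) (a : VB X) :
    (TensorProduct.tmul ℕ n a : ℤ ⊗[ℕ] VB X) = ((n : K0 X) * K0.of a : K0 X) := by
  have h2 : ((n : ℤ) : K0 X) = (TensorProduct.tmul ℕ n (1 : VB X) : ℤ ⊗[ℕ] VB X) := by
    exact (map_intCast (Algebra.TensorProduct.includeLeftRingHom : ℤ →+* ℤ ⊗[ℕ] VB X) n).symm.trans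
      (by rw [Int.cast_id]; rfl)
  rw [h2]
  exact ((Algebra.TensorProduct.tmul_mul_tmul n (1 : ℤ) (1 : VB X) a).trans (by simp)).symm

theorem K0.exists_sub (y : K0 X) : ∃ a b : VB X, y = K0.of a - K0.of b := by
  refine TensorProduct.induction_on (motive := fun y : ℤ ⊗[ℕ] VB X =>
    ∃ a b : VB X, y = ((K0.of a - K0.of b : K0 X) : K0 X)) y ?_ ?_ ?_
  · exact ⟨0, 0, (sub_self (K0.of (0 : VB X))).symm⟩
  · intro n a
    rw [K0.tmul_eq]
    obtain ⟨k, rfl | rfl⟩ := n.eq_nat_or_neg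
    · exact ⟨k * a, 0, (by simp : ((k : ℤ) : K0 X) * K0.of a = K0.of ((k : VB X) * a) - K0.of 0)⟩
    · exact ⟨0, k * a, (by simp : ((-k : ℤ) : K0 X) * K0.of a = K0.of 0 - K0.of ((k : VB X) * a))⟩
  · rintro x y ⟨a, b, rfl⟩ ⟨c, d, rfl⟩
    refine ⟨a + c, b + d, ?_⟩
    change (K0.of a - K0.of b) + (K0.of c - K0.of d) = K0.of (a + c) - K0.of (b + d)
    rw [map_add, map_add]; ring

theorem K0.of_eq {a b : VB X} (h : K0.of a = K0.of b) : ∃ c, a + c = b + c := by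
  let f : VB X →+ Algebra.GrothendieckAddGroup (VB X) := Algebra.GrothendieckAddGroup.of
  let g : ℤ →ₗ[ℕ] VB X →ₗ[ℕ] Algebra.GrothendieckAddGroup (VB X) :=
    LinearMap.mk₂ ℕ (fun n a => n • f a) (by intros; rw [add_smul])
      (by intros c m n; rw [smul_assoc]) (by intros; rw [map_add, smul_add])
      (by intros c m n; rw [map_nsmul, smul_comm])
  have h1 := congrArg (TensorProduct.lift g : ℤ ⊗[ℕ] VB X → _) h
  have h2 : ∀ a : VB X, (TensorProduct.lift g : ℤ ⊗[ℕ] VB X → _) (K0.of a) = f a := by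
    intro a
    change TensorProduct.lift g ((1 : ℤ) ⊗ₜ[ℕ] a) = f a
    rw [TensorProduct.lift.tmul]
    change (1 : ℤ) • f a = f a
    rw [one_smul]
  rw [h2, h2] at h1
  have := (AddLocalization.mk_eq_mk_iff).1 h1
  rw [AddLocalization.r_iff_exists] at this
  obtain ⟨c, hc⟩ := this
  exact ⟨c, by simpa [add_comm] using hc⟩

/-- extension of additive maps -/
noncomputable def K0.liftAdd {G : Type*} [AddCommGroup G] (f : VB X →+ G) : K0 X →+ G :=
  let g : ℤ →ₗ[ℕ] VB X →ₗ[ℕ] G :=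
    LinearMap.mk₂ ℕ (fun n a => n • f a) (by intros; rw [add_smul])
      (by intros c m n; rw [smul_assoc]) (by intros; rw [map_add, smul_add])
      (by intros c m n; rw [map_nsmul, smul_comm])
  (TensorProduct.lift g : ℤ ⊗[ℕ] VB X →ₗ[ℕ] G).toAddMonoidHom

theorem K0.liftAdd_of {G : Type*} [AddCommGroup G] (f : VB X →+ G) (a : VB X) :
    K0.liftAdd f (K0.of a) = f a := by
  change (1 : ℤ) • f a = f a
  rw [one_smul]

theorem K0.addHom_ext {G : Type*} [AddCommGroup G] {f g : K0 X →+ G}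
    (h : ∀ a, f (K0.of a) = g (K0.of a)) : f = g := by
  ext y
  obtain ⟨a, b, rfl⟩ := K0.exists_sub y
  rw [map_sub, map_sub, h, h]

noncomputable def K0.pull (f : C(X, Y)) : K0 Y →+* K0 X :=
  { K0.liftAdd (X := Y) ((K0.of (X := X)).toAddMonoidHom.comp (VB.pull f).toAddMonoidHom) with
    map_one' := by
      have := K0.liftAdd_of ((K0.of (X := X)).toAddMonoidHom.comp (VB.pull f).toAddMonoidHom) 1
      rw [map_one] at this
      refine this.trans ?_
      simp
    map_mul' := by
      intro y z
      obtain ⟨a, b, rfl⟩ := K0.exists_sub y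
      obtain ⟨c, d, rfl⟩ := K0.exists_sub z
      have e : (K0.of a - K0.of b) * (K0.of c - K0.of d) =
        K0.of (a * c + b * d) - K0.of (a * d + b * c) := by
        simp only [map_add, map_mul]; ring
      rw [e]
      simp only [ZeroHom.toFun_eq_coe, AddMonoidHom.toZeroHom_coe, map_sub, K0.liftAdd_of]
      simp only [RingHom.toAddMonoidHom_eq_coe, AddMonoidHom.coe_comp, AddMonoidHom.coe_coe,
        Function.comp_apply, map_add, map_mul]
      ring }

theorem K0.pull_of (f : C(X, Y)) (a : VB Y) : K0.pull f (K0.of a) = K0.of (VB.pull f a) :=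
  K0.liftAdd_of _ a

theorem K0.pull_comp (f : C(X, Y)) (g : C(Y, Z)) (y : K0 Z) :
    K0.pull f (K0.pull g y) = K0.pull (g.comp f) y := by
  obtain ⟨a, b, rfl⟩ := K0.exists_sub y
  simp only [map_sub, K0.pull_of]
  have : ∀ a, VB.pull f (VB.pull g a) = VB.pull (g.comp f) a := by
    intro a
    induction a using VB.ind with | _ A
    rfl
  rw [this, this]

theorem K0.pull_id (y : K0 X) : K0.pull (ContinuousMap.id X) y = y := by
  obtain ⟨a, b, rfl⟩ := K0.exists_sub y
  simp only [map_sub, K0.pull_of]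
  have : ∀ a : VB X, VB.pull (ContinuousMap.id X) a = a := by
    intro a
    induction a using VB.ind with | _ A
    rfl
  rw [this, this]

noncomputable def K0.psi : K0 X →+ K0 X :=
  K0.liftAdd
    { toFun := fun a => K0.of a ^ 2 - 2 * K0.of (VB.lam a)
      map_zero' := by
        have h := VB.lam_add (0 : VB X) 1
        have h2 : VB.lam (0 : VB X) = 0 := by
          rw [zero_add, VB.lam_one] at h
          simpa using h.symm
        rw [h2]; simp
      map_add' := by
        intro a b
        rw [VB.lam_add]
        simp only [map_add, map_mul]
        ring }

theorem K0.psi_of (a : VB X) : K0.psi (K0.of a) = K0.of a ^ 2 - 2 * K0.of (VB.lam a) :=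
  K0.liftAdd_of _ a

theorem K0.psi_mul_line (y : K0 X) {H : Bun X} (h : H.Line) :
    K0.psi (y * K0.of (VB.mk H)) = K0.psi y * K0.of (VB.mk H) ^ 2 := by
  obtain ⟨a, b, rfl⟩ := K0.exists_sub y
  have : ∀ a : VB X, K0.psi (K0.of a * K0.of (VB.mk H)) =
      K0.psi (K0.of a) * K0.of (VB.mk H) ^ 2 := by
    intro a
    rw [← map_mul, K0.psi_of, K0.psi_of, VB.lam_mul_line a h]
    simp only [map_mul]
    ring
  rw [sub_mul, map_sub, this, this, map_sub, sub_mul]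

theorem K0.psi_pull (f : C(X, Y)) (y : K0 Y) :
    K0.psi (K0.pull f y) = K0.pull f (K0.psi y) := by
  obtain ⟨a, b, rfl⟩ := K0.exists_sub y
  have : ∀ a, K0.psi (K0.pull f (K0.of a)) = K0.pull f (K0.psi (K0.of a)) := by
    intro a
    rw [K0.pull_of, K0.psi_of, K0.psi_of, VB.lam_pull]
    simp only [map_sub, map_mul, map_pow, K0.pull_of, map_ofNat]
  simp only [map_sub, this]

theorem K0.psi_one : K0.psi (1 : K0 X) = 1 := by
  have := K0.psi_of (1 : VB X)
  rw [VB.lam_one] at this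
  simpa using this

end BottK

end

section
open Matrix
open scoped Kronecker TensorProduct unitInterval

namespace BottK
variable {X Y Z : Type} [TopologicalSpace X] [TopologicalSpace Y] [TopologicalSpace Z]

/-! ### Homotopy invariance -/

theorem continuous_matInv {ι : Type} [Fintype ι] [DecidableEq ι] {f : X → Matrix ι ι ℂ}
    (hf : Continuous f) (h : ∀ x, (f x).det ≠ 0) : Continuous fun x => (f x)⁻¹ := by
  have : (fun x => (f x)⁻¹) = fun x => ((f x).det)⁻¹ • (f x).adjugate := by
    ext1 x
    rw [Matrix.inv_def, Ring.inverse_eq_inv']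
  rw [this]
  exact (hf.matrix_det.inv₀ h).smul hf.matrix_adjugate

section
variable {ι : Type} [Fintype ι] [DecidableEq ι]

/-- intertwiner between nearby idempotents -/
def uu (p q : Matrix ι ι ℂ) : Matrix ι ι ℂ := p * q + (1 - p) * (1 - q)

theorem uu_self {p : Matrix ι ι ℂ} (h : p * p = p) : uu p p = 1 := by
  simp only [uu, sub_mul, mul_sub, one_mul, mul_one, h]; abel

theorem uu_mul {p q : Matrix ι ι ℂ} (hp : p * p = p) (hq : q * q = q) :
    uu p q * q = p * uu p q := by
  simp only [uu, sub_mul, mul_sub, add_mul, mul_add, one_mul, mul_one, mul_assoc, hq]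
  simp only [← mul_assoc, hp]; abel

theorem continuous_uu {f g : X → Matrix ι ι ℂ} (hf : Continuous f) (hg : Continuous g) :
    Continuous fun x => uu (f x) (g x) :=
  (hf.matrix_mul hg).add ((continuous_const.sub hf).matrix_mul (continuous_const.sub hg))

theorem exists_delta [CompactSpace Y] {e : Y × I → Matrix ι ι ℂ} (he : Continuous e)
    (hi : ∀ y, e y * e y = e y) :
    ∃ δ : ℝ, 0 < δ ∧ ∀ y, ∀ a b : I, dist a b < δ → (uu (e (y, a)) (e (y, b))).det ≠ 0 := by
  have hD : Continuous fun w : Y × I × I => (uu (e (w.1, w.2.1)) (e (w.1, w.2.2))).det :=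
    (continuous_uu (he.comp (by fun_prop)) (he.comp (by fun_prop))).matrix_det
  have hK : IsCompact {w : Y × I × I | (uu (e (w.1, w.2.1)) (e (w.1, w.2.2))).det = 0} :=
    (isClosed_eq hD continuous_const).isCompact
  rcases Set.eq_empty_or_nonempty
    {w : Y × I × I | (uu (e (w.1, w.2.1)) (e (w.1, w.2.2))).det = 0} with h0 | h0
  · refine ⟨1, one_pos, fun y a b _ h => ?_⟩
    have : (y, a, b) ∈ ({w : Y × I × I | (uu (e (w.1, w.2.1)) (e (w.1, w.2.2))).det = 0}) := h
    rw [h0] at this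
    exact this
  · obtain ⟨w, hw, hmin⟩ := hK.exists_isMinOn h0
      (f := fun w : Y × I × I => dist w.2.1 w.2.2) (by fun_prop)
    refine ⟨dist w.2.1 w.2.2, ?_, ?_⟩
    · rw [dist_pos]
      intro h
      have hw' : (uu (e (w.1, w.2.1)) (e (w.1, w.2.2))).det = 0 := hw
      rw [h, uu_self (hi _), det_one] at hw'
      exact one_ne_zero hw'
    · intro y a b hab h
      have : (y, a, b) ∈ ({w : Y × I × I | (uu (e (w.1, w.2.1)) (e (w.1, w.2.2))).det = 0}) := h
      exact absurd (hmin this) (not_le.2 hab)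

theorem homotopy_lemma [CompactSpace Y] {e : Y × I → Matrix ι ι ℂ} (he : Continuous e)
    (hi : ∀ y, e y * e y = e y) :
    ∃ s s' : Y × I → Matrix ι ι ℂ, Continuous s ∧ Continuous s' ∧ (∀ y, s y * s' y = 1) ∧
      (∀ y, s' y * s y = 1) ∧ (∀ y, s (y, 0) = 1) ∧
      ∀ y t, e (y, t) * s (y, t) = s (y, t) * e (y, 0) := by
  obtain ⟨δ, hδ, hdet⟩ := exists_delta he hi
  let E : Y → ℝ → Matrix ι ι ℂ := fun y t => e (y, Set.projIcc 0 1 zero_le_one t)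
  have hE : ∀ f : Y × I → ℝ, Continuous f → Continuous fun w : Y × I => E w.1 (f w) := by
    intro f hf
    exact he.comp (continuous_fst.prodMk (continuous_projIcc.comp hf))
  have key : ∀ n : ℕ, ∃ s : Y × I → Matrix ι ι ℂ, Continuous s ∧ (∀ y, (s y).det ≠ 0) ∧
      (∀ y, s (y, 0) = 1) ∧
      ∀ (y : Y) (t : I), E y (min (t : ℝ) (n * (δ / 2))) * s (y, t) = s (y, t) * e (y, 0) := by
    intro n
    induction n with
    | zero =>
      refine ⟨fun _ => 1, continuous_const, by simp, by simp, fun y t => ?_⟩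
      have : E y (min (t : ℝ) ((0 : ℕ) * (δ / 2))) = e (y, 0) := by
        simp only [E]
        congr 2
        rw [Nat.cast_zero, zero_mul, min_eq_right t.2.1]
        exact Set.projIcc_left _
      rw [this]; simp
    | succ n ih =>
      obtain ⟨s, hs, hsd, hs0, hse⟩ := ih
      refine ⟨fun w => uu (E w.1 (min (w.2 : ℝ) ((n + 1 : ℕ) * (δ / 2))))
        (E w.1 (min (w.2 : ℝ) (n * (δ / 2)))) * s w, ?_, ?_, ?_, ?_⟩
      · exact (continuous_uu (hE _ (by fun_prop)) (hE _ (by fun_prop))).matrix_mul hs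
      · intro w
        rw [det_mul]
        refine mul_ne_zero (hdet _ _ _ ?_) (hsd w)
        refine lt_of_le_of_lt (?_ : _ ≤ |min (w.2 : ℝ) ((n + 1 : ℕ) * (δ / 2)) -
          min (w.2 : ℝ) (n * (δ / 2))|) ?_
        · have := Set.abs_projIcc_sub_projIcc (a := (0 : ℝ)) (b := 1) (h := zero_le_one)
            (c := min (w.2 : ℝ) ((n + 1 : ℕ) * (δ / 2))) (d := min (w.2 : ℝ) (n * (δ / 2)))
          rw [Subtype.dist_eq, Real.dist_eq]
          exact this
        · refine lt_of_le_of_lt (abs_min_sub_min_le_max _ _ _ _) ?_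
          rw [sub_self, abs_zero, max_lt_iff]
          refine ⟨hδ, ?_⟩
          push_cast
          rw [show (n + 1 : ℝ) * (δ / 2) - n * (δ / 2) = δ / 2 by ring,
            abs_of_pos (by linarith)]
          linarith
      · intro y
        have h1 : ∀ c : ℝ, 0 ≤ c → min ((0 : I) : ℝ) c = 0 := fun c hc => min_eq_left hc
        simp only [hs0]
        rw [h1 _ (by positivity), h1 _ (by positivity)]
        rw [uu_self (hi _), mul_one]
      · intro y t
        beta_reduce
        rw [← mul_assoc, ← uu_mul (hi _) (hi _), mul_assoc]
        dsimp only
        rw [hse, mul_assoc]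
  obtain ⟨n, hn⟩ := exists_nat_ge (1 / (δ / 2))
  obtain ⟨s, hs, hsd, hs0, hse⟩ := key n
  refine ⟨s, fun w => (s w)⁻¹, hs, continuous_matInv hs hsd,
    fun w => Matrix.mul_nonsing_inv _ (hsd w).isUnit,
    fun w => Matrix.nonsing_inv_mul _ (hsd w).isUnit, hs0, fun y t => ?_⟩
  rw [← hse]
  congr 1
  simp only [E]
  congr 2
  have : 1 ≤ n * (δ / 2) := by
    rw [div_le_iff₀ (by linarith)] at hn
    exact hn
  rw [min_eq_left (t.2.2.trans this), Set.projIcc_val]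
end

theorem VB.pull_homotopy [CompactSpace X] (F : C(X × I, Y)) (a : VB Y) :
    VB.pull (F.comp ⟨fun x => (x, 0), by fun_prop⟩) a =
      VB.pull (F.comp ⟨fun x => (x, 1), by fun_prop⟩) a := by
  induction a using VB.ind with | _ A
  obtain ⟨s, s', hs, hs', h1, h2, h0, h⟩ := homotopy_lemma (e := fun w => A.e (F w))
    (A.cont.comp F.continuous) (fun _ => A.idem _)
  symm
  refine VB.mk_eq.2 ⟨fun x => A.e (F (x, 1)) * s (x, 1), fun x => s' (x, 1) * A.e (F (x, 1)),
    ?_, ?_, ?_, ?_⟩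
  · exact (A.cont.comp (F.continuous.comp (by fun_prop))).matrix_mul (hs.comp (by fun_prop))
  · exact (hs'.comp (by fun_prop)).matrix_mul (A.cont.comp (F.continuous.comp (by fun_prop)))
  · intro x
    change A.e (F (x, 1)) * s (x, 1) * (s' (x, 1) * A.e (F (x, 1))) = A.e (F (x, 1))
    rw [Matrix.mul_assoc, ← Matrix.mul_assoc (s _), h1, Matrix.one_mul, A.idem]
  · intro x
    change s' (x, 1) * A.e (F (x, 1)) * (A.e (F (x, 1)) * s (x, 1)) = A.e (F (x, 0))
    rw [Matrix.mul_assoc, ← Matrix.mul_assoc (A.e _), A.idem, h, ← Matrix.mul_assoc, h2,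
      Matrix.one_mul]

/-- endpoints of a path of idempotents -/
theorem VB.path_eq [CompactSpace X] {ι : Type} [Fintype ι] [DecidableEq ι]
    {e : X × I → Matrix ι ι ℂ} (he : Continuous e) (hi : ∀ y, e y * e y = e y) :
    VB.mk (Bun.of (fun x => e (x, 0)) (he.comp (by fun_prop)) (fun _ => hi _)) =
    VB.mk (Bun.of (fun x => e (x, 1)) (he.comp (by fun_prop)) (fun _ => hi _)) :=
  VB.pull_homotopy (ContinuousMap.id (X × I)) (VB.mk (Bun.of e he hi))

theorem K0.pull_homotopy [CompactSpace X] (F : C(X × I, Y)) (y : K0 Y) :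
    K0.pull (F.comp ⟨fun x => (x, 0), by fun_prop⟩) y =
      K0.pull (F.comp ⟨fun x => (x, 1), by fun_prop⟩) y := by
  obtain ⟨a, b, rfl⟩ := K0.exists_sub y
  simp only [map_sub, K0.pull_of, VB.pull_homotopy F]

end BottK

end

section
open Matrix
open scoped Kronecker TensorProduct unitInterval

namespace BottK
variable {X Y Z : Type} [TopologicalSpace X] [TopologicalSpace Y] [TopologicalSpace Z]

/-! ### The sphere -/

/-- the two-sphere -/
def S2 : Type := {p : ℂ × ℝ // ‖p.1‖ ^ 2 = p.2 * (1 - p.2)}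

instance : TopologicalSpace S2 := inferInstanceAs (TopologicalSpace (Subtype _))
instance : T2Space S2 := inferInstanceAs (T2Space (Subtype _))

theorem sph_aux (t : I) : 0 ≤ (t : ℝ) * (1 - t) :=
  mul_nonneg t.2.1 (sub_nonneg.2 t.2.2)

noncomputable def sph (p : Circle × I) : S2 :=
  ⟨((p.1 : ℂ) * (√((p.2 : ℝ) * (1 - p.2)) : ℝ), p.2), by
    simp only [norm_mul, Circle.norm_coe, one_mul, Complex.norm_real, Real.norm_eq_abs, sq_abs]
    rw [Real.sq_sqrt (sph_aux _)]⟩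

theorem continuous_sph : Continuous sph := by
  refine Continuous.subtype_mk ?_ _
  fun_prop

theorem sph_surj : Function.Surjective sph := by
  rintro ⟨⟨w, s⟩, h⟩
  dsimp only at h
  have h0 : 0 ≤ s * (1 - s) := by rw [← h]; positivity
  have hs : s ∈ I := by
    constructor <;> nlinarith
  by_cases hw : w = 0
  · refine ⟨(1, ⟨s, hs⟩), ?_⟩
    apply Subtype.ext
    simp only [sph, ← h, hw]
    simp
  · refine ⟨(⟨w / ‖w‖, ?_⟩, ⟨s, hs⟩), ?_⟩
    · rw [Submonoid.unitSphere, ← SetLike.mem_coe]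
      simp [hw]
    · apply Subtype.ext
      simp only [sph, ← h]
      rw [Real.sqrt_sq (norm_nonneg _)]
      have : (‖w‖ : ℂ) ≠ 0 := by simpa using hw
      simp [div_mul_cancel₀ _ this]

theorem sph_fiber {z z' : Circle} {t t' : I} (h : sph (z, t) = sph (z', t')) :
    t = t' ∧ (z = z' ∨ t = 0 ∨ t = 1) := by
  have h1 := congrArg Subtype.val h
  simp only [sph, Prod.mk.injEq] at h1
  obtain ⟨h2, h3⟩ := h1
  have ht : t = t' := Subtype.ext h3
  refine ⟨ht, ?_⟩
  subst ht
  by_cases h0 : (t : ℝ) * (1 - t) = 0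
  · right
    rcases mul_eq_zero.1 h0 with h | h
    · left; exact Subtype.ext h
    · right; exact Subtype.ext (by rw [Set.Icc.coe_one]; linarith)
  · left
    have : ((√((t : ℝ) * (1 - t)) : ℝ) : ℂ) ≠ 0 := by
      rw [Ne, Complex.ofReal_eq_zero, Real.sqrt_eq_zero (sph_aux _)]
      exact h0
    exact Subtype.ext (mul_right_cancel₀ this h2)

instance : CompactSpace S2 := sph_surj.compactSpace continuous_sph

abbrev W (X : Type) : Type := (X × Circle) × I

noncomputable def ppi (w : W X) : X × S2 := (w.1.1, sph (w.1.2, w.2))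

theorem continuous_ppi : Continuous (ppi (X := X)) :=
  (by fun_prop : Continuous fun w : W X => w.1.1).prodMk (continuous_sph.comp (by fun_prop))

theorem ppi_surj : Function.Surjective (ppi (X := X)) := by
  rintro ⟨x, s⟩
  obtain ⟨⟨z, t⟩, rfl⟩ := sph_surj s
  exact ⟨((x, z), t), rfl⟩

/-- independence of the circle coordinate at the two poles -/
def Des {T : Type} (f : W X → T) : Prop := ∀ x z z', f ((x, z), 0) = f ((x, z'), 0) ∧
  f ((x, z), 1) = f ((x, z'), 1)

theorem descend [CompactSpace X] [T2Space X] {T : Type} [TopologicalSpace T] {f : W X → T}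
    (hf : Continuous f) (h : Des f) : ∃ F : X × S2 → T, Continuous F ∧ ∀ w, F (ppi w) = f w := by
  have hq : Topology.IsQuotientMap (ppi (X := X)) :=
    (continuous_ppi.isClosedMap).isQuotientMap continuous_ppi ppi_surj
  have hfib : ∀ w w' : W X, ppi w = ppi w' → f w = f w' := by
    rintro ⟨⟨x, z⟩, t⟩ ⟨⟨x', z'⟩, t'⟩ hw
    simp only [ppi, Prod.mk.injEq] at hw
    obtain ⟨rfl, h2⟩ := hw
    obtain ⟨rfl, rfl | rfl | rfl⟩ := sph_fiber h2
    · rfl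
    · exact (h x z z').1
    · exact (h x z z').2
  have hF : ∀ w, f (Function.surjInv ppi_surj (ppi w)) = f w := fun w =>
    hfib _ _ (Function.surjInv_eq ppi_surj _)
  refine ⟨fun y => f (Function.surjInv ppi_surj y), ?_, hF⟩
  rw [hq.continuous_iff]
  exact hf.congr fun w => (hF w).symm

theorem ppi_des : Des (ppi (X := X)) := by
  intro x z z'
  constructor <;> simp [ppi, sph]

/-! ### Loops of automorphisms and clutching -/

structure Loop (a : Bun X) where
  g : X × Circle → Matrix a.ι a.ι ℂ
  g' : X × Circle → Matrix a.ι a.ι ℂ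
  cg : Continuous g
  cg' : Continuous g'
  gg' : ∀ p, g p * g' p = a.e p.1
  g'g : ∀ p, g' p * g p = a.e p.1
  ag : ∀ p, a.e p.1 * g p = g p
  ag' : ∀ p, a.e p.1 * g' p = g' p

theorem Loop.ga {a : Bun X} (L : Loop a) (p) : L.g p * a.e p.1 = L.g p := by
  rw [← L.g'g, ← Matrix.mul_assoc, L.gg', L.ag]

theorem Loop.g'a {a : Bun X} (L : Loop a) (p) : L.g' p * a.e p.1 = L.g' p := by
  rw [← L.gg', ← Matrix.mul_assoc, L.g'g, L.ag']

/-- `A` is clutched from `a` by the loop `L` -/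
structure IsCl (A : Bun (X × S2)) {a : Bun X} (L : Loop a) (α : W X → Matrix A.ι a.ι ℂ)
    (β : W X → Matrix a.ι A.ι ℂ) : Prop where
  ca : Continuous α
  cb : Continuous β
  ab : ∀ w, α w * β w = A.e (ppi w)
  ba : ∀ w, β w * α w = a.e w.1.1
  aa : ∀ w, α w * a.e w.1.1 = α w
  bb : ∀ w, a.e w.1.1 * β w = β w
  a0 : ∀ x z z', α ((x, z), 0) = α ((x, z'), 0)
  b0 : ∀ x z z', β ((x, z), 0) = β ((x, z'), 0)
  a1 : ∀ x z z', α ((x, z), 1) * L.g' (x, z) = α ((x, z'), 1) * L.g' (x, z')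
  b1 : ∀ x z z', L.g (x, z) * β ((x, z), 1) = L.g (x, z') * β ((x, z'), 1)

def Cl (A : Bun (X × S2)) {a : Bun X} (L : Loop a) : Prop := ∃ α β, IsCl A L α β

/-- any clutching data descends -/
theorem Cl.build [CompactSpace X] [T2Space X] {a : Bun X} (L : Loop a)
    {κ : Type} [Fintype κ] [DecidableEq κ]
    (α : W X → Matrix κ a.ι ℂ) (β : W X → Matrix a.ι κ ℂ) (ca : Continuous α) (cb : Continuous β)
    (ba : ∀ w, β w * α w = a.e w.1.1)
    (aa : ∀ w, α w * a.e w.1.1 = α w)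
    (bb : ∀ w, a.e w.1.1 * β w = β w)
    (a0 : ∀ x z z', α ((x, z), 0) = α ((x, z'), 0))
    (b0 : ∀ x z z', β ((x, z), 0) = β ((x, z'), 0))
    (a1 : ∀ x z z', α ((x, z), 1) * L.g' (x, z) = α ((x, z'), 1) * L.g' (x, z'))
    (b1 : ∀ x z z', L.g (x, z) * β ((x, z), 1) = L.g (x, z') * β ((x, z'), 1)) :
    ∃ A : Bun (X × S2), Cl A L := by
  have hd : Des fun w => α w * β w := by
    intro x z z'
    refine ⟨by beta_reduce; rw [a0 x z z', b0 x z z'], ?_⟩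
    have : ∀ z, α ((x, z), 1) * β ((x, z), 1) =
        (α ((x, z), 1) * L.g' (x, z)) * (L.g (x, z) * β ((x, z), 1)) := by
      intro z
      rw [Matrix.mul_assoc, ← Matrix.mul_assoc (L.g' _), L.g'g, ← Matrix.mul_assoc]
      rw [aa ((x, z), 1)]
    beta_reduce
    rw [this, this, a1 x z z', b1 x z z']
  obtain ⟨E, hE, hE'⟩ := descend (ca.matrix_mul cb) hd
  refine ⟨Bun.of E hE ?_, α, β, ca, cb, fun w => (hE' w).symm, ba, aa, bb, a0, b0, a1, b1⟩
  intro y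
  obtain ⟨w, rfl⟩ := ppi_surj y
  rw [hE', Matrix.mul_assoc, ← Matrix.mul_assoc (β w), ba, bb]

theorem Cl.exists [CompactSpace X] [T2Space X] {a : Bun X} (L : Loop a) :
    ∃ A : Bun (X × S2), Cl A L := by
  have hs : ∀ t : I, (√(t : ℝ) * √(t : ℝ) : ℂ) = t := fun t => by
    rw [← Complex.ofReal_mul, Real.mul_self_sqrt t.2.1]
  have hs' : ∀ t : I, (√(1 - t : ℝ) * √(1 - t : ℝ) : ℂ) = 1 - t := fun t => by
    rw [← Complex.ofReal_mul, Real.mul_self_sqrt (sub_nonneg.2 t.2.2)]; simp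
  have c1 : Continuous fun w : W X => ((√(w.2 : ℝ) : ℝ) : ℂ) := by fun_prop
  have c2 : Continuous fun w : W X => ((√(1 - w.2 : ℝ) : ℝ) : ℂ) := by fun_prop
  have c3 : Continuous fun w : W X => a.e w.1.1 := a.cont.comp (by fun_prop)
  have c4 : Continuous fun w : W X => L.g w.1 := L.cg.comp (by fun_prop)
  have c5 : Continuous fun w : W X => L.g' w.1 := L.cg'.comp (by fun_prop)
  refine Cl.build L
    (fun w => fromRows (((√(w.2 : ℝ) : ℝ) : ℂ) • L.g w.1)
      (((√(1 - w.2 : ℝ) : ℝ) : ℂ) • a.e w.1.1))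
    (fun w => fromCols (((√(w.2 : ℝ) : ℝ) : ℂ) • L.g' w.1)
      (((√(1 - w.2 : ℝ) : ℝ) : ℂ) • a.e w.1.1))
    (continuous_fromRows (c1.smul c4) (c2.smul c3)) (continuous_fromCols (c1.smul c5) (c2.smul c3))
    ?_ ?_ ?_ ?_ ?_ ?_ ?_
  · intro w
    rw [fromCols_mul_fromRows]
    simp only [Matrix.smul_mul, Matrix.mul_smul, smul_smul, L.g'g, a.idem, hs, hs', ← add_smul]
    simp
  · intro w
    rw [fromRows_mul]
    simp only [Matrix.smul_mul, L.ga, a.idem]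
  · intro w
    rw [mul_fromCols]
    simp only [Matrix.mul_smul, L.ag', a.idem]
  · intro x z z'
    simp
  · intro x z z'
    simp
  · intro x z z'
    rw [fromRows_mul, fromRows_mul]
    simp [Matrix.smul_mul, L.gg']
  · intro x z z'
    rw [mul_fromCols, mul_fromCols]
    simp [L.gg']

theorem Cl.unique [CompactSpace X] [T2Space X] {a : Bun X} {L : Loop a} {A B : Bun (X × S2)}
    (hA : Cl A L) (hB : Cl B L) : A.Iso B := by
  obtain ⟨α, β, h⟩ := hA
  obtain ⟨α', β', h'⟩ := hB
  have aux : ∀ {A B : Bun (X × S2)} {α β α' β'} (_ : IsCl A L α β) (_ : IsCl B L α' β'),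
      ∃ F : X × S2 → Matrix A.ι B.ι ℂ, Continuous F ∧ ∀ w, F (ppi w) = α w * β' w := by
    intro A B α β α' β' h h'
    refine descend (h.ca.matrix_mul h'.cb) ?_
    intro x z z'
    refine ⟨by beta_reduce; rw [h.a0 x z z', h'.b0 x z z'], ?_⟩
    have : ∀ z, α ((x, z), 1) * β' ((x, z), 1) =
        (α ((x, z), 1) * L.g' (x, z)) * (L.g (x, z) * β' ((x, z), 1)) := by
      intro z
      rw [Matrix.mul_assoc, ← Matrix.mul_assoc (L.g' _), L.g'g, ← Matrix.mul_assoc]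
      rw [h.aa ((x, z), 1)]
    beta_reduce
    rw [this, this, h.a1 x z z', h'.b1 x z z']
  obtain ⟨F, hF, hF'⟩ := aux h h'
  obtain ⟨G, hG, hG'⟩ := aux h' h
  refine ⟨F, G, hF, hG, ?_, ?_⟩
  · intro y
    obtain ⟨w, rfl⟩ := ppi_surj y
    rw [hF', hG', Matrix.mul_assoc, ← Matrix.mul_assoc (β' w), h'.ba, h.bb, h.ab]
  · intro y
    obtain ⟨w, rfl⟩ := ppi_surj y
    rw [hF', hG', Matrix.mul_assoc, ← Matrix.mul_assoc (β w), h.ba, h'.bb, h'.ab]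

section
variable [CompactSpace X] [T2Space X]

/-- the class of the clutched bundle -/
noncomputable def Loop.cl {a : Bun X} (L : Loop a) : VB (X × S2) :=
  VB.mk (Cl.exists L).choose

theorem Cl.eq {a : Bun X} {L : Loop a} {A : Bun (X × S2)} (h : Cl A L) : VB.mk A = L.cl :=
  VB.mk_eq.2 (h.unique (Cl.exists L).choose_spec)

theorem Loop.exists_cl {a : Bun X} (L : Loop a) : ∃ A, VB.mk A = L.cl ∧ Cl A L :=
  ⟨_, rfl, (Cl.exists L).choose_spec⟩

end

end BottK

end

section
open Matrix
open scoped Kronecker TensorProduct unitInterval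

namespace BottK
variable {X Y Z : Type} [TopologicalSpace X] [TopologicalSpace Y] [TopologicalSpace Z]

def mapS (f : C(X, Y)) : C(X × S2, Y × S2) := ⟨fun p => (f p.1, p.2), by fun_prop⟩

@[reducible] def Loop.pull (f : C(X, Y)) {a : Bun Y} (L : Loop a) : Loop (a.pull f) where
  g p := L.g (f p.1, p.2)
  g' p := L.g' (f p.1, p.2)
  cg := L.cg.comp (by fun_prop)
  cg' := L.cg'.comp (by fun_prop)
  gg' p := L.gg' _
  g'g p := L.g'g _
  ag p := L.ag (f p.1, p.2)
  ag' p := L.ag' (f p.1, p.2)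

@[reducible] def Loop.add {a b : Bun X} (L : Loop a) (M : Loop b) : Loop (a.add b) where
  g p := fromBlocks (L.g p) 0 0 (M.g p)
  g' p := fromBlocks (L.g' p) 0 0 (M.g' p)
  cg := L.cg.matrix_fromBlocks continuous_const continuous_const M.cg
  cg' := L.cg'.matrix_fromBlocks continuous_const continuous_const M.cg'
  gg' p := by simp [fromBlocks_multiply, L.gg', M.gg']
  g'g p := by simp [fromBlocks_multiply, L.g'g, M.g'g]
  ag p := by simp [fromBlocks_multiply, L.ag, M.ag]
  ag' p := by simp [fromBlocks_multiply, L.ag', M.ag']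

@[reducible] def Loop.mul {a b : Bun X} (L : Loop a) (M : Loop b) : Loop (a.mul b) where
  g p := L.g p ⊗ₖ M.g p
  g' p := L.g' p ⊗ₖ M.g' p
  cg := continuous_kron L.cg M.cg
  cg' := continuous_kron L.cg' M.cg'
  gg' p := by rw [← mul_kronecker_mul, L.gg', M.gg']
  g'g p := by rw [← mul_kronecker_mul, L.g'g, M.g'g]
  ag p := by rw [← mul_kronecker_mul, L.ag, M.ag]
  ag' p := by rw [← mul_kronecker_mul, L.ag', M.ag']

@[reducible] noncomputable def Loop.lam {a : Bun X} (L : Loop a) : Loop a.lam where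
  g p := asym a.ι * (L.g p ⊗ₖ L.g p)
  g' p := asym a.ι * (L.g' p ⊗ₖ L.g' p)
  cg := continuous_const.matrix_mul (continuous_kron L.cg L.cg)
  cg' := continuous_const.matrix_mul (continuous_kron L.cg' L.cg')
  gg' p := by rw [asym_kron_mul, L.gg']
  g'g p := by rw [asym_kron_mul, L.g'g]
  ag p := by rw [asym_kron_mul, L.ag]
  ag' p := by rw [asym_kron_mul, L.ag']

@[reducible] def Loop.const (a : Bun X) : Loop a where
  g p := a.e p.1
  g' p := a.e p.1
  cg := a.cont.comp continuous_fst
  cg' := a.cont.comp continuous_fst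
  gg' p := a.idem _
  g'g p := a.idem _
  ag p := a.idem _
  ag' p := a.idem _

theorem Cl.pull (f : C(X, Y)) {a : Bun Y} {L : Loop a} {A : Bun (Y × S2)} (h : Cl A L) :
    Cl (A.pull (mapS f)) (L.pull f) := by
  obtain ⟨α, β, h⟩ := h
  refine ⟨fun w => α ((f w.1.1, w.1.2), w.2), fun w => β ((f w.1.1, w.1.2), w.2),
    h.ca.comp (by fun_prop), h.cb.comp (by fun_prop), fun w => h.ab _, fun w => h.ba _,
    fun w => h.aa ((f w.1.1, w.1.2), w.2), fun w => h.bb ((f w.1.1, w.1.2), w.2),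
    fun x => h.a0 (f x), fun x => h.b0 (f x), fun x => h.a1 (f x),
    fun x => h.b1 (f x)⟩

theorem Cl.add {a b : Bun X} {L : Loop a} {M : Loop b} {A B : Bun (X × S2)} (h : Cl A L)
    (h' : Cl B M) : Cl (A.add B) (L.add M) := by
  obtain ⟨α, β, h⟩ := h
  obtain ⟨α', β', h'⟩ := h'
  refine ⟨fun w => fromBlocks (α w) 0 0 (α' w), fun w => fromBlocks (β w) 0 0 (β' w),
    h.ca.matrix_fromBlocks continuous_const continuous_const h'.ca,
    h.cb.matrix_fromBlocks continuous_const continuous_const h'.cb, ?_, ?_, ?_, ?_, ?_, ?_, ?_, ?_⟩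
  · intro w; simp [fromBlocks_multiply, h.ab, h'.ab]
  · intro w; simp [fromBlocks_multiply, h.ba, h'.ba]
  · intro w; simp [fromBlocks_multiply, h.aa, h'.aa]
  · intro w; simp [fromBlocks_multiply, h.bb, h'.bb]
  · intro x z z'; simp [h.a0 x z z', h'.a0 x z z']
  · intro x z z'; simp [h.b0 x z z', h'.b0 x z z']
  · intro x z z'; simp [fromBlocks_multiply, h.a1 x z z', h'.a1 x z z']
  · intro x z z'; simp [fromBlocks_multiply, h.b1 x z z', h'.b1 x z z']

theorem Cl.mul {a b : Bun X} {L : Loop a} {M : Loop b} {A B : Bun (X × S2)} (h : Cl A L)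
    (h' : Cl B M) : Cl (A.mul B) (L.mul M) := by
  obtain ⟨α, β, h⟩ := h
  obtain ⟨α', β', h'⟩ := h'
  refine ⟨fun w => α w ⊗ₖ α' w, fun w => β w ⊗ₖ β' w,
    continuous_kron h.ca h'.ca, continuous_kron h.cb h'.cb, ?_, ?_, ?_, ?_, ?_, ?_, ?_, ?_⟩
  · intro w; beta_reduce; rw [← mul_kronecker_mul, h.ab, h'.ab]
  · intro w; beta_reduce; rw [← mul_kronecker_mul, h.ba, h'.ba]
  · intro w; beta_reduce; rw [← mul_kronecker_mul, h.aa, h'.aa]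
  · intro w; beta_reduce; rw [← mul_kronecker_mul, h.bb, h'.bb]
  · intro x z z'; beta_reduce; rw [h.a0 x z z', h'.a0 x z z']
  · intro x z z'; beta_reduce; rw [h.b0 x z z', h'.b0 x z z']
  · intro x z z'; beta_reduce
    rw [← mul_kronecker_mul, ← mul_kronecker_mul, h.a1 x z z', h'.a1 x z z']
  · intro x z z'; beta_reduce
    rw [← mul_kronecker_mul, ← mul_kronecker_mul, h.b1 x z z', h'.b1 x z z']

theorem Cl.lam {a : Bun X} {L : Loop a} {A : Bun (X × S2)} (h : Cl A L) : Cl A.lam L.lam := by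
  obtain ⟨α, β, h⟩ := h
  refine ⟨fun w => asym A.ι * (α w ⊗ₖ α w), fun w => asym a.ι * (β w ⊗ₖ β w),
    continuous_const.matrix_mul (continuous_kron h.ca h.ca),
    continuous_const.matrix_mul (continuous_kron h.cb h.cb), ?_, ?_, ?_, ?_, ?_, ?_, ?_, ?_⟩
  · intro w; beta_reduce; rw [asym_kron_mul, h.ab]
  · intro w; beta_reduce; rw [asym_kron_mul, h.ba]
  · intro w; beta_reduce; rw [asym_kron_mul, h.aa]
  · intro w; beta_reduce; rw [asym_kron_mul, h.bb]
  · intro x z z'; beta_reduce; rw [h.a0 x z z']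
  · intro x z z'; beta_reduce; rw [h.b0 x z z']
  · intro x z z'; beta_reduce; rw [asym_kron_mul, asym_kron_mul, h.a1 x z z']
  · intro x z z'; beta_reduce; rw [asym_kron_mul, asym_kron_mul, h.b1 x z z']

def prS : C(X × S2, X) := ⟨Prod.fst, continuous_fst⟩

theorem Cl.const (a : Bun X) : Cl (a.pull prS) (Loop.const a) := by
  refine ⟨fun w => a.e w.1.1, fun w => a.e w.1.1, a.cont.comp (by fun_prop),
    a.cont.comp (by fun_prop), fun w => a.idem _, fun w => a.idem _, fun w => a.idem _,
    fun w => a.idem _, fun x z z' => rfl, fun x z z' => rfl, fun x z z' => rfl, fun x z z' => rfl⟩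

theorem Cl.equiv {a b : Bun X} {L : Loop a} {M : Loop b} {A : Bun (X × S2)} (h : Cl A L)
    {c c' : X → Matrix a.ι b.ι ℂ} {d d' : X → Matrix b.ι a.ι ℂ} (hc : Continuous c)
    (hd : Continuous d) (hcd : ∀ x, c x * d x = a.e x) (hdc : ∀ x, d x * c x = b.e x)
    (hM : ∀ p, M.g p = d' p.1 * L.g p * c p.1) (hM' : ∀ p, M.g' p = d p.1 * L.g' p * c' p.1) :
    Cl A M := by
  obtain ⟨α, β, h⟩ := h
  have e1 : ∀ w, α w * c w.1.1 * d w.1.1 = α w := fun w => by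
    rw [Matrix.mul_assoc, hcd, h.aa]
  have e2 : ∀ w, c w.1.1 * (d w.1.1 * β w) = β w := fun w => by
    rw [← Matrix.mul_assoc, hcd, h.bb]
  refine ⟨fun w => α w * c w.1.1, fun w => d w.1.1 * β w,
    h.ca.matrix_mul (hc.comp (by fun_prop)), (hd.comp (by fun_prop)).matrix_mul h.cb,
    ?_, ?_, ?_, ?_, ?_, ?_, ?_, ?_⟩
  · intro w; beta_reduce
    rw [← Matrix.mul_assoc, e1, h.ab]
  · intro w; beta_reduce
    rw [Matrix.mul_assoc, ← Matrix.mul_assoc (β w), h.ba, ← hcd, ← Matrix.mul_assoc,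
      ← Matrix.mul_assoc, hdc, Matrix.mul_assoc, hdc, b.idem]
  · intro w; beta_reduce
    rw [← hdc, ← Matrix.mul_assoc, e1]
  · intro w; beta_reduce
    rw [← hdc, Matrix.mul_assoc, e2]
  · intro x z z'; beta_reduce; rw [h.a0 x z z']
  · intro x z z'; beta_reduce; rw [h.b0 x z z']
  · intro x z z'; beta_reduce
    have : ∀ z, α ((x, z), 1) * c x * M.g' (x, z) = (α ((x, z), 1) * L.g' (x, z)) * c' x := by
      intro z
      rw [hM', ← Matrix.mul_assoc, ← Matrix.mul_assoc]
      rw [e1 ((x, z), 1)]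
    dsimp only
    rw [this, this, h.a1 x z z']
  · intro x z z'; beta_reduce
    have : ∀ z, M.g (x, z) * (d x * β ((x, z), 1)) = d' x * (L.g (x, z) * β ((x, z), 1)) := by
      intro z
      rw [hM, Matrix.mul_assoc, Matrix.mul_assoc]
      rw [e2 ((x, z), 1)]
    dsimp only
    rw [this, this, h.b1 x z z']

theorem Cl.iso {a : Bun X} {L : Loop a} {A B : Bun (X × S2)} (h : Cl A L) (hAB : A.Iso B) :
    Cl B L := by
  obtain ⟨α, β, h⟩ := h
  obtain ⟨c, d, hc, hd, hcd, hdc⟩ := hAB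
  have e0 : ∀ w, A.e (ppi w) * α w = α w := fun w => by
    rw [← h.ab, Matrix.mul_assoc, h.ba, h.aa]
  have p0 := fun x z z' => (ppi_des (X := X) x z z').1
  have p1 := fun x z z' => (ppi_des (X := X) x z z').2
  refine ⟨fun w => d (ppi w) * α w, fun w => β w * c (ppi w),
    (hd.comp continuous_ppi).matrix_mul h.ca, h.cb.matrix_mul (hc.comp continuous_ppi),
    ?_, ?_, ?_, ?_, ?_, ?_, ?_, ?_⟩
  · intro w; beta_reduce
    rw [Matrix.mul_assoc, ← Matrix.mul_assoc (α w), h.ab, ← hcd, Matrix.mul_assoc, hdc,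
      ← Matrix.mul_assoc, hdc, B.idem]
  · intro w; beta_reduce
    rw [Matrix.mul_assoc, ← Matrix.mul_assoc (c _), hcd, e0, h.ba]
  · intro w; beta_reduce
    rw [Matrix.mul_assoc, h.aa]
  · intro w; beta_reduce
    rw [← Matrix.mul_assoc, h.bb]
  · intro x z z'; beta_reduce; rw [h.a0 x z z', p0 x z z']
  · intro x z z'; beta_reduce; rw [h.b0 x z z', p0 x z z']
  · intro x z z'; beta_reduce; rw [Matrix.mul_assoc, Matrix.mul_assoc, h.a1 x z z', p1 x z z']
  · intro x z z'; beta_reduce; rw [← Matrix.mul_assoc, ← Matrix.mul_assoc, h.b1 x z z', p1 x z z']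

/-- the base point of the sphere -/
noncomputable def pole : S2 := sph (1, 0)

noncomputable def atPole : C(X, X × S2) := ⟨fun x => (x, pole), by fun_prop⟩

theorem Cl.at_pole {a : Bun X} {L : Loop a} {A : Bun (X × S2)} (h : Cl A L) :
    (A.pull atPole).Iso a := by
  obtain ⟨α, β, h⟩ := h
  exact ⟨fun x => α ((x, 1), 0), fun x => β ((x, 1), 0), h.ca.comp (by fun_prop),
    h.cb.comp (by fun_prop), fun x => h.ab _, fun x => h.ba _⟩

theorem Cl.surj [CompactSpace X] (A : Bun (X × S2)) : ∃ L : Loop (A.pull atPole), Cl A L := by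
  obtain ⟨s, s', hs, hs', h1, h2, h0, h⟩ := homotopy_lemma (Y := X × Circle)
    (e := fun w => A.e (ppi w)) (A.cont.comp continuous_ppi) (fun _ => A.idem _)
  have p0 : ∀ x z, ppi ((x, z), 0) = (x, pole) := fun x z => (ppi_des (X := X) x z 1).1
  have p1 := fun x z z' => (ppi_des (X := X) x z z').2
  set a := A.pull atPole with ha
  have hae : ∀ x, a.e x = A.e (x, pole) := fun x => rfl
  have hsa : ∀ x z t, A.e (ppi ((x, z), t)) * s ((x, z), t) = s ((x, z), t) * a.e x := by
    intro x z t
    rw [hae, ← p0 x z]; exact h (x, z) t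
  have hsas : ∀ x z t, s ((x, z), t) * a.e x * s' ((x, z), t) = A.e (ppi ((x, z), t)) := by
    intro x z t
    rw [← hsa, Matrix.mul_assoc, h1, Matrix.mul_one]
  have hsas' : ∀ x z t, s' ((x, z), t) * A.e (ppi ((x, z), t)) * s ((x, z), t) = a.e x := by
    intro x z t
    rw [Matrix.mul_assoc, hsa, ← Matrix.mul_assoc, h2, Matrix.one_mul]
  have ca : Continuous fun p : X × Circle => a.e p.1 := a.cont.comp (by fun_prop)
  have i := a.idem
  have key : ∀ x z z' z'', a.e x * s' ((x, z), 1) * s ((x, z'), 1) * a.e x *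
      (a.e x * s' ((x, z'), 1) * s ((x, z''), 1) * a.e x) =
      a.e x * s' ((x, z), 1) * s ((x, z''), 1) * a.e x := by
    intro x z z' z''
    calc _ = a.e x * s' ((x, z), 1) * (s ((x, z'), 1) * (a.e x *
        a.e x) * s' ((x, z'), 1)) * s ((x, z''), 1) * a.e x := by simp only [Matrix.mul_assoc]
      _ = a.e x * (s' ((x, z), 1) * A.e (ppi ((x, z), 1))) * s ((x, z''), 1) * a.e x := by
        rw [i, hsas, p1 x z' z]; simp only [Matrix.mul_assoc]
      _ = a.e x * a.e x * s' ((x, z), 1) * s ((x, z''), 1) * a.e x := by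
        rw [← hsas, show s' ((x, z), 1) * (s ((x, z), 1) * a.e x * s' ((x, z), 1)) =
          a.e x * s' ((x, z), 1) by
            rw [← Matrix.mul_assoc, ← Matrix.mul_assoc, h2, Matrix.one_mul]]
        simp only [Matrix.mul_assoc]
      _ = _ := by rw [i]
  have key2 : ∀ x z, a.e x * s' ((x, z), 1) * s ((x, z), 1) * a.e x = a.e x := by
    intro x z
    rw [Matrix.mul_assoc (a.e x), h2, Matrix.mul_one, i]
  let L : Loop a :=
    { g := fun p => a.e p.1 * s' ((p.1, 1), 1) * s (p, 1) * a.e p.1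
      g' := fun p => a.e p.1 * s' (p, 1) * s ((p.1, 1), 1) * a.e p.1
      cg := ((ca.matrix_mul (hs'.comp (by fun_prop))).matrix_mul (hs.comp (by fun_prop))).matrix_mul
        ca
      cg' := ((ca.matrix_mul (hs'.comp (by fun_prop))).matrix_mul
        (hs.comp (by fun_prop))).matrix_mul ca
      gg' := fun p => by rw [show p = (p.1, p.2) from rfl, key, key2]
      g'g := fun p => by rw [show p = (p.1, p.2) from rfl, key, key2]
      ag := fun p => by simp only [← Matrix.mul_assoc, i]
      ag' := fun p => by simp only [← Matrix.mul_assoc, i] }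
  have cs : Continuous fun w : W X => a.e w.1.1 := a.cont.comp (by fun_prop)
  refine ⟨L, fun w => s w * a.e w.1.1, fun w => a.e w.1.1 * s' w, hs.matrix_mul cs,
    cs.matrix_mul hs', ?_, ?_, ?_, ?_, ?_, ?_, ?_, ?_⟩
  · rintro ⟨⟨x, z⟩, t⟩; beta_reduce
    rw [← hsas, Matrix.mul_assoc, ← Matrix.mul_assoc (a.e x) (a.e x), i, Matrix.mul_assoc]
  · rintro ⟨⟨x, z⟩, t⟩; beta_reduce
    rw [Matrix.mul_assoc, ← Matrix.mul_assoc (s' _), h2, Matrix.one_mul, i]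
  · rintro w; beta_reduce
    rw [Matrix.mul_assoc, i]
  · rintro w; beta_reduce
    rw [← Matrix.mul_assoc, i]
  · intro x z z'; beta_reduce; rw [h0, h0]
  · intro x z z'; beta_reduce
    have : ∀ z, s' ((x, z), 0) = 1 := fun z => by
      have := h1 ((x, z), 0)
      rwa [h0, Matrix.one_mul] at this
    rw [this, this]
  · intro x z z'
    have : ∀ z, s ((x, z), 1) * a.e x * L.g' (x, z) = A.e (ppi ((x, 1), 1)) * s ((x, 1), 1) * a.e x := by
      intro z
      calc s ((x, z), 1) * a.e x * L.g' (x, z) = s ((x, z), 1) * (a.e x * a.e x) * s' ((x, z), 1) *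
            s ((x, 1), 1) * a.e x := by simp only [L, Matrix.mul_assoc]
        _ = _ := by rw [i, hsas, p1 x z 1]
    beta_reduce
    rw [this, this]
  · intro x z z'
    have : ∀ z, L.g (x, z) * (a.e x * s' ((x, z), 1)) =
        a.e x * s' ((x, 1), 1) * A.e (ppi ((x, 1), 1)) := by
      intro z
      calc L.g (x, z) * (a.e x * s' ((x, z), 1)) = a.e x * s' ((x, 1), 1) *
            (s ((x, z), 1) * (a.e x * a.e x) * s' ((x, z), 1)) := by simp only [L, Matrix.mul_assoc]
        _ = _ := by rw [i, hsas, p1 x z 1]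
    beta_reduce
    rw [this, this]

section
variable [CompactSpace X] [T2Space X] [CompactSpace Y] [T2Space Y]

theorem cl_pull (f : C(X, Y)) {a : Bun Y} (L : Loop a) :
    (L.pull f).cl = VB.pull (mapS f) L.cl := by
  obtain ⟨A, hA, h⟩ := L.exists_cl
  rw [← hA, ← (h.pull f).eq, VB.pull_mk]

theorem cl_add {a b : Bun X} (L : Loop a) (M : Loop b) : (L.add M).cl = L.cl + M.cl := by
  obtain ⟨A, hA, h⟩ := L.exists_cl
  obtain ⟨B, hB, h'⟩ := M.exists_cl
  rw [← hA, ← hB, ← (h.add h').eq, VB.mk_add]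

theorem cl_mul {a b : Bun X} (L : Loop a) (M : Loop b) : (L.mul M).cl = L.cl * M.cl := by
  obtain ⟨A, hA, h⟩ := L.exists_cl
  obtain ⟨B, hB, h'⟩ := M.exists_cl
  rw [← hA, ← hB, ← (h.mul h').eq, VB.mk_mul]

theorem cl_lam {a : Bun X} (L : Loop a) : L.lam.cl = VB.lam L.cl := by
  obtain ⟨A, hA, h⟩ := L.exists_cl
  rw [← hA, ← h.lam.eq, VB.lam_mk]

theorem cl_const (a : Bun X) : (Loop.const a).cl = VB.pull prS (VB.mk a) := by
  rw [← (Cl.const a).eq, VB.pull_mk]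

theorem cl_equiv {a b : Bun X} {L : Loop a} {M : Loop b}
    {c c' : X → Matrix a.ι b.ι ℂ} {d d' : X → Matrix b.ι a.ι ℂ} (hc : Continuous c)
    (hd : Continuous d) (hcd : ∀ x, c x * d x = a.e x) (hdc : ∀ x, d x * c x = b.e x)
    (hM : ∀ p, M.g p = d' p.1 * L.g p * c p.1) (hM' : ∀ p, M.g' p = d p.1 * L.g' p * c' p.1) :
    L.cl = M.cl := by
  obtain ⟨A, hA, h⟩ := L.exists_cl
  rw [← hA]
  exact (h.equiv hc hd hcd hdc hM hM').eq

theorem cl_atPole {a : Bun X} (L : Loop a) : VB.pull atPole L.cl = VB.mk a := by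
  obtain ⟨A, hA, h⟩ := L.exists_cl
  rw [← hA, VB.pull_mk]
  exact VB.mk_eq.2 h.at_pole

theorem cl_surj (A : Bun (X × S2)) : ∃ L : Loop (A.pull atPole), VB.mk A = L.cl := by
  obtain ⟨L, hL⟩ := Cl.surj A
  exact ⟨L, hL.eq⟩

theorem cl_homotopy {b : Bun (X × I)} (L : Loop b) :
    (L.pull (⟨fun x => (x, 0), by fun_prop⟩ : C(X, X × I))).cl =
    (L.pull (⟨fun x => (x, 1), by fun_prop⟩ : C(X, X × I))).cl := by
  rw [cl_pull, cl_pull]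
  exact VB.pull_homotopy (X := X × S2) (⟨fun w => ((w.1.1, w.2), w.1.2), by fun_prop⟩ :
    C((X × S2) × I, (X × I) × S2)) L.cl

end

end BottK

end

section
open Matrix
open scoped Kronecker TensorProduct unitInterval

namespace BottK
variable {X Y Z : Type} [TopologicalSpace X] [TopologicalSpace Y] [TopologicalSpace Z]

/-! ### the Hopf bundle -/

theorem S2.conj_mul (p : S2) : (starRingEnd ℂ) p.1.1 * p.1.1 = p.1.2 * (1 - p.1.2) := by
  rw [Complex.conj_mul']
  exact_mod_cast p.2

/-- the Hopf line bundle -/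
@[reducible] noncomputable def hopf : Bun S2 where
  ι := Fin 2
  e p := !![(p.1.2 : ℂ), p.1.1; (starRingEnd ℂ) p.1.1, 1 - p.1.2]
  cont := by
    have c1 : Continuous fun p : S2 => p.1.1 := continuous_fst.comp continuous_subtype_val
    have c2 : Continuous fun p : S2 => ((p.1.2 : ℝ) : ℂ) :=
      Complex.continuous_ofReal.comp (continuous_snd.comp continuous_subtype_val)
    refine continuous_matrix fun i j => ?_
    fin_cases i <;> fin_cases j
    · exact c2
    · exact c1
    · exact Complex.continuous_conj.comp c1
    · exact continuous_const.sub c2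
  idem p := by
    have h := S2.conj_mul p
    ext i j
    fin_cases i <;> fin_cases j <;> simp [Matrix.mul_apply, Fin.sum_univ_two] <;>
      first | ring1 | linear_combination h | linear_combination -h

theorem hopf_line : hopf.Line := by
  intro p i j i' j'
  have h := S2.conj_mul p
  fin_cases i <;> fin_cases j <;> fin_cases i' <;> fin_cases j' <;> simp <;>
    first | ring1 | linear_combination h | linear_combination -h

theorem hopf_compl_line : hopf.compl.Line := by
  intro p i j i' j'
  have h := S2.conj_mul p
  fin_cases i <;> fin_cases j <;> fin_cases i' <;> fin_cases j' <;> simp <;>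
    first | ring1 | linear_combination h | linear_combination -h

def sndS : C(X × S2, S2) := ⟨Prod.snd, continuous_snd⟩

theorem Bun.Line.pull {A : Bun Y} (h : A.Line) (f : C(X, Y)) : (A.pull f).Line :=
  fun x => h (f x)

noncomputable def VB.H (X : Type) [TopologicalSpace X] : VB (X × S2) := VB.mk (hopf.pull sndS)
noncomputable def VB.H' (X : Type) [TopologicalSpace X] : VB (X × S2) := VB.mk (hopf.compl.pull sndS)

theorem hopf_add : VB.mk hopf + VB.mk hopf.compl = 2 := by
  rw [VB.mk_add_compl]; simp

theorem hopf_mul : VB.mk hopf * VB.mk hopf.compl = 1 := by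
  have h := VB.lam_add (VB.mk hopf) (VB.mk hopf.compl)
  rw [hopf_add, VB.lam_line hopf_line, VB.lam_line hopf_compl_line, zero_add, add_zero] at h
  rw [← h, ← one_add_one_eq_two, VB.lam_add, VB.lam_one]
  simp

theorem H_eq : VB.H X = VB.pull sndS (VB.mk hopf) := rfl
theorem H'_eq : VB.H' X = VB.pull sndS (VB.mk hopf.compl) := rfl

theorem H_add : VB.H X + VB.H' X = 2 := by
  rw [H_eq, H'_eq, ← map_add, hopf_add, map_ofNat]

theorem H_mul : VB.H X * VB.H' X = 1 := by
  rw [H_eq, H'_eq, ← map_mul, hopf_mul, map_one]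

@[reducible] noncomputable def zl : Loop (Bun.triv Unit : Bun X) where
  g p := (p.2 : ℂ) • (1 : Matrix Unit Unit ℂ)
  g' p := ((p.2⁻¹ : Circle) : ℂ) • (1 : Matrix Unit Unit ℂ)
  cg := (by fun_prop : Continuous fun p : X × Circle => (p.2 : ℂ)).smul continuous_const
  cg' := (by fun_prop : Continuous fun p : X × Circle => ((p.2⁻¹ : Circle) : ℂ)).smul continuous_const
  gg' p := by simp
  g'g p := by simp
  ag p := by simp
  ag' p := by simp

theorem Cl.hopf : Cl (hopf.pull sndS) (zl (X := X)) := by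
  have hs : ∀ t : I, (√(t : ℝ) * √(t : ℝ) : ℂ) = t := fun t => by
    rw [← Complex.ofReal_mul, Real.mul_self_sqrt t.2.1]
  have hs' : ∀ t : I, (√(1 - t : ℝ) * √(1 - t : ℝ) : ℂ) = 1 - t := fun t => by
    rw [← Complex.ofReal_mul, Real.mul_self_sqrt (sub_nonneg.2 t.2.2)]; simp
  have hss : ∀ t : I, (√(t : ℝ) * √(1 - t : ℝ) : ℂ) = √((t : ℝ) * (1 - t) : ℝ) := fun t => by
    rw [← Complex.ofReal_mul, Real.sqrt_mul t.2.1]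
  have c1 : Continuous fun w : W X => ((√(w.2 : ℝ) : ℝ) : ℂ) := by fun_prop
  have c2 : Continuous fun w : W X => ((√(1 - w.2 : ℝ) : ℝ) : ℂ) := by fun_prop
  have c3 : Continuous fun w : W X => (w.1.2 : ℂ) := by fun_prop
  have c4 : Continuous fun w : W X => ((w.1.2⁻¹ : Circle) : ℂ) :=
    by fun_prop
  have hz : ∀ z : Circle, (z : ℂ) * ((z⁻¹ : Circle) : ℂ) = 1 := fun z => by
    rw [← Circle.coe_mul, mul_inv_cancel, Circle.coe_one]
  refine ⟨fun w => of fun i _ => ![(√(w.2 : ℝ) : ℝ) * (w.1.2 : ℂ), (√(1 - w.2 : ℝ) : ℝ)] i,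
    fun w => of fun _ i => ![(√(w.2 : ℝ) : ℝ) * ((w.1.2⁻¹ : Circle) : ℂ), (√(1 - w.2 : ℝ) : ℝ)] i,
    ?_, ?_, ?_, ?_, ?_, ?_, ?_, ?_, ?_, ?_⟩
  · refine continuous_matrix fun i j => ?_
    fin_cases i
    · exact c1.mul c3
    · exact c2
  · refine continuous_matrix fun j i => ?_
    fin_cases i
    · exact c1.mul c4
    · exact c2
  · rintro ⟨⟨x, z⟩, t⟩
    ext i j
    fin_cases i <;> fin_cases j <;>
      simp only [Matrix.mul_apply, ppi, sph, sndS, ContinuousMap.coe_mk] <;> simp [-Circle.coe_inv]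
    · linear_combination (√(t : ℝ) * √(t : ℝ) : ℂ) * hz z + hs t
    · linear_combination (z : ℂ) * hss t
    · rw [← Circle.coe_inv_eq_conj]
      linear_combination ((z⁻¹ : Circle) : ℂ) * hss t
    · exact hs' t
  · rintro ⟨⟨x, z⟩, t⟩
    ext i j
    simp only [Matrix.mul_apply, Fin.sum_univ_two]
    simp [-Circle.coe_inv]
    linear_combination (√(t : ℝ) * √(t : ℝ) : ℂ) * hz z + hs t + hs' t
  · intro w; simp
  · intro w; simp
  · intro x z z'; ext i j; fin_cases i <;> simp
  · intro x z z'; ext i j; fin_cases j <;> simp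
  · intro x z z'; ext i j; fin_cases i <;> simp
  · intro x z z'; ext i j; fin_cases j <;> simp

end BottK

end

section
open Matrix
open scoped Kronecker TensorProduct unitInterval

namespace BottK
variable {X Y Z : Type} [TopologicalSpace X] [TopologicalSpace Y] [TopologicalSpace Z]

theorem Loop.ext' {a : Bun X} {L M : Loop a} (h : L.g = M.g) (h' : L.g' = M.g') : L = M := by
  cases L; cases M; cases h; cases h'; rfl

/-- multiply a loop by the coordinate of the circle -/
@[reducible] noncomputable def Loop.zs {a : Bun X} (L : Loop a) : Loop a where
  g p := (p.2 : ℂ) • L.g p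
  g' p := ((p.2⁻¹ : Circle) : ℂ) • L.g' p
  cg := (by fun_prop : Continuous fun p : X × Circle => (p.2 : ℂ)).smul L.cg
  cg' := (by fun_prop : Continuous fun p : X × Circle => ((p.2⁻¹ : Circle) : ℂ)).smul L.cg'
  gg' p := by simp [L.gg', smul_smul]
  g'g p := by simp [L.g'g, smul_smul]
  ag p := by simp [L.ag]
  ag' p := by simp [L.ag']

section
variable [CompactSpace X] [T2Space X]

theorem zl_cl : (zl (X := X)).cl = VB.H X := (Cl.hopf (X := X)).eq.symm

theorem cl_zs {a : Bun X} (L : Loop a) : L.zs.cl = L.cl * VB.H X := by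
  rw [← zl_cl, ← cl_mul]
  symm
  refine cl_equiv (c := fun x => (a.e x).submatrix (fun i : a.ι × Unit => i.1) id)
    (c' := fun x => (a.e x).submatrix (fun i : a.ι × Unit => i.1) id)
    (d := fun x => (a.e x).submatrix id (fun i : a.ι × Unit => i.1))
    (d' := fun x => (a.e x).submatrix id (fun i : a.ι × Unit => i.1))
    (a.cont.matrix_submatrix _ _) (a.cont.matrix_submatrix _ _) ?_ ?_ ?_ ?_
  · intro x
    ext ⟨i, u⟩ ⟨j, v⟩
    have := congrFun₂ (a.idem x) i j
    simpa [mul_apply] using this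
  · intro x
    ext i j
    have := congrFun₂ (a.idem x) i j
    simpa [mul_apply, Fintype.sum_prod_type] using this
  · intro p
    ext i j
    have h : a.e p.1 * L.zs.g p * a.e p.1 = L.zs.g p := by rw [L.zs.ag, L.zs.ga]
    have := (congrFun₂ h i j).symm
    simpa [mul_apply, Fintype.sum_prod_type, mul_comm (p.2 : ℂ), Finset.sum_mul, mul_assoc] using this
  · intro p
    ext i j
    have h : a.e p.1 * L.zs.g' p * a.e p.1 = L.zs.g' p := by rw [L.zs.ag', L.zs.g'a]
    have := (congrFun₂ h i j).symm
    simpa [-Circle.coe_inv, mul_apply, Fintype.sum_prod_type, mul_comm ((p.2⁻¹ : Circle) : ℂ), Finset.sum_mul, mul_assoc] using this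

/-! ### loops of invertible matrices -/
variable {ι κ : Type} [Fintype ι] [DecidableEq ι] [Fintype κ] [DecidableEq κ]

def GLf {T : Type} [TopologicalSpace T] (f : T → Matrix ι ι ℂ) : Prop := Continuous f ∧ ∀ p, IsUnit (f p).det

theorem GLf.comp {S T : Type} [TopologicalSpace S] [TopologicalSpace T] {f : T → Matrix ι ι ℂ}
    (h : GLf f) {g : S → T} (hg : Continuous g) : GLf fun s => f (g s) :=
  ⟨h.1.comp hg, fun p => h.2 _⟩

theorem GLf.mul {T : Type} [TopologicalSpace T] {f g : T → Matrix ι ι ℂ}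
    (h : GLf f) (h' : GLf g) : GLf fun s => f s * g s :=
  ⟨h.1.matrix_mul h'.1, fun p => by rw [det_mul]; exact (h.2 p).mul (h'.2 p)⟩

theorem GLf.inv {T : Type} [TopologicalSpace T] {f : T → Matrix ι ι ℂ}
    (h : GLf f) : GLf fun s => (f s)⁻¹ :=
  ⟨continuous_matInv h.1 fun p => (h.2 p).ne_zero, fun p => by
    rw [det_nonsing_inv]; exact (h.2 p).ringInverse⟩

theorem GLf.of_mul {T : Type} [TopologicalSpace T] {f g : T → Matrix ι ι ℂ}
    (h : Continuous f) (h' : ∀ p, f p * g p = 1) : GLf f :=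
  ⟨h, fun p => by
    have := congrArg det (h' p)
    rw [det_mul, det_one] at this
    exact IsUnit.of_mul_eq_one _ this⟩

theorem GLf.one {T : Type} [TopologicalSpace T] : GLf fun _ : T => (1 : Matrix ι ι ℂ) :=
  ⟨continuous_const, fun p => by simp⟩

theorem GLf.fromBlocks {T : Type} [TopologicalSpace T] {f : T → Matrix ι ι ℂ}
    {g : T → Matrix κ κ ℂ} (h : GLf f) (h' : GLf g) : GLf fun s => fromBlocks (f s) 0 0 (g s) :=
  ⟨h.1.matrix_fromBlocks continuous_const continuous_const h'.1, fun p => by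
    rw [det_fromBlocks_zero₂₁]; exact (h.2 p).mul (h'.2 p)⟩

@[reducible] noncomputable def gl (f : X × Circle → Matrix ι ι ℂ) (h : GLf f) :
    Loop (Bun.triv ι : Bun X) where
  g := f
  g' p := (f p)⁻¹
  cg := h.1
  cg' := h.inv.1
  gg' p := mul_nonsing_inv _ (h.2 p)
  g'g p := nonsing_inv_mul _ (h.2 p)
  ag p := by simp
  ag' p := by simp

open Classical in
noncomputable def gcl (f : X × Circle → Matrix ι ι ℂ) : VB (X × S2) :=
  if h : GLf f then (gl f h).cl else 0

theorem gcl_eq {f : X × Circle → Matrix ι ι ℂ} (h : GLf f) : gcl f = (gl f h).cl := dif_pos h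

theorem gcl_one : gcl (fun _ : X × Circle => (1 : Matrix ι ι ℂ)) = (Fintype.card ι : VB (X × S2)) := by
  rw [gcl_eq GLf.one]
  have : (gl (fun _ : X × Circle => (1 : Matrix ι ι ℂ)) GLf.one).cl =
      (Loop.const (Bun.triv ι : Bun X)).cl := by
    congr 1
    simp [gl, Loop.const]
  rw [this, cl_const, VB.mk_triv, map_natCast]

theorem gcl_homotopy {F : (X × I) × Circle → Matrix ι ι ℂ} (h : GLf F) :
    gcl (fun p => F ((p.1, 0), p.2)) = gcl (fun p => F ((p.1, 1), p.2)) := by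
  rw [gcl_eq (h.comp (by fun_prop)), gcl_eq (h.comp (by fun_prop))]
  exact cl_homotopy (gl F h)

theorem gcl_fromBlocks {f : X × Circle → Matrix ι ι ℂ} {g : X × Circle → Matrix κ κ ℂ}
    (h : GLf f) (h' : GLf g) : gcl (fun p => fromBlocks (f p) 0 0 (g p)) = gcl f + gcl g := by
  rw [gcl_eq h, gcl_eq h', gcl_eq (h.fromBlocks h'), ← cl_add]
  symm
  refine cl_equiv (c := fun _ => (1 : Matrix (ι ⊕ κ) (ι ⊕ κ) ℂ))
    (c' := fun _ => (1 : Matrix (ι ⊕ κ) (ι ⊕ κ) ℂ)) (d := fun _ => (1 : Matrix (ι ⊕ κ) (ι ⊕ κ) ℂ))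
    (d' := fun _ => (1 : Matrix (ι ⊕ κ) (ι ⊕ κ) ℂ)) continuous_const continuous_const ?_ ?_ ?_ ?_
  · intro x; simp
  · intro x; simp
  · intro p; simp
  · intro p
    simp only [Matrix.one_mul, Matrix.mul_one]
    refine inv_eq_right_inv ?_
    rw [fromBlocks_multiply]
    simp [mul_nonsing_inv _ (h.2 p), mul_nonsing_inv _ (h'.2 p)]

theorem gcl_const_mul {f : X × Circle → Matrix ι ι ℂ} (h : GLf f) {N N' : X → Matrix ι ι ℂ}
    (hN : GLf N) (hN' : GLf N') : gcl (fun p => N p.1 * f p * N' p.1) = gcl f := by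
  rw [gcl_eq h, gcl_eq (((hN.comp continuous_fst).mul h).mul (hN'.comp continuous_fst))]
  symm
  refine cl_equiv (c := N') (c' := fun x => (N x)⁻¹) (d := fun x => (N' x)⁻¹)
    (d' := N) hN'.1 hN'.inv.1 ?_ ?_ ?_ ?_
  · intro x; exact mul_nonsing_inv _ (hN'.2 x)
  · intro x; exact nonsing_inv_mul _ (hN'.2 x)
  · intro p; rfl
  · intro p
    simp only [Matrix.mul_inv_rev, Matrix.mul_assoc]

theorem GLf.zs {T : Type} [TopologicalSpace T] {f : T → Matrix ι ι ℂ} (h : GLf f) {z : T → Circle}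
    (hz : Continuous z) : GLf fun t => (z t : ℂ) • f t :=
  ⟨(continuous_subtype_val.comp hz).smul h.1, fun p => by
    rw [det_smul]; exact ((isUnit_iff_ne_zero.2 (Circle.coe_ne_zero _)).pow _).mul (h.2 p)⟩

theorem gcl_zs {f : X × Circle → Matrix ι ι ℂ} (h : GLf f) :
    gcl (fun p => (p.2 : ℂ) • f p) = gcl f * VB.H X := by
  rw [gcl_eq h, gcl_eq (h.zs continuous_snd), ← cl_zs]
  congr 1
  refine Loop.ext' rfl ?_
  funext p
  refine inv_eq_right_inv ?_
  simp [smul_smul, mul_nonsing_inv _ (h.2 p)]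

theorem gcl_split {a : Bun X} (L : Loop a) (M : Loop a.compl) :
    GLf (fun p => L.g p + M.g p) ∧ gcl (fun p => L.g p + M.g p) = L.cl + M.cl := by
  have e1 : ∀ p, L.g p * M.g' p = 0 := fun p => by
    rw [← L.ga, ← M.ag', Matrix.mul_assoc, ← Matrix.mul_assoc (a.e _)]
    simp [Matrix.mul_sub, a.idem]
  have e2 : ∀ p, M.g p * L.g' p = 0 := fun p => by
    rw [← M.ga, ← L.ag', Matrix.mul_assoc, ← Matrix.mul_assoc (a.compl.e _)]
    simp [Matrix.sub_mul, a.idem]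
  have e3 : ∀ p, (L.g p + M.g p) * (L.g' p + M.g' p) = 1 := fun p => by
    rw [Matrix.mul_add, Matrix.add_mul, Matrix.add_mul, e1, e2, L.gg', M.gg']
    simp
  have h : GLf (fun p => L.g p + M.g p) := GLf.of_mul (L.cg.add M.cg) e3
  refine ⟨h, ?_⟩
  rw [gcl_eq h, ← cl_add]
  symm
  have a1 := a.idem
  have a2 := a.compl.idem
  refine cl_equiv (c := fun x => fromRows (a.e x) (a.compl.e x))
    (c' := fun x => fromRows (a.e x) (a.compl.e x))
    (d := fun x => fromCols (a.e x) (a.compl.e x)) (d' := fun x => fromCols (a.e x) (a.compl.e x))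
    (continuous_fromRows a.cont a.compl.cont)
    (continuous_fromCols a.cont a.compl.cont) ?_ ?_ ?_ ?_
  · intro x
    rw [fromRows_mul_fromCols]
    simp [Matrix.mul_sub, Matrix.sub_mul, a1]
  · intro x
    rw [fromCols_mul_fromRows]
    simp [Matrix.mul_sub, Matrix.sub_mul, a1]
  · intro p
    simp only [fromCols_mul_fromBlocks, fromCols_mul_fromRows]
    simp only [L.ag, M.ag, Matrix.mul_zero, add_zero, zero_add, L.ga, M.ga]
  · intro p
    simp only [fromCols_mul_fromBlocks, fromCols_mul_fromRows]
    simp only [L.ag', M.ag', Matrix.mul_zero, add_zero, zero_add, L.g'a, M.g'a]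
    exact inv_eq_right_inv (e3 p)

theorem gcl_idem (a : Bun X) : GLf (fun p : X × Circle => (p.2 : ℂ) • a.e p.1 + (1 - a.e p.1)) ∧
    gcl (fun p : X × Circle => (p.2 : ℂ) • a.e p.1 + (1 - a.e p.1)) =
      VB.pull prS (VB.mk a) * VB.H X + VB.pull prS (VB.mk a.compl) := by
  have := gcl_split (Loop.const a).zs (Loop.const a.compl)
  rwa [cl_zs, cl_const, cl_const] at this

theorem gcl_surj (A : Bun (X × S2)) : ∃ (B : Bun X) (ι : Type) (_ : Fintype ι) (_ : DecidableEq ι)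
    (f : X × Circle → Matrix ι ι ℂ), GLf f ∧ VB.mk A + VB.pull prS (VB.mk B) = gcl f := by
  obtain ⟨L, hL⟩ := cl_surj A
  have := gcl_split L (Loop.const _)
  exact ⟨_, _, _, _, _, this.1, by rw [this.2, hL, cl_const]⟩

/-- equality of clutched bundles gives a homotopy of loops -/
theorem gcl_inj {f g : X × Circle → Matrix ι ι ℂ} (hf : GLf f) (hg : GLf g) (h : gcl f = gcl g) :
    ∃ (F : (X × I) × Circle → Matrix ι ι ℂ) (N N' : X → Matrix ι ι ℂ), GLf F ∧ GLf N ∧ GLf N' ∧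
      (∀ x z, F ((x, 0), z) = g (x, z) * N x) ∧ (∀ x z, F ((x, 1), z) = N' x * f (x, z)) := by
  rw [gcl_eq hf, gcl_eq hg] at h
  obtain ⟨A, hA, hA'⟩ := (gl f hf).exists_cl
  obtain ⟨B, hB, hB'⟩ := (gl g hg).exists_cl
  rw [← hA, ← hB] at h
  have hA'' := hA'.iso (VB.mk_eq.1 h)
  obtain ⟨α, β, h1⟩ := hA''
  obtain ⟨α', β', h2⟩ := hB'
  have e0 : ∀ w, α w * β w * α' w = α' w := fun w => by
    rw [h1.ab, ← h2.ab, Matrix.mul_assoc, h2.ba, h2.aa]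
  have hN : GLf fun w => β' w * α w := by
    refine GLf.of_mul (g := fun w => β w * α' w) (h2.cb.matrix_mul h1.ca) fun w => ?_
    rw [Matrix.mul_assoc, ← Matrix.mul_assoc (α w), e0, h2.ba]
  have hF := (hg.comp (by fun_prop : Continuous fun p : (X × I) × Circle => (p.1.1, p.2))).mul
    (hN.comp (by fun_prop : Continuous fun p : (X × I) × Circle => ((p.1.1, p.2), p.1.2)))
  refine ⟨_, fun x => β' ((x, 1), 0) * α ((x, 1), 0), fun x => g (x, 1) * (β' ((x, 1), 1) * α ((x, 1), 1)) * (f (x, 1))⁻¹,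
    hF, hN.comp (by fun_prop), ?_, ?_, ?_⟩
  · exact ((hg.comp (by fun_prop)).mul (hN.comp (by fun_prop))).mul (hf.inv.comp (by fun_prop))
  · intro x z
    beta_reduce
    rw [h1.a0 x z 1, h2.b0 x z 1]
  · intro x z
    have i1 := h1.a1 x 1 z
    have i2 := h2.b1 x 1 z
    beta_reduce at i1 i2 ⊢
    rw [← Matrix.mul_assoc, ← Matrix.mul_assoc, i2, Matrix.mul_assoc _ _ ((f (x, 1))⁻¹), i1]
    simp only [Matrix.mul_assoc]
    rw [nonsing_inv_mul _ (hf.2 (x, z)), Matrix.mul_one]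

end
end BottK

end

section
open Matrix
open scoped Kronecker TensorProduct unitInterval

namespace BottK
variable {X Y Z : Type} [TopologicalSpace X] [TopologicalSpace Y] [TopologicalSpace Z]

/-! ### Laurent approximation -/

noncomputable def mono (k : ℤ) (g : C(Y, ℂ)) : C(Y × Circle, ℂ) :=
  ⟨fun p => ((p.2 ^ k : Circle) : ℂ) * g p.1, by
    have h : Continuous fun p : Y × Circle => p.2 ^ k := continuous_snd.zpow k
    have h' : Continuous fun z : Circle => (z : ℂ) := by fun_prop
    exact (h'.comp h).mul (g.continuous.comp continuous_fst)⟩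

theorem mono_mul (k l : ℤ) (g h : C(Y, ℂ)) : mono k g * mono l h = mono (k + l) (g * h) := by
  ext p
  simp only [mono, ContinuousMap.coe_mk, ContinuousMap.mul_apply, _root_.zpow_add, Circle.coe_mul]
  ring

theorem mono_star (k : ℤ) (g : C(Y, ℂ)) : star (mono k g) = mono (-k) (star g) := by
  ext p
  simp only [mono, ContinuousMap.coe_mk, ContinuousMap.star_apply, star_mul', _root_.zpow_neg,
    Circle.coe_inv_eq_conj]
  rfl

noncomputable def lauSub (Y : Type) [TopologicalSpace Y] : Submodule ℂ C(Y × Circle, ℂ) :=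
  Submodule.span ℂ (Set.range fun q : ℤ × C(Y, ℂ) => mono q.1 q.2)

noncomputable def lauAlg (Y : Type) [TopologicalSpace Y] : StarSubalgebra ℂ C(Y × Circle, ℂ) :=
  { (lauSub Y).toSubalgebra (Submodule.subset_span ⟨(0, 1), by ext p; simp [mono]⟩) (by
      intro f g hf hg
      induction hf, hg using Submodule.span_induction₂ with
      | mem_mem x y hx hy =>
        obtain ⟨q, rfl⟩ := hx
        obtain ⟨r, rfl⟩ := hy
        exact Submodule.subset_span ⟨(q.1 + r.1, q.2 * r.2), (mono_mul _ _ _ _).symm⟩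
      | zero_left y hy => rw [zero_mul]; exact Submodule.zero_mem _
      | zero_right y hy => rw [mul_zero]; exact Submodule.zero_mem _
      | add_left x y z _ _ _ h1 h2 => rw [add_mul]; exact Submodule.add_mem _ h1 h2
      | add_right x y z _ _ _ h1 h2 => rw [mul_add]; exact Submodule.add_mem _ h1 h2
      | smul_left r x y _ _ h => rw [smul_mul_assoc]; exact Submodule.smul_mem _ _ h
      | smul_right r x y _ _ h => rw [mul_smul_comm]; exact Submodule.smul_mem _ _ h) with
    star_mem' := by
      intro f hf
      change f ∈ lauSub Y at hf
      change star f ∈ lauSub Y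
      induction hf using Submodule.span_induction with
      | mem x hx =>
        obtain ⟨q, rfl⟩ := hx
        exact Submodule.subset_span ⟨(-q.1, star q.2), (mono_star _ _).symm⟩
      | zero => rw [star_zero]; exact Submodule.zero_mem _
      | add x y _ _ h1 h2 => rw [star_add]; exact Submodule.add_mem _ h1 h2
      | smul r x _ h => rw [star_smul]; exact Submodule.smul_mem _ _ h }

theorem lau_repr {f : C(Y × Circle, ℂ)} (hf : f ∈ lauSub Y) :
    ∃ P : ℤ →₀ C(Y, ℂ), ∀ y z, f (y, z) = P.sum fun k g => (z : ℂ) ^ k * g y := by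
  have hz : ∀ (y : Y) (z : Circle) (k : ℤ), (z : ℂ) ^ k * (0 : C(Y, ℂ)) y = 0 := by simp
  induction hf using Submodule.span_induction with
  | mem x hx =>
    obtain ⟨q, rfl⟩ := hx
    refine ⟨Finsupp.single q.1 q.2, fun y z => ?_⟩
    rw [Finsupp.sum_single_index (h := fun (k : ℤ) (g : C(Y, ℂ)) => (z : ℂ) ^ k * g y) (hz y z _)]
    simp [mono]
  | zero => exact ⟨0, fun y z => by simp⟩
  | add x y _ _ h1 h2 =>
    obtain ⟨P, hP⟩ := h1
    obtain ⟨Q, hQ⟩ := h2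
    refine ⟨P + Q, fun y z => ?_⟩
    rw [Finsupp.sum_add_index' (h := fun (k : ℤ) (g : C(Y, ℂ)) => (z : ℂ) ^ k * g y) (fun k => hz y z k) (fun k a b => by simp [mul_add])]
    rw [← hP, ← hQ]; rfl
  | smul r x _ h =>
    obtain ⟨P, hP⟩ := h
    refine ⟨r • P, fun y z => ?_⟩
    rw [Finsupp.sum_smul_index' (h := fun (k : ℤ) (g : C(Y, ℂ)) => (z : ℂ) ^ k * g y) (fun k => hz y z k)]
    simp only [ContinuousMap.smul_apply, hP, smul_eq_mul, Finsupp.sum, Finset.mul_sum]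
    refine Finset.sum_congr rfl fun k _ => ?_
    ring

section
variable [CompactSpace Y] [T2Space Y]

theorem lau_sep : (lauAlg Y).SeparatesPoints := by
  rintro ⟨y, z⟩ ⟨y', z'⟩ h
  by_cases hz : z = z'
  · have hy : y ≠ y' := fun e => h (by rw [e, hz])
    obtain ⟨f, hf⟩ := exists_continuous_zero_one_of_isClosed (isClosed_singleton (x := y))
      (isClosed_singleton (x := y')) (by simpa using hy)
    refine ⟨_, ⟨mono 0 ⟨fun y => (f y : ℂ), by fun_prop⟩, Submodule.subset_span ⟨(0, _), rfl⟩, rfl⟩, ?_⟩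
    have h1 : f y = 0 := hf.1 rfl
    have h2 : f y' = 1 := hf.2.1 rfl
    simp [mono, h1, h2]
  · refine ⟨_, ⟨mono 1 1, Submodule.subset_span ⟨(1, _), rfl⟩, rfl⟩, ?_⟩
    simpa [mono] using fun e => hz (Circle.coe_injective e)

theorem lau_approx (f : C(Y × Circle, ℂ)) {ε : ℝ} (hε : 0 < ε) :
    ∃ P : ℤ →₀ C(Y, ℂ), ∀ y z, ‖f (y, z) - P.sum fun k g => (z : ℂ) ^ k * g y‖ < ε := by
  have h1 := ContinuousMap.starSubalgebra_topologicalClosure_eq_top_of_separatesPoints (lauAlg Y) lau_sep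
  have h2 : f ∈ (lauAlg Y).topologicalClosure := by rw [h1]; trivial
  have h3 : f ∈ closure (lauAlg Y : Set C(Y × Circle, ℂ)) := h2
  obtain ⟨g, hg, hfg⟩ := Metric.mem_closure_iff.1 h3 ε hε
  obtain ⟨P, hP⟩ := lau_repr (f := g) hg
  refine ⟨P, fun y z => ?_⟩
  rw [← hP, ← dist_eq_norm]
  exact (ContinuousMap.dist_apply_le_dist _).trans_lt hfg

variable {ι : Type} [Fintype ι] [DecidableEq ι]

theorem lau_mat {f : Y × Circle → Matrix ι ι ℂ} (hf : Continuous f) {ε : ℝ} (hε : 0 < ε) :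
    ∃ (n : ℕ) (P : ℤ → Y → Matrix ι ι ℂ), (∀ k, Continuous (P k)) ∧
      ∀ y z i j, ‖(f (y, z) - ∑ k ∈ Finset.Icc (-n : ℤ) n, (z : ℂ) ^ k • P k y) i j‖ < ε := by
  have := fun i j => lau_approx (⟨fun p => f p i j, by fun_prop⟩ : C(Y × Circle, ℂ)) hε
  choose P hP using this
  let n : ℕ := ∑ i, ∑ j, ∑ k ∈ (P i j).support, k.natAbs
  have hn : ∀ i j, (P i j).support ⊆ Finset.Icc (-n : ℤ) n := by
    intro i j k hk
    have : k.natAbs ≤ n := by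
      refine (Finset.single_le_sum (f := fun k : ℤ => k.natAbs) (fun _ _ => Nat.zero_le _) hk).trans ?_
      refine (Finset.single_le_sum (f := fun j => ∑ k ∈ (P i j).support, k.natAbs)
        (fun _ _ => Nat.zero_le _) (Finset.mem_univ j)).trans ?_
      exact (Finset.single_le_sum (f := fun i => ∑ j, ∑ k ∈ (P i j).support, k.natAbs)
        (fun _ _ => Nat.zero_le _) (Finset.mem_univ i))
    rw [Finset.mem_Icc]; omega
  refine ⟨n, fun k y => of fun i j => P i j k y, fun k => continuous_matrix fun i j =>
    (P i j k).continuous, fun y z i j => ?_⟩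
  have := hP i j y z
  rw [Finsupp.sum_of_support_subset _ (hn i j) _ (by simp)] at this
  simpa [Matrix.sub_apply, Matrix.sum_apply] using this

end
end BottK

end

section
open Matrix
open scoped Kronecker TensorProduct unitInterval

namespace BottK
variable {X Y Z : Type} [TopologicalSpace X] [TopologicalSpace Y] [TopologicalSpace Z]
variable {ι κ : Type} [Fintype ι] [DecidableEq ι] [Fintype κ] [DecidableEq κ]

/-! ### Fourier coefficients of matrix valued functions -/

abbrev AC := AddCircle (1 : ℝ)

theorem fourierCoeff_inner (f : C(AC, ℂ)) (n : ℤ) : fourierCoeff f n =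
    inner ℂ (fourierBasis (T := 1) n)
      (ContinuousMap.toLp (E := ℂ) 2 (AddCircle.haarAddCircle (T := 1)) ℂ f) := by
  rw [← fourierCoeff_toLp, ← fourierBasis_repr, HilbertBasis.repr_apply_apply]

theorem fourierCoeff_cont {f : Y → AC → ℂ} (hf : Continuous fun p : Y × AC => f p.1 p.2) (n : ℤ) :
    Continuous fun y => fourierCoeff (f y) n := by
  let F : C(Y, C(AC, ℂ)) := ContinuousMap.curry ⟨fun p : Y × AC => f p.1 p.2, hf⟩
  have : (fun y => fourierCoeff (f y) n) = fun y => inner ℂ (fourierBasis (T := 1) n)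
      (ContinuousMap.toLp (E := ℂ) 2 (AddCircle.haarAddCircle (T := 1)) ℂ (F y)) := by
    funext y
    rw [← fourierCoeff_inner]
    rfl
  rw [this]
  exact continuous_const.inner ((ContinuousLinearMap.continuous _).comp F.continuous)

theorem fourierCoeff_tendsto {f : AC → ℂ} (hf : Continuous f) :
    Filter.Tendsto (fourierCoeff f) Filter.cofinite (nhds 0) := by
  have h := (hasSum_sq_fourierCoeff
    (ContinuousMap.toLp (E := ℂ) 2 (AddCircle.haarAddCircle (T := 1)) ℂ ⟨f, hf⟩)).summable
  simp_rw [fourierCoeff_toLp] at h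
  have h2 := h.tendsto_cofinite_zero
  have h3 := (Real.continuous_sqrt.tendsto 0).comp h2
  rw [tendsto_zero_iff_norm_tendsto_zero]
  simpa [Function.comp_def, Real.sqrt_sq (norm_nonneg _)] using h3

theorem cont_int {f : AC → ℂ} (hf : Continuous f) :
    MeasureTheory.Integrable f (AddCircle.haarAddCircle (T := 1)) :=
  hf.integrable_of_hasCompactSupport (HasCompactSupport.of_compactSpace f)

noncomputable def mfc (G : AC → Matrix ι κ ℂ) (k : ℤ) : Matrix ι κ ℂ :=
  of fun i j => fourierCoeff (fun θ => G θ i j) k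

theorem mfc_sum {τ : Type} (s : Finset τ) (G : τ → AC → Matrix ι κ ℂ) (hG : ∀ r, Continuous (G r))
    (k : ℤ) : mfc (fun θ => ∑ r ∈ s, G r θ) k = ∑ r ∈ s, mfc (G r) k := by
  ext i j
  simp only [mfc, of_apply, Matrix.sum_apply]
  have := congrFun (fourierCoeff.sum s (fun r θ => G r θ i j)
    (fun r _ => cont_int ((hG r).matrix_elem i j))) k
  rw [Finset.sum_apply] at this
  rw [← this]
  congr 1
  funext θ
  simp

theorem mfc_mul_left (A : Matrix ι ι ℂ) {G : AC → Matrix ι κ ℂ} (hG : Continuous G) (k : ℤ) :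
    mfc (fun θ => A * G θ) k = A * mfc G k := by
  ext i j
  simp only [mfc, of_apply, Matrix.mul_apply]
  simp_rw [← fourierCoeff.const_mul]
  have := congrFun (fourierCoeff.sum Finset.univ (fun l θ => A i l * G θ l j)
    (fun r _ => cont_int (continuous_const.mul (hG.matrix_elem r j)))) k
  rw [Finset.sum_apply] at this
  rw [← this]
  congr 1
  funext θ
  simp

theorem mfc_mul_right (A : Matrix κ κ ℂ) {G : AC → Matrix ι κ ℂ} (hG : Continuous G) (k : ℤ) :
    mfc (fun θ => G θ * A) k = mfc G k * A := by
  ext i j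
  simp only [mfc, of_apply, Matrix.mul_apply]
  simp_rw [mul_comm _ (A _ j), ← fourierCoeff.const_mul]
  have := congrFun (fourierCoeff.sum Finset.univ (fun l θ => A l j * G θ i l)
    (fun r _ => cont_int (continuous_const.mul (hG.matrix_elem i r)))) k
  rw [Finset.sum_apply] at this
  rw [← this]
  congr 1
  funext θ
  simp

theorem mfc_shift (G : AC → Matrix ι κ ℂ) (r : ℕ) (k : ℤ) :
    mfc (fun θ => (AddCircle.toCircle θ : ℂ) ^ r • G θ) k = mfc G (k - r) := by
  ext i j
  simp only [mfc, of_apply, fourierCoeff]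
  congr 1
  funext θ
  rw [show -(k - r : ℤ) = -k + r by ring, fourier_add]
  simp only [Matrix.smul_apply, smul_eq_mul]
  rw [show fourier (r : ℤ) θ = (AddCircle.toCircle θ : ℂ) ^ r by
    rw [fourier_apply, AddCircle.toCircle_zsmul]; simp]
  ring

theorem mfc_one (k : ℤ) : mfc (fun _ => (1 : Matrix ι ι ℂ)) k = if k = 0 then 1 else 0 := by
  have h : ∀ c : ℂ, fourierCoeff (fun _ : AC => c) k = c * (if k = 0 then 1 else 0) := by
    intro c
    have h1 := fourierCoeff.const_mul (fourier (T := 1) 0) c k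
    rw [fourierCoeff_fourier] at h1
    simpa [Pi.single_apply] using h1
  ext i j
  simp only [mfc, of_apply, h]
  split_ifs <;> simp

/-- Fourier coefficients of the inverse loop -/
noncomputable def fc (f : Y × Circle → Matrix ι ι ℂ) (k : ℤ) (y : Y) : Matrix ι ι ℂ :=
  mfc (fun θ => (f (y, AddCircle.toCircle θ))⁻¹) k

theorem cont_toCircle : Continuous fun θ : AC => AddCircle.toCircle θ := AddCircle.continuous_toCircle

theorem fc_cont {f : Y × Circle → Matrix ι ι ℂ} (hf : GLf f) (k : ℤ) : Continuous (fc f k) := by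
  refine continuous_matrix fun i j => ?_
  refine fourierCoeff_cont (f := fun y θ => (f (y, AddCircle.toCircle θ))⁻¹ i j) ?_ k
  exact (hf.inv.1.comp (continuous_fst.prodMk (cont_toCircle.comp continuous_snd))).matrix_elem i j

theorem fc_cont' {f : Y × Circle → Matrix ι ι ℂ} (hf : GLf f) (y : Y) :
    Continuous fun θ : AC => (f (y, AddCircle.toCircle θ))⁻¹ :=
  hf.inv.1.comp (continuous_const.prodMk cont_toCircle)

theorem fc_tendsto {f : Y × Circle → Matrix ι ι ℂ} (hf : GLf f) (y : Y) :
    Filter.Tendsto (fun k => fc f k y) Filter.cofinite (nhds 0) := by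
  refine tendsto_pi_nhds.2 fun i => tendsto_pi_nhds.2 fun j => ?_
  exact fourierCoeff_tendsto ((fc_cont' hf y).matrix_elem i j)

/-- polynomial loops -/
def pl (m : ℕ) (q : ℕ → Y → Matrix ι ι ℂ) (p : Y × Circle) : Matrix ι ι ℂ :=
  ∑ k ∈ Finset.range (m + 1), (p.2 : ℂ) ^ k • q k p.1

theorem fc_left {m : ℕ} {q : ℕ → Y → Matrix ι ι ℂ} (hf : GLf (pl m q)) (k : ℤ) (y : Y) :
    ∑ r ∈ Finset.range (m + 1), q r y * fc (pl m q) (k - r) y = if k = 0 then 1 else 0 := by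
  have hc := fc_cont' hf y
  rw [← mfc_one]
  simp only [fc, ← mfc_mul_left _ hc]
  simp_rw [← mfc_shift]
  rw [← mfc_sum]
  · congr 1
    funext θ
    rw [← mul_nonsing_inv _ (hf.2 (y, AddCircle.toCircle θ))]
    nth_rw 2 [pl]
    rw [Finset.sum_mul]
    simp
  · intro r
    exact ((continuous_subtype_val.comp cont_toCircle).pow r).smul (continuous_const.matrix_mul hc)

theorem fc_right {m : ℕ} {q : ℕ → Y → Matrix ι ι ℂ} (hf : GLf (pl m q)) (k : ℤ) (y : Y) :
    ∑ r ∈ Finset.range (m + 1), fc (pl m q) (k - r) y * q r y = if k = 0 then 1 else 0 := by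
  have hc := fc_cont' hf y
  rw [← mfc_one]
  simp only [fc, ← mfc_mul_right _ hc]
  simp_rw [← mfc_shift]
  rw [← mfc_sum]
  · congr 1
    funext θ
    rw [← nonsing_inv_mul _ (hf.2 (y, AddCircle.toCircle θ))]
    nth_rw 3 [pl]
    rw [Finset.mul_sum]
    simp
  · intro r
    exact ((continuous_subtype_val.comp cont_toCircle).pow r).smul (hc.matrix_mul continuous_const)

/-- abstract linear relations -/
structure Rel (a b : Matrix ι ι ℂ) (c : ℤ → Matrix ι ι ℂ) : Prop where
  l : ∀ k, a * c (k - 1) + b * c k = if k = 0 then 1 else 0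
  r : ∀ k, c (k - 1) * a + c k * b = if k = 0 then 1 else 0
  t : Filter.Tendsto c Filter.cofinite (nhds 0)

namespace Rel
variable {a b : Matrix ι ι ℂ} {c : ℤ → Matrix ι ι ℂ}


theorem tp (h : Rel a b c) : Filter.Tendsto (fun n : ℕ => c n) Filter.atTop (nhds 0) := by
  refine h.t.comp ?_
  rw [← Nat.cofinite_eq_atTop]
  exact Nat.cast_injective.tendsto_cofinite

theorem tm (h : Rel a b c) : Filter.Tendsto (fun n : ℕ => c (-2 - n)) Filter.atTop (nhds 0) := by
  refine h.t.comp ?_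
  rw [← Nat.cofinite_eq_atTop]
  exact Function.Injective.tendsto_cofinite (f := fun n : ℕ => (-2 - n : ℤ))
    (fun a b hab => by simpa using hab)

theorem l0 (h : Rel a b c) {k : ℤ} (hk : k ≠ 0) : b * c k = - (a * c (k - 1)) := by
  have := h.l k
  rw [if_neg hk] at this
  exact eq_neg_of_add_eq_zero_right this

theorem r0 (h : Rel a b c) {k : ℤ} (hk : k ≠ 0) : c k * b = - (c (k - 1) * a) := by
  have := h.r k
  rw [if_neg hk] at this
  exact eq_neg_of_add_eq_zero_right this

theorem zero_aux (h : Rel a b c) (n : ℕ) : a * c 0 * a * c (-2) = a * c n * a * c (-2 - n) := by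
  induction n with
  | zero => simp
  | succ n ih =>
    rw [ih]
    have e1 := h.r0 (k := n + 1) (by omega)
    have e2 := h.l0 (k := -2 - n) (by omega)
    rw [add_sub_cancel_right] at e1
    push_cast
    rw [show (-2 - (n + 1) : ℤ) = -2 - n - 1 by ring, Matrix.mul_assoc a, Matrix.mul_assoc (a * c (n + 1))]
    rw [← neg_eq_iff_eq_neg.2 e1, ← neg_eq_iff_eq_neg.2 e2]
    simp only [Matrix.mul_neg, Matrix.neg_mul, Matrix.mul_assoc]

theorem zero (h : Rel a b c) : a * c 0 * a * c (-2) = 0 := by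
  have h1 : Filter.Tendsto (fun n : ℕ => a * c n * a * c (-2 - n)) Filter.atTop (nhds (a * 0 * a * 0)) := by
    have hc : Continuous fun p : Matrix ι ι ℂ × Matrix ι ι ℂ => a * p.1 * a * p.2 := by fun_prop
    have h2 := (hc.tendsto ((0 : Matrix ι ι ℂ), (0 : Matrix ι ι ℂ)))
    have h3 := h.tp.prodMk_nhds h.tm
    exact Filter.Tendsto.comp (g := fun p : Matrix ι ι ℂ × Matrix ι ι ℂ => a * p.1 * a * p.2)
      (f := fun n : ℕ => (c n, c (-2 - n))) h2 h3
  rw [Matrix.mul_zero] at h1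
  refine tendsto_nhds_unique ?_ h1
  simp only [← h.zero_aux]
  exact tendsto_const_nhds

theorem idemK (h : Rel a b c) : a * c (-1) * (a * c (-1)) = a * c (-1) := by
  have e1 := h.r 0
  rw [if_pos rfl, zero_sub] at e1
  have e1 : c (-1) * a = 1 - c 0 * b := eq_sub_of_add_eq e1
  have e2 := h.l0 (k := -1) (by omega)
  rw [Matrix.mul_assoc, ← Matrix.mul_assoc (c (-1)), e1, Matrix.sub_mul, Matrix.mul_assoc, e2]
  have := h.zero
  simp only [Matrix.mul_assoc] at this
  norm_num [Matrix.mul_sub, Matrix.mul_add, this]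

theorem tr (h : Rel a b c) : Rel aᵀ bᵀ (fun k => (c k)ᵀ) where
  l := fun k => by
    have := congrArg Matrix.transpose (h.r k)
    rw [transpose_add, transpose_mul, transpose_mul] at this
    rw [this]
    split_ifs <;> simp
  r := fun k => by
    have := congrArg Matrix.transpose (h.l k)
    rw [transpose_add, transpose_mul, transpose_mul] at this
    rw [this]
    split_ifs <;> simp
  t := by
    have h1 : Continuous fun M : Matrix ι ι ℂ => Mᵀ := by fun_prop
    have h2 := h1.tendsto 0
    rw [transpose_zero] at h2
    exact Filter.Tendsto.comp (g := fun M : Matrix ι ι ℂ => Mᵀ) h2 h.t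

theorem idemQ (h : Rel a b c) : c (-1) * a * (c (-1) * a) = c (-1) * a := by
  have := h.tr.idemK
  rw [← transpose_mul, ← transpose_mul] at this
  exact transpose_injective this

theorem bQ (h : Rel a b c) : b * (c (-1) * a) = a * c (-1) * b := by
  have e1 := h.l0 (k := -1) (by omega)
  have e2 := h.r0 (k := -1) (by omega)
  rw [← Matrix.mul_assoc, e1, Matrix.mul_assoc, e2]
  simp [Matrix.mul_assoc]

end Rel
end BottK

end

section
open Matrix
open scoped Kronecker TensorProduct unitInterval

namespace BottK
variable {X Y Z : Type} [TopologicalSpace X] [TopologicalSpace Y] [TopologicalSpace Z]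
variable {ι κ : Type} [Fintype ι] [DecidableEq ι] [Fintype κ] [DecidableEq κ]

theorem vec_zero_of_tendsto {u w : ι → ℂ} {s : ℂ} (hs : ‖s‖ ≤ 1) {d : ℕ → Matrix ι ι ℂ}
    (hd : Filter.Tendsto d Filter.atTop (nhds 0)) (h : ∀ j, u = s ^ j • (d j *ᵥ w)) : u = 0 := by
  have hc : Continuous fun M : Matrix ι ι ℂ => ‖M *ᵥ w‖ := by fun_prop
  have h1 : Filter.Tendsto (fun j => ‖d j *ᵥ w‖) Filter.atTop (nhds 0) := by
    have := hc.tendsto 0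
    simp only [zero_mulVec, norm_zero] at this
    exact Filter.Tendsto.comp (g := fun M : Matrix ι ι ℂ => ‖M *ᵥ w‖) this hd
  have h2 : ‖u‖ ≤ 0 := by
    refine ge_of_tendsto' h1 fun j => ?_
    rw [h j, norm_smul, norm_pow]
    exact mul_le_of_le_one_left (norm_nonneg _) (pow_le_one₀ (norm_nonneg _) hs)
  simpa using h2

namespace Rel
variable {a b : Matrix ι ι ℂ} {c : ℤ → Matrix ι ι ℂ}

theorem inj1 (h : Rel a b c) {s : ℂ} (hs : ‖s‖ ≤ 1) {u : ι → ℂ} (hu : (c (-1) * a) *ᵥ u = u)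
    (e : a *ᵥ u = -s • b *ᵥ u) : u = 0 := by
  refine vec_zero_of_tendsto (w := -b *ᵥ u) (s := s) hs (d := fun j => s • c (-1 - j)) ?_ ?_
  · have h1 : Filter.Tendsto (fun n : ℕ => c (-1 - n)) Filter.atTop (nhds 0) := by
      refine h.t.comp ?_
      rw [← Nat.cofinite_eq_atTop]
      exact Function.Injective.tendsto_cofinite (f := fun n : ℕ => (-1 - n : ℤ))
        (fun a b hab => by simpa using hab)
    simpa using h1.const_smul s
  · intro j
    induction j with
    | zero =>
      simp only [pow_zero, one_smul, Nat.cast_zero, sub_zero]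
      nth_rw 1 [← hu]
      rw [← mulVec_mulVec, e]
      simp [mulVec_smul, smul_mulVec, neg_mulVec, mulVec_neg]
    | succ j ih =>
      nth_rw 1 [ih]
      have := h.r0 (k := -1 - j) (by omega)
      have h2 : c (-1 - j) *ᵥ (b *ᵥ u) = s • c (-1 - j - 1) *ᵥ (b *ᵥ u) := by
        rw [mulVec_mulVec, this, neg_mulVec, ← mulVec_mulVec, e, mulVec_smul, neg_smul, neg_neg]
      push_cast
      rw [show (-1 - (j + 1) : ℤ) = -1 - j - 1 by ring]
      simp only [neg_mulVec, mulVec_neg, smul_mulVec, smul_neg, h2, smul_smul]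
      congr 2
      ring

theorem inj2 (h : Rel a b c) {s : ℂ} (hs : ‖s‖ ≤ 1) {u : ι → ℂ} (hu : (c (-1) * a) *ᵥ u = 0)
    (e : b *ᵥ u = -s • a *ᵥ u) : u = 0 := by
  have hu' : c 0 *ᵥ (b *ᵥ u) = u := by
    have := h.r 0
    rw [if_pos rfl, zero_sub] at this
    have := congrArg (· *ᵥ u) this
    simpa [add_mulVec, hu] using this
  refine vec_zero_of_tendsto (w := b *ᵥ u) (s := s) hs h.tp ?_
  intro j
  induction j with
  | zero => simp [hu']
  | succ j ih =>
    nth_rw 1 [ih]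
    have := h.r0 (k := j + 1) (by omega)
    rw [add_sub_cancel_right] at this
    have h2 : c j *ᵥ (b *ᵥ u) = s • c (j + 1) *ᵥ (b *ᵥ u) := by
      rw [mulVec_mulVec _ (c (j + 1)), this, neg_mulVec, ← mulVec_mulVec, e, mulVec_smul, neg_smul, smul_neg]
    rw [h2, smul_smul, pow_succ]
    simp

theorem unit (h : Rel a b c) {t z : ℂ} (ht : ‖t‖ ≤ 1) (hz : ‖z‖ = 1) :
    IsUnit ((z • a + t • b) * (c (-1) * a) + ((t * z) • a + b) * (1 - c (-1) * a)).det := by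
  rw [isUnit_iff_ne_zero]
  intro h0
  obtain ⟨v, hv, hM⟩ := exists_mulVec_eq_zero_iff.2 h0
  apply hv
  have hQ := h.idemQ
  have hK := h.idemK
  have hbQ := h.bQ
  have haQ : a * (c (-1) * a) = a * c (-1) * a := (Matrix.mul_assoc _ _ _).symm
  set Q := c (-1) * a with hQd
  set K := a * c (-1) with hKd
  have hKM : K * ((z • a + t • b) * Q + ((t * z) • a + b) * (1 - Q)) = (z • a + t • b) * Q := by
    have e1 : K * a = a * Q := haQ.symm
    have e2 : K * b = b * Q := hbQ.symm
    simp only [Matrix.mul_add, ← Matrix.mul_assoc, Matrix.mul_smul, e1, e2]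
    simp only [Matrix.add_mul, Matrix.mul_assoc, Matrix.mul_smul, Matrix.smul_mul, hQ, Matrix.mul_sub, Matrix.mul_one]
    simp
  have E1 : ((z • a + t • b) * Q) *ᵥ v = 0 := by
    rw [← hKM, ← mulVec_mulVec, hM, mulVec_zero]
  have E2 : (((t * z) • a + b) * (1 - Q)) *ᵥ v = 0 := by
    have := hM
    rwa [add_mulVec, E1, zero_add] at this
  have hz0 : z ≠ 0 := by rintro rfl; simp at hz
  have u1 : Q *ᵥ v = 0 := by
    refine h.inj1 (s := t * z⁻¹) (by simpa [hz] using ht) ?_ ?_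
    · rw [mulVec_mulVec, ← hQd, hQ]
    · rw [← mulVec_mulVec, add_mulVec, smul_mulVec, smul_mulVec] at E1
      have := congrArg (fun w => z⁻¹ • w) (eq_neg_of_add_eq_zero_left E1)
      simp only [smul_smul, inv_mul_cancel₀ hz0, one_smul] at this
      rw [this, ← smul_neg, smul_smul, mul_comm t, smul_neg, neg_smul]
  have u2 : (1 - Q) *ᵥ v = 0 := by
    refine h.inj2 (s := t * z) (by simpa [hz] using ht) ?_ ?_
    · rw [mulVec_mulVec, ← hQd, Matrix.mul_sub, hQ]; simp
    · rw [← mulVec_mulVec, add_mulVec, smul_mulVec] at E2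
      rw [eq_neg_of_add_eq_zero_right E2, neg_smul]
  rw [sub_mulVec, u1] at u2
  simpa using u2

end Rel

theorem relOf {q : ℕ → Y → Matrix ι ι ℂ} (hf : GLf (pl 1 q)) (y : Y) :
    Rel (q 1 y) (q 0 y) (fun k => fc (pl 1 q) k y) where
  l := fun k => by
    have := fc_left hf k y
    simpa [Finset.sum_range_succ, add_comm] using this
  r := fun k => by
    have := fc_right hf k y
    simpa [Finset.sum_range_succ, add_comm] using this
  t := fc_tendsto hf y

theorem gcl_linear [CompactSpace X] [T2Space X] {q : ℕ → X → Matrix ι ι ℂ} (hq : ∀ k, Continuous (q k))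
    (hf : GLf (pl 1 q)) :
    ∃ a : Bun X, gcl (pl 1 q) = VB.pull prS (VB.mk a) * VB.H X + VB.pull prS (VB.mk a.compl) := by
  let c := fun y k => fc (pl 1 q) k y
  let Q : X → Matrix ι ι ℂ := fun x => c x (-1) * q 1 x
  have hQc : Continuous Q := (fc_cont hf (-1)).matrix_mul (hq 1)
  let a : Bun X := ⟨ι, Q, hQc, fun x => (relOf hf x).idemQ⟩
  refine ⟨a, ?_⟩
  obtain ⟨ha, hag⟩ := gcl_idem a
  rw [← hag]
  let F : (X × I) × Circle → Matrix ι ι ℂ := fun p =>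
    (((p.2 : ℂ)) • q 1 p.1.1 + ((p.1.2 : ℝ) : ℂ) • q 0 p.1.1) * Q p.1.1 +
      ((((p.1.2 : ℝ) : ℂ) * p.2) • q 1 p.1.1 + q 0 p.1.1) * (1 - Q p.1.1)
  have hF : GLf F := by
    constructor
    · have h0 := hq 0
      have h1 := hq 1
      fun_prop
    · intro p
      refine (relOf hf p.1.1).unit ?_ ?_
      · rw [Complex.norm_real, Real.norm_eq_abs, abs_le]
        exact ⟨by linarith [p.1.2.2.1], p.1.2.2.2⟩
      · exact Circle.norm_coe p.2
  have h := gcl_homotopy hF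
  have e1 : (fun p : X × Circle => F ((p.1, 1), p.2)) = pl 1 q := by
    funext p
    simp only [F, pl, Finset.sum_range_succ]
    simp only [Set.Icc.coe_one, Complex.ofReal_one, one_smul, one_mul, Matrix.mul_sub, Matrix.mul_one]
    simp [add_comm]
  rw [← e1, ← h]
  have hN : GLf fun x : X => F ((x, 0), 1) := hF.comp (by fun_prop)
  rw [← gcl_const_mul ha hN GLf.one]
  congr 1
  funext p
  have hQ : Q p.1 * Q p.1 = Q p.1 := (relOf hf p.1).idemQ
  simp only [F, a, Matrix.mul_one, Circle.coe_one, Set.Icc.coe_zero, Complex.ofReal_zero, zero_smul,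
    one_smul, zero_mul, zero_add, add_zero]
  simp only [Matrix.mul_add, Matrix.add_mul, Matrix.mul_smul, Matrix.mul_assoc, Matrix.mul_sub,
    Matrix.mul_one, Matrix.sub_mul, Matrix.one_mul, hQ, Matrix.smul_mul]
  simp

end BottK

end

section
open Matrix
open scoped Kronecker TensorProduct unitInterval

namespace BottK
variable {X Y Z : Type} [TopologicalSpace X] [TopologicalSpace Y] [TopologicalSpace Z]
variable {ι κ : Type} [Fintype ι] [DecidableEq ι] [Fintype κ] [DecidableEq κ]

theorem GLf.perturb [CompactSpace Y] {F : Y → Matrix ι ι ℂ} (hF : GLf F) :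
    ∃ ε : ℝ, 0 < ε ∧ ∀ p M, (∀ i j, ‖(F p - M) i j‖ < ε) → IsUnit M.det := by
  let F' : Y → ι → ι → ℂ := fun p => F p
  have hF' : Continuous F' := hF.1
  have hdet : Continuous fun M : ι → ι → ℂ => det (M : Matrix ι ι ℂ) :=
    Continuous.matrix_det (A := fun M : ι → ι → ℂ => (M : Matrix ι ι ℂ)) continuous_id
  obtain ⟨δ, hδ, h⟩ := (isCompact_range hF').exists_thickening_subset_open
    (isOpen_ne.preimage hdet : IsOpen {M : ι → ι → ℂ | det (M : Matrix ι ι ℂ) ≠ 0})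
    (by rintro _ ⟨p, rfl⟩; exact (hF.2 p).ne_zero)
  refine ⟨δ, hδ, fun p M hM => ?_⟩
  let M' : ι → ι → ℂ := fun i j => M i j
  suffices hh : dist M' (F' p) < δ from
    isUnit_iff_ne_zero.2 (h (Metric.mem_thickening_iff.2 ⟨F' p, ⟨p, rfl⟩, hh⟩))
  rw [dist_comm, dist_pi_lt_iff hδ]
  intro i
  rw [dist_pi_lt_iff hδ]
  intro j
  rw [dist_eq_norm]
  exact hM i j

/-- Laurent polynomial loops -/
noncomputable def lp (n : ℕ) (P : ℤ → Y → Matrix ι ι ℂ) (p : Y × Circle) : Matrix ι ι ℂ :=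
  ∑ k ∈ Finset.Icc (-n : ℤ) n, (p.2 : ℂ) ^ k • P k p.1

theorem cont_zpow (k : ℤ) : Continuous fun z : Circle => (z : ℂ) ^ k :=
  (continuous_subtype_val (p := fun z : ℂ => z ∈ Submonoid.unitSphere ℂ)).zpow₀ k
    fun z => Or.inl (Circle.coe_ne_zero z)

theorem lp_cont (n : ℕ) {P : ℤ → Y → Matrix ι ι ℂ} (hP : ∀ k, Continuous (P k)) :
    Continuous (lp n P) := by
  unfold lp
  refine continuous_finset_sum _ fun k _ => ?_
  exact ((cont_zpow k).comp continuous_snd).smul ((hP k).comp continuous_fst)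

noncomputable def trunc (n : ℕ) (P : ℤ → Y → Matrix ι ι ℂ) (k : ℤ) (y : Y) : Matrix ι ι ℂ :=
  if k ∈ Finset.Icc (-n : ℤ) n then P k y else 0

theorem trunc_cont (n : ℕ) {P : ℤ → Y → Matrix ι ι ℂ} (hP : ∀ k, Continuous (P k)) (k : ℤ) :
    Continuous (trunc n P k) := by
  unfold trunc
  split_ifs
  · exact hP k
  · exact continuous_const

theorem lp_trunc {n m : ℕ} (h : n ≤ m) (P : ℤ → Y → Matrix ι ι ℂ) : lp m (trunc n P) = lp n P := by
  funext p
  unfold lp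
  symm
  refine Finset.sum_subset_zero_on_sdiff (Finset.Icc_subset_Icc (by omega) (by omega)) ?_ ?_
  · intro k hk
    rw [trunc, if_neg (Finset.mem_sdiff.1 hk).2, smul_zero]
  · intro k hk
    rw [trunc, if_pos hk]

theorem lp_pl (n : ℕ) (P : ℤ → Y → Matrix ι ι ℂ) (p : Y × Circle) :
    (p.2 : ℂ) ^ n • lp n P p = pl (2 * n) (fun k => P (k - n)) p := by
  unfold lp pl
  rw [Finset.smul_sum]
  symm
  refine Finset.sum_bij (fun k _ => (k : ℤ) - n) ?_ ?_ ?_ ?_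
  · intro k hk
    simp at hk ⊢
    omega
  · intro a _ b _ h
    simpa using h
  · intro k hk
    simp at hk
    exact ⟨(k + n).toNat, by simp; omega, by omega⟩
  · intro k hk
    rw [smul_smul, zpow_sub₀ (Circle.coe_ne_zero _)]
    simp only [zpow_natCast]
    congr 1
    field_simp [Circle.coe_ne_zero p.2]

theorem approx1 [CompactSpace X] [T2Space X] {f : X × Circle → Matrix ι ι ℂ} (hf : GLf f) :
    ∃ (n : ℕ) (P : ℤ → X → Matrix ι ι ℂ), (∀ k, Continuous (P k)) ∧ GLf (lp n P) ∧ 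
      gcl f = gcl (lp n P) := by
  obtain ⟨ε, hε, h⟩ := hf.perturb
  obtain ⟨n, P, hP, hd⟩ := lau_mat hf.1 hε
  have hc := lp_cont n hP
  have hF : GLf fun p : (X × I) × Circle => f (p.1.1, p.2) +
      ((p.1.2 : ℝ) : ℂ) • (lp n P (p.1.1, p.2) - f (p.1.1, p.2)) := by
    refine ⟨by have := hf.1; fun_prop, fun p => h (p.1.1, p.2) _ fun i j => ?_⟩
    refine lt_of_le_of_lt ?_ (hd p.1.1 p.2 i j)
    change ‖(f (p.1.1, p.2) - (f (p.1.1, p.2) +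
      ((p.1.2 : ℝ) : ℂ) • (lp n P (p.1.1, p.2) - f (p.1.1, p.2)))) i j‖ ≤ ‖(f (p.1.1, p.2) - lp n P (p.1.1, p.2)) i j‖
    rw [sub_add_cancel_left, ← smul_neg, neg_sub, Matrix.smul_apply, norm_smul, Complex.norm_real,
      Real.norm_of_nonneg p.1.2.2.1]
    exact mul_le_of_le_one_left (norm_nonneg _) p.1.2.2.2
  have h2 := gcl_homotopy hF
  simp only [Set.Icc.coe_zero, Complex.ofReal_zero, zero_smul, add_zero, Set.Icc.coe_one,
    Complex.ofReal_one, one_smul, add_sub_cancel] at h2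
  refine ⟨n, P, hP, ?_, h2⟩
  have := hF.comp (g := fun p : X × Circle => ((p.1, 1), p.2)) (by fun_prop)
  simpa using this

theorem approx2 [CompactSpace X] [T2Space X] {F : (X × I) × Circle → Matrix ι ι ℂ} (hf : GLf F)
    {n : ℕ} {A B : ℤ → X → Matrix ι ι ℂ} (hA : ∀ k, Continuous (A k)) (hB : ∀ k, Continuous (B k))
    (h0 : ∀ x z, F ((x, 0), z) = lp n A (x, z)) (h1 : ∀ x z, F ((x, 1), z) = lp n B (x, z)) :
    ∃ (m : ℕ) (P : ℤ → X × I → Matrix ι ι ℂ), n ≤ m ∧ (∀ k, Continuous (P k)) ∧ GLf (lp m P) ∧ 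
      (∀ k x, P k (x, 0) = trunc n A k x) ∧ ∀ k x, P k (x, 1) = trunc n B k x := by
  obtain ⟨ε, hε, h⟩ := hf.perturb
  obtain ⟨r, L, hL, hd⟩ := lau_mat hf.1 (half_pos hε)
  let m := n + r
  have hLc := lp_cont r hL
  have hAc := trunc_cont n hA
  have hBc := trunc_cont n hB
  have hLt := trunc_cont r hL
  let P : ℤ → X × I → Matrix ι ι ℂ := fun k y => trunc r L k y +
    (1 - ((y.2 : ℝ) : ℂ)) • (trunc n A k y.1 - trunc r L k (y.1, 0)) +
    ((y.2 : ℝ) : ℂ) • (trunc n B k y.1 - trunc r L k (y.1, 1))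
  have hPc : ∀ k, Continuous (P k) := by
    intro k
    have := hAc k
    have := hBc k
    have := hLt k
    fun_prop
  have hPe : ∀ y z, lp m P (y, z) = lp r L (y, z) +
    (1 - ((y.2 : ℝ) : ℂ)) • (lp n A (y.1, z) - lp r L ((y.1, 0), z)) +
    ((y.2 : ℝ) : ℂ) • (lp n B (y.1, z) - lp r L ((y.1, 1), z)) := by
    intro y z
    rw [← lp_trunc (show r ≤ m by omega), ← lp_trunc (show n ≤ m by omega) A,
      ← lp_trunc (show n ≤ m by omega) B]
    simp only [lp, P, ← Finset.sum_sub_distrib, Finset.smul_sum, ← Finset.sum_add_distrib]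
    refine Finset.sum_congr rfl fun k _ => ?_
    simp only [smul_add, smul_sub, smul_comm ((z : ℂ) ^ k)]
  refine ⟨m, P, by omega, hPc, ⟨lp_cont m hPc, ?_⟩, ?_, ?_⟩
  · rintro ⟨y, z⟩
    refine h (y, z) _ fun i j => ?_
    rw [hPe, ← h0, ← h1]
    have e : (F (y, z) - (lp r L (y, z) +
      (1 - ((y.2 : ℝ) : ℂ)) • (F ((y.1, 0), z) - lp r L ((y.1, 0), z)) +
      ((y.2 : ℝ) : ℂ) • (F ((y.1, 1), z) - lp r L ((y.1, 1), z)))) i j =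
      (F (y, z) - lp r L (y, z)) i j - ((1 - (y.2 : ℝ) : ℝ) : ℂ) * (F ((y.1, 0), z) - lp r L ((y.1, 0), z)) i j
      - ((y.2 : ℝ) : ℂ) * (F ((y.1, 1), z) - lp r L ((y.1, 1), z)) i j := by
      simp; ring
    rw [e]
    have d1 : ‖(F (y, z) - lp r L (y, z)) i j‖ < ε / 2 := hd y z i j
    have d2 : ‖(F ((y.1, 0), z) - lp r L ((y.1, 0), z)) i j‖ < ε / 2 := hd (y.1, 0) z i j
    have d3 : ‖(F ((y.1, 1), z) - lp r L ((y.1, 1), z)) i j‖ < ε / 2 := hd (y.1, 1) z i j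
    refine lt_of_le_of_lt ((norm_sub_le _ _).trans (add_le_add_left (norm_sub_le _ _) _)) ?_
    rw [norm_mul, norm_mul, Complex.norm_real, Complex.norm_real,
      Real.norm_of_nonneg y.2.2.1, Real.norm_of_nonneg (by linarith [y.2.2.2])]
    have t0 := y.2.2.1
    have t1 := y.2.2.2
    nlinarith [mul_le_mul_of_nonneg_left d2.le (show 0 ≤ 1 - (y.2 : ℝ) by linarith),
      mul_le_mul_of_nonneg_left d3.le t0]
  · intro k x
    simp [P]
  · intro k x
    simp [P]

end BottK

end

section
open Matrix
open scoped Kronecker TensorProduct unitInterval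

namespace BottK
variable {X Y Z : Type} [TopologicalSpace X] [TopologicalSpace Y] [TopologicalSpace Z]
variable {ι κ : Type} [Fintype ι] [DecidableEq ι] [Fintype κ] [DecidableEq κ]

theorem pl_cont (n : ℕ) {P : ℕ → Y → Matrix ι ι ℂ} (hP : ∀ k, Continuous (P k)) :
    Continuous (pl n P) := by
  unfold pl
  refine continuous_finset_sum _ fun k _ => ?_
  have := hP k
  fun_prop

/-- degree reduction -/
def red (q : ℕ → X → Matrix ι ι ℂ) (k : ℕ) (x : X) : Matrix (ι ⊕ ι) (ι ⊕ ι) ℂ :=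
  fromBlocks (if k = 0 then q 0 x else 0) (q (k + 1) x) (if k = 1 then -1 else 0) (if k = 0 then 1 else 0)

theorem red_cont {q : ℕ → X → Matrix ι ι ℂ} (hq : ∀ k, Continuous (q k)) (k : ℕ) :
    Continuous (red q k) := by
  refine Continuous.matrix_fromBlocks ?_ (hq _) continuous_const continuous_const
  split_ifs
  · exact hq 0
  · exact continuous_const

theorem red_pl (m : ℕ) (q : ℕ → X → Matrix ι ι ℂ) (p : X × Circle) :
    fromBlocks 1 (pl (m + 1) (fun k => q (k + 1)) p) 0 1 * fromBlocks (pl (m + 2) q p) 0 0 1 *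
      fromBlocks 1 0 (-(p.2 : ℂ) • 1) 1 = pl (m + 1) (red q) p := by
  have h : pl (m + 2) q p = q 0 p.1 + (p.2 : ℂ) • pl (m + 1) (fun k => q (k + 1)) p := by
    unfold pl
    rw [Finset.sum_range_succ', Finset.smul_sum, add_comm]
    congr 1
    · simp
    · simp only [smul_smul, pow_succ']
  have h2 : pl (m + 1) (red q) p = fromBlocks (q 0 p.1) (pl (m + 1) (fun k => q (k + 1)) p)
      (-(p.2 : ℂ) • 1) 1 := by
    unfold pl red
    simp only [fromBlocks_smul]
    rw [show ∀ (s : Finset ℕ) (f1 f2 f3 f4 : ℕ → Matrix ι ι ℂ), ∑ k ∈ s, fromBlocks (f1 k) (f2 k) (f3 k) (f4 k)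
      = fromBlocks (∑ k ∈ s, f1 k) (∑ k ∈ s, f2 k) (∑ k ∈ s, f3 k) (∑ k ∈ s, f4 k) from fun s f1 f2 f3 f4 => by
        ext (i | i) (j | j) <;> simp [Matrix.sum_apply]]
    congr 1
    · simp
    · simp
    · simp
  rw [h2, h]
  simp [fromBlocks_multiply]

theorem gcl_red [CompactSpace X] [T2Space X] {m : ℕ} {q : ℕ → X → Matrix ι ι ℂ}
    (hq : ∀ k, Continuous (q k)) (h : GLf (pl (m + 2) q)) :
    GLf (pl (m + 1) (red q)) ∧ gcl (pl (m + 1) (red q)) = gcl (pl (m + 2) q) + Fintype.card ι := by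
  have hr : Continuous (pl (m + 1) (fun k => q (k + 1))) := pl_cont _ fun k => hq _
  have h1 : GLf fun p : X × Circle => fromBlocks (pl (m + 2) q p) 0 0 (1 : Matrix ι ι ℂ) :=
    h.fromBlocks GLf.one
  have hF : GLf fun p : (X × I) × Circle => 
    fromBlocks 1 (((p.1.2 : ℝ) : ℂ) • pl (m + 1) (fun k => q (k + 1)) (p.1.1, p.2)) 0 (1 : Matrix ι ι ℂ) *
      fromBlocks (pl (m + 2) q (p.1.1, p.2)) 0 0 (1 : Matrix ι ι ℂ) *
      fromBlocks 1 0 (((p.1.2 : ℝ) : ℂ) • -(p.2 : ℂ) • (1 : Matrix ι ι ℂ)) (1 : Matrix ι ι ℂ) := by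
    refine GLf.mul (GLf.mul ⟨?_, ?_⟩ (h1.comp (g := fun p : (X × I) × Circle => (p.1.1, p.2)) (by fun_prop))) ⟨?_, ?_⟩
    · exact Continuous.matrix_fromBlocks continuous_const (by fun_prop) continuous_const continuous_const
    · intro p; simp
    · exact Continuous.matrix_fromBlocks continuous_const continuous_const (by fun_prop) continuous_const
    · intro p; simp
  have h2 := gcl_homotopy hF
  simp only [Set.Icc.coe_zero, Complex.ofReal_zero, zero_smul, Set.Icc.coe_one,
    Complex.ofReal_one, one_smul, red_pl, fromBlocks_one, Matrix.one_mul, Matrix.mul_one] at h2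
  constructor
  · have := hF.comp (g := fun p : X × Circle => ((p.1, 1), p.2)) (by fun_prop)
    simpa only [Set.Icc.coe_one, Complex.ofReal_one, one_smul, red_pl] using this
  · rw [← h2, gcl_fromBlocks h GLf.one, gcl_one]

noncomputable def hh (X : Type) [TopologicalSpace X] : K0 (X × S2) := K0.of (VB.H X) - 1

theorem of_H : K0.of (VB.H X) = 1 + hh X := by simp [hh]
theorem of_H' : K0.of (VB.H' X) = 1 - hh X := by
  have := congrArg K0.of (H_add (X := X))
  rw [map_add, of_H] at this
  rw [eq_sub_iff_add_eq]
  rw [map_ofNat] at this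
  linear_combination this

theorem hh_sq : hh X * hh X = 0 := by
  have := congrArg K0.of (H_mul (X := X))
  rw [map_mul, of_H, of_H', map_one] at this
  linear_combination -this

def Img (X : Type) [TopologicalSpace X] : Set (K0 (X × S2)) :=
  {y | ∃ a b : K0 X, y = K0.pull prS a + K0.pull prS b * hh X}

theorem Img.add {y y' : K0 (X × S2)} (h : y ∈ Img X) (h' : y' ∈ Img X) : y + y' ∈ Img X := by
  obtain ⟨a, b, rfl⟩ := h
  obtain ⟨a', b', rfl⟩ := h'
  exact ⟨a + a', b + b', by simp only [map_add]; ring⟩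

theorem Img.sub {y y' : K0 (X × S2)} (h : y ∈ Img X) (h' : y' ∈ Img X) : y - y' ∈ Img X := by
  obtain ⟨a, b, rfl⟩ := h
  obtain ⟨a', b', rfl⟩ := h'
  exact ⟨a - a', b - b', by simp only [map_sub]; ring⟩

theorem Img.mul {y y' : K0 (X × S2)} (h : y ∈ Img X) (h' : y' ∈ Img X) : y * y' ∈ Img X := by
  obtain ⟨a, b, rfl⟩ := h
  obtain ⟨a', b', rfl⟩ := h'
  exact ⟨a * a', a * b' + b * a', by
    simp only [map_mul, map_add]
    linear_combination (K0.pull prS b * K0.pull prS b') * hh_sq (X := X)⟩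

theorem Img.pull (a : K0 X) : K0.pull prS a ∈ Img X := ⟨a, 0, by simp⟩
theorem Img.h : hh X ∈ Img X := ⟨0, 1, by simp⟩
theorem Img.one : 1 ∈ Img X := ⟨1, 0, by simp⟩

theorem Img.poly [CompactSpace X] [T2Space X] (m : ℕ) : ∀ {ι : Type} [Fintype ι] [DecidableEq ι]
    {q : ℕ → X → Matrix ι ι ℂ} (_ : ∀ k, Continuous (q k)) (_ : GLf (pl (m + 1) q)),
    K0.of (gcl (pl (m + 1) q)) ∈ Img X := by
  induction m with
  | zero =>
    intro ι _ _ q hq h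
    obtain ⟨a, ha⟩ := gcl_linear hq h
    rw [ha]
    simp only [map_add, map_mul, ← K0.pull_of]
    rw [of_H]
    exact Img.add (Img.mul (Img.pull _) (Img.add Img.one Img.h)) (Img.pull _)
  | succ m ih =>
    intro ι _ _ q hq h
    obtain ⟨h1, h2⟩ := gcl_red hq h
    have := ih (red_cont hq) h1
    rw [h2, map_add, map_natCast] at this
    have h3 : (Fintype.card ι : K0 (X × S2)) ∈ Img X := by
      rw [← map_natCast (K0.pull prS)]; exact Img.pull _
    simpa using Img.sub this h3

theorem Img.all [CompactSpace X] [T2Space X] (y : K0 (X × S2)) : y ∈ Img X := by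
  have key : ∀ a : VB (X × S2), K0.of a ∈ Img X := by
    intro a
    induction a using VB.ind with | _ A
    obtain ⟨B, ι, _, _, f, hf, e⟩ := gcl_surj A
    obtain ⟨n, P, hP, hL, e2⟩ := approx1 hf
    have hz : ∀ r : ℕ, GLf (fun p => (p.2 : ℂ) ^ r • lp n P p) ∧
        gcl (fun p => (p.2 : ℂ) ^ r • lp n P p) = gcl (lp n P) * VB.H X ^ r := by
      intro r
      induction r with
      | zero => simpa using hL
      | succ r ih =>
        have e3 := gcl_zs ih.1
        have e4 := ih.1.zs continuous_snd
        simp only [smul_smul, ← pow_succ'] at e3 e4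
        exact ⟨e4, by rw [e3, ih.2, mul_assoc, pow_succ]⟩
    obtain ⟨h1, h2⟩ := hz (n + 1)
    rw [← lp_trunc (Nat.le_succ n)] at h1 h2
    simp only [Nat.succ_eq_add_one, lp_pl] at h1 h2
    have h3 := Img.poly (2 * n + 1) (fun k => trunc_cont n hP _) h1
    have h4 : K0.of (gcl f) ∈ Img X := by
      have h5 : gcl f = gcl (pl (2 * n + 1 + 1) fun k => trunc n P (↑k - ↑(n + 1))) * VB.H' X ^ (n + 1) := by
        rw [e2, ← lp_trunc (Nat.le_succ n)]
        change _ = gcl (pl (2 * (n + 1)) fun k => trunc n P (↑k - ↑(n + 1))) * _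
        rw [h2, mul_assoc, ← mul_pow, H_mul, one_pow, mul_one]
      rw [h5, map_mul, map_pow, of_H']
      refine Img.mul h3 ?_
      generalize n + 1 = r
      induction r with
      | zero => simpa using Img.one
      | succ r ih => exact pow_succ (1 - hh X) r ▸ Img.mul ih (Img.sub Img.one Img.h)
    rw [← e, map_add, ← K0.pull_of] at h4
    simpa using Img.sub h4 (Img.pull (K0.of (VB.mk B)))
  obtain ⟨a, b, rfl⟩ := K0.exists_sub y
  exact Img.sub (key a) (key b)

end BottK

end

section
open Matrix
open scoped Kronecker TensorProduct unitInterval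

namespace BottK
variable {X Y Z : Type} [TopologicalSpace X] [TopologicalSpace Y] [TopologicalSpace Z]
variable {ι κ : Type} [Fintype ι] [DecidableEq ι] [Fintype κ] [DecidableEq κ]

section
variable {G : Type*} [AddCommMonoid G]

theorem sum_fin_shift (D : ℕ) (s : ℤ) (g : ℤ → G) :
    ∑ l : Fin D, g (l + s) = ∑ r ∈ Finset.Ico s (s + D), g r := by
  refine Finset.sum_bij (fun l _ => (l : ℤ) + s) ?_ ?_ ?_ ?_
  · intro l _
    simp
    omega
  · intro a _ b _ h
    simp at h
    exact Fin.ext (by exact_mod_cast h)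
  · intro r hr
    simp at hr
    exact ⟨⟨(r - s).toNat, by omega⟩, Finset.mem_univ _, by simp; omega⟩
  · intros; rfl

theorem sum_fin_shift' (D : ℕ) (s : ℤ) (g : ℤ → G) :
    ∑ l : Fin D, g (s - l) = ∑ r ∈ Finset.Ico (s - D + 1) (s + 1), g r := by
  have := sum_fin_shift D (s - D + 1) g
  rw [show s - D + 1 + D = s + 1 by ring] at this
  rw [← this]
  refine Fintype.sum_equiv Fin.revPerm _ _ fun l => ?_
  congr 1
  simp [Fin.val_rev]
  omega

theorem sum_supp {D : ℕ} {a b c : ℤ} (h1 : a ≤ b) (h2 : b ≤ c) (ha : a ≤ 0) (hc : D < c) (g : ℤ → G)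
    (hg : ∀ r, r < 0 ∨ (D : ℤ) < r → g r = 0) :
    ∑ r ∈ Finset.Ico b c, g r + ∑ r ∈ Finset.Ico a b, g r = ∑ r ∈ Finset.range (D + 1), g r := by
  have e := sum_fin_shift (D + 1) 0 g
  simp only [add_zero, zero_add] at e
  rw [Finset.sum_range (fun r => g r), e, add_comm,
    ← Finset.sum_union (Finset.disjoint_left.2 fun x hx hx' => by simp at hx hx'; omega)]
  symm
  refine Finset.sum_subset (fun x hx => by simp at hx ⊢; omega) fun x _ hx => hg x ?_
  simp at hx
  omega

end

section
variable {D : ℕ} (p c : ℤ → Matrix ι ι ℂ)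

abbrev bc (D : ℕ) (ι : Type) [Fintype ι] [DecidableEq ι] := Matrix.compRingEquiv (Fin D) ι ℂ

noncomputable def bA (D : ℕ) : Matrix (Fin D × ι) (Fin D × ι) ℂ := bc D ι (of fun i j => p (D + i - j))
noncomputable def bB (D : ℕ) : Matrix (Fin D × ι) (Fin D × ι) ℂ := bc D ι (of fun i j => p (i - j))
noncomputable def bC (D : ℕ) (k : ℤ) : Matrix (Fin D × ι) (Fin D × ι) ℂ := bc D ι (of fun i j => c (k * D + i - j))

theorem block_one (k : ℤ) (f : Matrix (Fin D) (Fin D) (Matrix ι ι ℂ))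
    (h : ∀ i j, f i j = if k * D + i - j = 0 then 1 else 0) :
    bc D ι f = if k = 0 then 1 else 0 := by
  have : f = if k = 0 then 1 else 0 := by
    ext i j : 1
    rw [h]
    by_cases hk : k = 0
    · subst hk
      rw [if_pos rfl, Matrix.one_apply]
      refine if_congr ?_ rfl rfl
      rw [Fin.ext_iff]
      omega
    · rw [if_neg hk, if_neg]
      · rfl
      · intro h0
        have hi := i.2
        have hj := j.2
        have : (D : ℤ) ∣ (j : ℤ) - i := ⟨k, by linarith⟩
        have h2 := Int.eq_zero_of_abs_lt_dvd this (by rw [abs_lt]; omega)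
        have h3 : k * D = 0 := by omega
        rcases mul_eq_zero.1 h3 with h4 | h4
        · exact hk h4
        · omega
  rw [this]
  split_ifs
  · exact map_one (bc D ι)
  · exact map_zero (bc D ι)

variable {p c}
theorem blockRel 
    (hp : ∀ r, r < 0 ∨ (D : ℤ) < r → p r = 0)
    (hl : ∀ k : ℤ, ∑ r ∈ Finset.range (D + 1), p r * c (k - r) = if k = 0 then 1 else 0)
    (hr : ∀ k : ℤ, ∑ r ∈ Finset.range (D + 1), c (k - r) * p r = if k = 0 then 1 else 0)
    (t : Filter.Tendsto c Filter.cofinite (nhds 0)) (hD : 0 < D) : Rel (bA p D) (bB p D) (bC c D) where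
  l := fun k => by
    unfold bA bB bC
    rw [← map_mul (bc D ι), ← map_mul (bc D ι), ← map_add (bc D ι)]
    refine block_one k _ fun i j => ?_
    rw [← hl]
    simp only [Matrix.add_apply, Matrix.mul_apply, of_apply]
    have e1 := sum_fin_shift' D (D + i) (fun r => p r * c (k * D + i - j - r))
    have e2 := sum_fin_shift' D i (fun r => p r * c (k * D + i - j - r))
    rw [← sum_supp (a := i - D + 1) (b := i + 1) (c := D + i + 1) (by omega) (by omega) (by omega) (by omega)
      (fun r => p r * c (k * D + i - j - r)) (fun r hr => by rw [hp r hr, Matrix.zero_mul]),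
      ← e2, show (i + 1 : ℤ) = D + i - D + 1 by ring, ← e1]
    congr 1
    · refine Finset.sum_congr rfl fun l _ => ?_
      congr 2; ring
    · refine Finset.sum_congr rfl fun l _ => ?_
      congr 2; ring
  r := fun k => by
    unfold bA bB bC
    rw [← map_mul (bc D ι), ← map_mul (bc D ι), ← map_add (bc D ι)]
    refine block_one k _ fun i j => ?_
    rw [← hr]
    simp only [Matrix.add_apply, Matrix.mul_apply, of_apply]
    have e1 := sum_fin_shift D (D - j) (fun r => c (k * D + i - j - r) * p r)
    have e2 := sum_fin_shift D (-j) (fun r => c (k * D + i - j - r) * p r)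
    rw [← sum_supp (a := -j) (b := -j + D) (c := D - j + D) (by omega) (by omega) (by omega) (by omega)
      (fun r => c (k * D + i - j - r) * p r) (fun r hr => by rw [hp r hr, Matrix.mul_zero]),
      ← e2, show (-j + D : ℤ) = D - j by ring, ← e1]
    congr 1
    · refine Finset.sum_congr rfl fun l _ => ?_
      congr 2 <;> ring
    · refine Finset.sum_congr rfl fun l _ => ?_
      congr 2; ring
  t := by
    refine tendsto_pi_nhds.2 fun i => tendsto_pi_nhds.2 fun j => ?_
    have h1 : Filter.Tendsto (fun k : ℤ => c (k * D + i.1 - j.1)) Filter.cofinite (nhds 0) :=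
      t.comp (Function.Injective.tendsto_cofinite (f := fun k : ℤ => (k * D + i.1 - j.1 : ℤ))
        (fun a b hab => by
          have : (a * D : ℤ) = b * D := by simpa using hab
          exact mul_right_cancel₀ (by omega) this))
    exact (tendsto_pi_nhds.1 (tendsto_pi_nhds.1 h1 i.2)) j.2

end

section
variable (m : ℕ) (u : Matrix ι ι ℂ)

def Wm (r : ℤ) : Matrix ι ι ℂ := if r = m then 1 - u else if r = m + 1 then u else 0

variable {m u}
theorem Wm_mul (hu : u * u = u) (r s : ℤ) : Wm m u r * Wm m u s = if r = s then Wm m u r else 0 := by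
  unfold Wm
  split_ifs <;> first | omega | simp [Matrix.mul_sub, Matrix.sub_mul, hu]

theorem Wm_sum (hm : 1 ≤ m) (i : ℕ) : ∑ l : Fin (2 * m), Wm m u (((2 * m : ℕ) : ℤ) + i - l) =
    if i < m then 1 else if i = m then u else 0 := by
  rw [sum_fin_shift' (2 * m) (((2 * m : ℕ) : ℤ) + i) (Wm m u)]
  have : ∀ r, Wm m u r = (if r = m then 1 - u else 0) + (if r = m + 1 then u else 0) := by
    intro r
    unfold Wm
    split_ifs <;> first | omega | simp
  simp only [this, Finset.sum_add_distrib, Finset.sum_ite_eq', Finset.mem_Ico]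
  split_ifs <;> first | omega | simp

theorem end_c (hm : 1 ≤ m) (hu : u * u = u) {N N' : Matrix ι ι ℂ} (hN : IsUnit N.det) (hN' : IsUnit N'.det)
    {q : ℕ → Matrix ι ι ℂ} (hq : ∀ r, q r = N' * Wm m u r * N) {c : ℤ → Matrix ι ι ℂ}
    (hl : ∀ k : ℤ, ∑ r ∈ Finset.range (2 * m + 1), q r * c (k - r) = if k = 0 then 1 else 0) (k : ℤ) :
    c k = N⁻¹ * Wm m u (-k) * N'⁻¹ := by
  have h1 : ∀ k : ℤ, (1 - u) * (N * c (k - m)) + u * (N * c (k - (m + 1))) = (if k = 0 then 1 else 0) * N'⁻¹ := by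
    intro k
    have h2 := hl k
    rw [Finset.sum_eq_add_of_mem m (m + 1) (by simp; omega) (by simp; omega) (by omega)] at h2
    · rw [hq, hq] at h2
      rw [show Wm m u (m : ℕ) = 1 - u by simp [Wm], show Wm m u ((m + 1 : ℕ) : ℤ) = u by simp [Wm]] at h2
      have h3 := congrArg (fun M => N'⁻¹ * M) h2
      simp only [Matrix.mul_add, Matrix.mul_assoc, nonsing_inv_mul_cancel_left _ _ hN'] at h3
      push_cast at h3
      rw [h3]
      split_ifs <;> simp
    · intro r hr h
      rw [hq, Wm, if_neg (by omega), if_neg (by omega)]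
      simp
  have ha : ∀ k : ℤ, (1 - u) * (N * c k) = (if k = -m then (1 - u) else 0) * N'⁻¹ := by
    intro k
    have := congrArg (fun M => (1 - u) * M) (h1 (k + m))
    simp only [Matrix.mul_add, ← Matrix.mul_assoc, Matrix.mul_sub, Matrix.sub_mul, hu, Matrix.mul_one,
      Matrix.one_mul, sub_self, Matrix.zero_mul, add_zero, sub_zero, add_sub_cancel_right] at this
    simp only [Matrix.sub_mul, Matrix.one_mul, ← Matrix.mul_assoc]
    rw [this]
    rw [if_congr (show k + m = 0 ↔ k = -m by omega) rfl rfl]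
    split_ifs <;> simp [Matrix.sub_mul]
  have hb : ∀ k : ℤ, u * (N * c k) = (if k = -(m+1) then u else 0) * N'⁻¹ := by
    intro k
    have := congrArg (fun M => u * M) (h1 (k + (m + 1)))
    simp only [Matrix.mul_add, ← Matrix.mul_assoc, Matrix.mul_sub, Matrix.sub_mul, hu, Matrix.mul_one,
      Matrix.one_mul, sub_self, Matrix.zero_mul, zero_add, sub_zero, add_sub_cancel_right] at this
    simp only [← Matrix.mul_assoc]
    rw [this]
    rw [if_congr (show k + (m + 1) = 0 ↔ k = -(m + 1) by omega) rfl rfl]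
    split_ifs <;> simp
  have : N * c k = Wm m u (-k) * N'⁻¹ := by
    have e : N * c k = (1 - u) * (N * c k) + u * (N * c k) := by
      rw [← Matrix.add_mul]; simp
    rw [e, ha, hb, ← Matrix.add_mul]
    congr 1
    unfold Wm
    split_ifs <;> first | omega | simp
  rw [Matrix.mul_assoc, ← this, nonsing_inv_mul_cancel_left _ _ hN]

end
end BottK

end

section
open Matrix
open scoped Kronecker TensorProduct unitInterval

namespace BottK
variable {X Y Z : Type} [TopologicalSpace X] [TopologicalSpace Y] [TopologicalSpace Z]
variable {ι κ : Type} [Fintype ι] [DecidableEq ι] [Fintype κ] [DecidableEq κ]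
variable {D : ℕ}

def dg (f : Fin D → Matrix ι ι ℂ) : Matrix (Fin D × ι) (Fin D × ι) ℂ := bc D ι (diagonal f)

theorem dg_mul (f g : Fin D → Matrix ι ι ℂ) : dg f * dg g = dg (fun i => f i * g i) := by
  unfold dg
  rw [← map_mul (bc D ι), diagonal_mul_diagonal]

theorem dg_add (f g : Fin D → Matrix ι ι ℂ) : dg f + dg g = dg (fun i => f i + g i) := by
  unfold dg
  rw [← map_add (bc D ι), diagonal_add]

theorem dg_zero : dg (fun _ : Fin D => (0 : Matrix ι ι ℂ)) = 0 := by
  unfold dg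
  rw [diagonal_zero, map_zero]

theorem dg_apply (f : Fin D → Matrix ι ι ℂ) (a b) : dg f a b = if a.1 = b.1 then f a.1 a.2 b.2 else 0 := by
  change diagonal f a.1 b.1 a.2 b.2 = _
  rw [diagonal_apply]
  split_ifs <;> rfl

theorem dg_cont {f : Fin D → X → Matrix ι ι ℂ} (hf : ∀ i, Continuous (f i)) :
    Continuous fun x => dg (fun i => f i x) := by
  refine continuous_matrix fun a b => ?_
  simp only [dg_apply]
  split_ifs
  · exact (hf a.1).matrix_elem _ _
  · exact continuous_const

variable {m : ℕ} 

def Sm (m D : ℕ) (u : Matrix ι ι ℂ) (i : Fin D) : Matrix ι ι ℂ := if (i : ℕ) < m then 1 else if (i : ℕ) = m then u else 0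

theorem Sm_cont {u : X → Matrix ι ι ℂ} (hu : Continuous u) (i : Fin D) : Continuous fun x => Sm m D (u x) i := by
  unfold Sm
  split_ifs <;> first | exact continuous_const | exact hu

theorem Sm_idem {u : Matrix ι ι ℂ} (hu : u * u = u) (i : Fin D) : Sm m D u i * Sm m D u i = Sm m D u i := by
  unfold Sm
  split_ifs <;> simp [hu]

theorem end_K {u : Matrix ι ι ℂ} (hm : 1 ≤ m) (hu : u * u = u) {N N' : Matrix ι ι ℂ} (hN : IsUnit N.det)
    (hN' : IsUnit N'.det)
    {p : ℤ → Matrix ι ι ℂ} (hp : ∀ r, p r = N' * Wm m u r * N) {c : ℤ → Matrix ι ι ℂ}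
    (hl : ∀ k : ℤ, ∑ r ∈ Finset.range (2 * m + 1), p r * c (k - r) = if k = 0 then 1 else 0) :
    bA p (2 * m) * bC c (2 * m) (-1) = dg (fun i => N' * Sm m (2 * m) u i * N'⁻¹) := by
  have hc := end_c (q := fun r => p r) hm hu hN hN' (fun r => hp r) hl
  unfold bA bC dg
  rw [← map_mul (bc (2 * m) ι)]
  congr 1
  ext i j : 1
  rw [Matrix.mul_apply, diagonal_apply]
  simp only [of_apply, hp, hc]
  have : ∀ l : Fin (2 * m), N' * Wm m u (((2 * m : ℕ) : ℤ) + i - l) * N *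
      (N⁻¹ * Wm m u (-(-1 * ((2 * m : ℕ) : ℤ) + l - j)) * N'⁻¹) =
      N' * (if i = j then Wm m u (((2 * m : ℕ) : ℤ) + i - l) else 0) * N'⁻¹ := by
    intro l
    have h1 := Wm_mul (m := m) hu (((2 * m : ℕ) : ℤ) + i - l) (-(-1 * ((2 * m : ℕ) : ℤ) + l - j))
    rw [if_congr (show (((2 * m : ℕ) : ℤ) + i - l) = (-(-1 * ((2 * m : ℕ) : ℤ) + l - j)) ↔ i = j by
      rw [Fin.ext_iff]; omega) rfl rfl] at h1
    rw [← h1]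
    simp only [Matrix.mul_assoc, mul_nonsing_inv_cancel_left _ _ hN]
  rw [Finset.sum_congr rfl fun l _ => this l, ← Finset.sum_mul, ← Finset.mul_sum]
  split_ifs with h
  · rw [Wm_sum hm]; rfl
  · simp

theorem mk_dg_single {u : X → Matrix ι ι ℂ} (hc : Continuous u) (hu : ∀ x, u x * u x = u x) (i0 : Fin D)
    {e : X → Matrix (Fin D × ι) (Fin D × ι) ℂ} (he : Continuous e) (hi : ∀ x, e x * e x = e x)
    (h : ∀ x, e x = dg (fun i => if i = i0 then u x else 0)) :
    VB.mk (Bun.of e he hi) = VB.mk (Bun.of u hc hu) := by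
  refine VB.mk_eq.2 ⟨fun x => of fun a b => if a.1 = i0 then u x a.2 b else 0,
    fun x => of fun b a => if a.1 = i0 then u x b a.2 else 0, ?_, ?_, ?_, ?_⟩
  · refine continuous_matrix fun a b => ?_
    simp only [of_apply]
    split_ifs
    · exact hc.matrix_elem _ _
    · exact continuous_const
  · refine continuous_matrix fun a b => ?_
    simp only [of_apply]
    split_ifs
    · exact hc.matrix_elem _ _
    · exact continuous_const
  · intro x
    change _ = e x
    ext a b
    rw [h, dg_apply, Matrix.mul_apply]
    simp only [of_apply]
    by_cases h1 : a.1 = i0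
    · by_cases h2 : b.1 = i0
      · simp only [h1, h2, if_true]
        rw [← Matrix.mul_apply, hu]
      · simp [h1, h2, Ne.symm h2]
    · simp [h1]
  · intro x
    change _ = u x
    ext a b
    rw [Matrix.mul_apply, Fintype.sum_prod_type]
    simp only [of_apply]
    rw [Finset.sum_eq_single i0]
    · simp only [if_true]
      rw [← Matrix.mul_apply, hu]
    · intro b _ hb; simp [hb]
    · simp

/-- class of the end projections -/
theorem mk_end (hm : m < D) {u N : X → Matrix ι ι ℂ} (hc : Continuous u) (hu : ∀ x, u x * u x = u x) (hN : GLf N)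
    {e : X → Matrix (Fin D × ι) (Fin D × ι) ℂ} (he : Continuous e) (hi : ∀ x, e x * e x = e x)
    (h : ∀ x, e x = dg (fun i => N x * Sm m D (u x) i * (N x)⁻¹)) :
    VB.mk (Bun.of e he hi) = VB.mk (Bun.of (X := X) (fun _ => dg fun i : Fin D => if (i : ℕ) < m then (1 : Matrix ι ι ℂ) else 0)
      continuous_const (fun x => by rw [dg_mul]; congr 1; funext i; split_ifs <;> simp)) + VB.mk (Bun.of u hc hu) := by
  have hSc : Continuous fun x => dg (Sm m D (u x)) := dg_cont (f := fun i x => Sm m D (u x) i) fun i => Sm_cont hc i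
  have hSi : ∀ x, dg (Sm m D (u x)) * dg (Sm m D (u x)) = dg (Sm m D (u x)) := fun x => by
    rw [dg_mul]; congr 1; funext i; exact Sm_idem (hu x) i
  have hsc : Continuous fun x => dg (fun i : Fin D => if i = ⟨m, hm⟩ then u x else 0) :=
    dg_cont (f := fun i x => if i = ⟨m, hm⟩ then u x else 0) fun i => by
      split_ifs
      · exact hc
      · exact continuous_const
  have hsi : ∀ x, dg (fun i : Fin D => if i = ⟨m, hm⟩ then u x else 0) * dg (fun i : Fin D => if i = ⟨m, hm⟩ then u x else 0)
      = dg (fun i : Fin D => if i = ⟨m, hm⟩ then u x else 0) := fun x => by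
    rw [dg_mul]; congr 1; funext i; split_ifs <;> simp [hu]
  have e1 : VB.mk (Bun.of e he hi) = VB.mk (Bun.of (fun x => dg (Sm m D (u x))) hSc hSi) := by
    refine VB.mk_eq.2 ⟨fun x => dg (fun i => N x * Sm m D (u x) i), fun x => dg (fun i => Sm m D (u x) i * (N x)⁻¹), ?_, ?_, ?_, ?_⟩
    · exact dg_cont (f := fun i x => N x * Sm m D (u x) i) fun i => hN.1.matrix_mul (Sm_cont hc i)
    · exact dg_cont (f := fun i x => Sm m D (u x) i * (N x)⁻¹) fun i => (Sm_cont hc i).matrix_mul hN.inv.1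
    · intro x
      change _ = e x
      rw [h, dg_mul]
      congr 1; funext i
      rw [Matrix.mul_assoc, ← Matrix.mul_assoc (Sm m D (u x) i), Sm_idem (hu x), Matrix.mul_assoc]
    · intro x
      change _ = dg (Sm m D (u x))
      rw [dg_mul]
      congr 1; funext i
      rw [Matrix.mul_assoc, nonsing_inv_mul_cancel_left _ _ (hN.2 x), Sm_idem (hu x)]
  rw [e1, ← mk_dg_single hc hu ⟨m, hm⟩ hsc hsi fun x => rfl]
  refine VB.mk_orth _ _ _ _ ?_ ?_ _ _ ?_
  · intro x
    rw [dg_mul, ← dg_zero]; congr 1; funext i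
    by_cases h1 : (i : ℕ) < m
    · rw [if_neg (show i ≠ ⟨m, hm⟩ by rintro rfl; simp at h1)]; simp
    · simp [h1]
  · intro x
    rw [dg_mul, ← dg_zero]; congr 1; funext i
    by_cases h1 : (i : ℕ) < m
    · rw [if_neg (show i ≠ ⟨m, hm⟩ by rintro rfl; simp at h1)]; simp
    · simp [h1]
  · intro x
    rw [dg_add]; congr 1; funext i
    unfold Sm
    by_cases h1 : (i : ℕ) < m
    · rw [if_neg (show i ≠ ⟨m, hm⟩ by rintro rfl; simp at h1)]; simp [h1]
    · simp [h1, Fin.ext_iff]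

theorem GLf.zpow {f : X × Circle → Matrix ι ι ℂ} (h : GLf f) (m : ℕ) :
    GLf fun p => (p.2 : ℂ) ^ m • f p := by
  have := h.zs (z := fun p => p.2 ^ m) (by fun_prop)
  simpa using this

set_option maxHeartbeats 800000 in
theorem idem_inj [CompactSpace X] [T2Space X] {u v : X → Matrix ι ι ℂ} (hu : Continuous u)
    (hv : Continuous v) (hui : ∀ x, u x * u x = u x) (hvi : ∀ x, v x * v x = v x)
    (h : gcl (fun p : X × Circle => (p.2 : ℂ) • u p.1 + (1 - u p.1)) =
      gcl (fun p : X × Circle => (p.2 : ℂ) • v p.1 + (1 - v p.1))) :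
    K0.of (VB.mk (Bun.of u hu hui)) = K0.of (VB.mk (Bun.of v hv hvi)) := by
  obtain ⟨F, N, N', hF, hN, hN', h0, h1⟩ := gcl_inj (gcl_idem (Bun.of u hu hui)).1 (gcl_idem (Bun.of v hv hvi)).1 h
  let A : ℤ → X → Matrix ι ι ℂ := fun k x => 1 * Wm 0 (v x) k * N x
  let B : ℤ → X → Matrix ι ι ℂ := fun k x => N' x * Wm 0 (u x) k * 1
  have Wc : ∀ {w : X → Matrix ι ι ℂ} (hw : Continuous w) (k : ℤ), Continuous fun x => Wm 0 (w x) k := by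
    intro w hw k
    unfold Wm
    split_ifs
    · exact continuous_const.sub hw
    · exact hw
    · exact continuous_const
  have hA : ∀ k, Continuous (A k) := fun k => (continuous_const.matrix_mul (Wc hv k)).matrix_mul hN.1
  have hB : ∀ k, Continuous (B k) := fun k => (hN'.1.matrix_mul (Wc hu k)).matrix_mul continuous_const
  have I3 : Finset.Icc (-((1 : ℕ) : ℤ)) (1 : ℕ) = {-1, 0, 1} := by decide
  obtain ⟨m, P, hm, hP, hG, hP0, hP1⟩ := approx2 hF (n := 1) hA hB
    (fun x z => by
      rw [h0, lp, I3]
      simp [A, Wm, Matrix.add_mul, add_comm])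
    (fun x z => by
      rw [h1, lp, I3]
      simp [B, Wm, Matrix.mul_add, add_comm])
  have Wt : ∀ (w : Matrix ι ι ℂ) (k : ℤ), k ∉ Finset.Icc (-((1 : ℕ) : ℤ)) (1 : ℕ) → Wm 0 w k = 0 := by
    intro w k hk
    rw [I3] at hk
    simp at hk
    unfold Wm
    rw [if_neg (by simpa using hk.2.1), if_neg (by simpa using hk.2.2)]
  have Ws : ∀ (w : Matrix ι ι ℂ) (k : ℤ), Wm 0 w (k - m) = Wm m w k := by
    intro w k
    unfold Wm
    refine if_congr (by push_cast; omega) rfl (if_congr (by push_cast; omega) rfl rfl)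
  have hP0' : ∀ k x, P k (x, 0) = A k x := by
    intro k x
    rw [hP0, trunc]
    split_ifs with hk
    · rfl
    · simp only [A]; rw [Wt _ _ hk]; simp
  have hP1' : ∀ k x, P k (x, 1) = B k x := by
    intro k x
    rw [hP1, trunc]
    split_ifs with hk
    · rfl
    · simp only [B]; rw [Wt _ _ hk]; simp
  have hpl : GLf (pl (2 * m) fun k => P (k - m)) := by
    have := hG.zpow m
    simpa only [lp_pl] using this
  let pp : ℤ → X × I → Matrix ι ι ℂ := fun r => if 0 ≤ r ∧ r ≤ (2 * m : ℕ) then P (r - m) else 0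
  let cc : ℤ → X × I → Matrix ι ι ℂ := fc (pl (2 * m) fun k => P (k - m))
  have hppc : ∀ r, Continuous (pp r) := fun r => by
    simp only [pp]
    split_ifs
    · exact hP _
    · exact continuous_zero
  have hl : ∀ y (k : ℤ), ∑ r ∈ Finset.range (2 * m + 1), pp r y * cc (k - r) y = if k = 0 then 1 else 0 := by
    intro y k
    rw [← fc_left hpl k y]
    refine Finset.sum_congr rfl fun r hr => ?_
    rw [Finset.mem_range] at hr
    simp only [pp]
    rw [if_pos (by omega)]
  have hr : ∀ y (k : ℤ), ∑ r ∈ Finset.range (2 * m + 1), cc (k - r) y * pp r y = if k = 0 then 1 else 0 := by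
    intro y k
    rw [← fc_right hpl k y]
    refine Finset.sum_congr rfl fun r hr => ?_
    rw [Finset.mem_range] at hr
    simp only [pp]
    rw [if_pos (by omega)]
  have rel : ∀ y, Rel (bA (fun r => pp r y) (2 * m)) (bB (fun r => pp r y) (2 * m)) (bC (fun k => cc k y) (2 * m)) := by
    intro y
    refine blockRel ?_ (hl y) (hr y) (fc_tendsto hpl y) (by omega)
    intro r hr
    simp only [pp]
    rw [if_neg (by omega)]
    rfl
  let K : X × I → Matrix (Fin (2 * m) × ι) (Fin (2 * m) × ι) ℂ := fun y =>
    bA (fun r => pp r y) (2 * m) * bC (fun k => cc k y) (2 * m) (-1)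
  have hKc : Continuous K := by
    refine Continuous.matrix_mul (continuous_matrix fun a b => ?_) (continuous_matrix fun a b => ?_)
    · exact (hppc _).matrix_elem a.2 b.2
    · exact (fc_cont hpl _).matrix_elem a.2 b.2
  have hKi : ∀ y, K y * K y = K y := fun y => (rel y).idemK
  have e0 : ∀ x, K (x, 0) = dg (fun i => (1 : Matrix ι ι ℂ) * Sm m (2 * m) (v x) i * (1 : Matrix ι ι ℂ)⁻¹) := by
    intro x
    refine end_K (p := fun r => pp r (x, 0)) (c := fun k => cc k (x, 0)) hm (hvi x) (hN.2 x)
      (by simp) (fun r => ?_) (hl (x, 0))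
    simp only [pp]
    rw [← Ws]
    split_ifs with hr
    · rw [hP0']
    · rw [Wt]; · simp
      simp; omega
  have e1 : ∀ x, K (x, 1) = dg (fun i => N' x * Sm m (2 * m) (u x) i * (N' x)⁻¹) := by
    intro x
    refine end_K (p := fun r => pp r (x, 1)) (c := fun k => cc k (x, 1)) hm (hui x) (N := 1) (by simp)
      (hN'.2 x) (fun r => ?_) (hl (x, 1))
    simp only [pp]
    rw [← Ws]
    split_ifs with hr
    · rw [hP1']
    · rw [Wt]; · simp
      simp; omega
  clear_value K
  have key := VB.path_eq hKc hKi
  rw [mk_end (m := m) (by omega) hv hvi (N := fun _ => 1) GLf.one (e := fun x => K (x, 0))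
      (hKc.comp (by fun_prop)) (fun _ => hKi _) e0,
    mk_end (m := m) (by omega) hu hui hN' (e := fun x => K (x, 1)) (hKc.comp (by fun_prop))
      (fun _ => hKi _) e1] at key
  have := congrArg K0.of key
  rw [map_add, map_add] at this
  exact (add_left_cancel this).symm

end BottK

end

section
open Matrix
open scoped Kronecker TensorProduct unitInterval

namespace BottK
variable {X Y Z : Type} [TopologicalSpace X] [TopologicalSpace Y] [TopologicalSpace Z]
variable {ι κ : Type} [Fintype ι] [DecidableEq ι] [Fintype κ] [DecidableEq κ]

@[reducible] def zb (X : Type) [TopologicalSpace X] (κ : Type) [Fintype κ] [DecidableEq κ] : Bun X :=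
  Bun.of (fun _ => (0 : Matrix κ κ ℂ)) continuous_const (fun _ => by simp)

theorem mk_zb (κ : Type) [Fintype κ] [DecidableEq κ] : VB.mk (zb X κ) = 0 := by
  refine VB.mk_eq.2 ⟨fun _ => 0, fun _ => 0, continuous_const, continuous_const, ?_, ?_⟩
  · intro x; simp
  · intro x; ext i; exact i.elim

noncomputable def ig [CompactSpace X] [T2Space X] (a : Bun X) : VB (X × S2) :=
  gcl (fun p : X × Circle => (p.2 : ℂ) • a.e p.1 + (1 - a.e p.1))

theorem of_ig [CompactSpace X] [T2Space X] (a : Bun X) : K0.of (ig a) =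
    K0.pull prS (K0.of (VB.mk a)) * hh X + Fintype.card a.ι := by
  rw [ig, (gcl_idem a).2]
  have := congrArg (fun y => K0.pull (prS (X := X)) (K0.of y)) (VB.mk_add_compl a)
  simp only [map_add, map_natCast] at this
  simp only [map_add, map_mul, ← K0.pull_of, of_H]
  linear_combination this

theorem ig_add_zb [CompactSpace X] [T2Space X] (a : Bun X) (n : ℕ) : ig (a.add (zb X (Fin n))) = ig a + n := by
  have h := gcl_fromBlocks (X := X) (gcl_idem a).1 (GLf.one (ι := Fin n))
  rw [gcl_one, Fintype.card_fin] at h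
  rw [ig, ig, ← h]
  congr 1
  funext p
  ext (i | i) (j | j) <;> simp [fromBlocks, Matrix.one_apply]

theorem pull_hh_inj [CompactSpace X] [T2Space X] {b : K0 X} (h : K0.pull prS b * hh X = 0) : b = 0 := by
  obtain ⟨U, V, rfl⟩ := K0.exists_sub b
  induction U using VB.ind with | _ U
  induction V using VB.ind with | _ V
  have hU : VB.mk (U.add (zb X V.ι)) = VB.mk U := by rw [← VB.mk_add, mk_zb, add_zero]
  have hV : VB.mk ((zb X U.ι).add V) = VB.mk V := by rw [← VB.mk_add, mk_zb, zero_add]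
  have e1 : K0.of (ig (U.add (zb X V.ι))) = K0.of (ig ((zb X U.ι).add V)) := by
    rw [of_ig, of_ig, hU, hV]
    have e2 : Fintype.card (U.add (zb X V.ι)).ι = Fintype.card ((zb X U.ι).add V).ι := rfl
    rw [e2]
    rw [map_sub] at h
    linear_combination h
  obtain ⟨c, hc⟩ := K0.of_eq e1
  induction c using VB.ind with | _ C
  have e3 : ∃ n : ℕ, ig (U.add (zb X V.ι)) + n = ig ((zb X U.ι).add V) + n := by
    exact ⟨Fintype.card C.ι, by rw [← VB.mk_add_compl C, ← add_assoc, ← add_assoc, hc]⟩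
  obtain ⟨n, e3⟩ := e3
  rw [← ig_add_zb, ← ig_add_zb] at e3
  let u := (U.add (zb X V.ι)).add (zb X (Fin n))
  let v := ((zb X U.ι).add V).add (zb X (Fin n))
  have := idem_inj u.cont v.cont u.idem v.idem e3
  have hu : VB.mk u = VB.mk U := by rw [← VB.mk_add, hU, mk_zb, add_zero]
  have hv : VB.mk v = VB.mk V := by rw [← VB.mk_add, hV, mk_zb, add_zero]
  rw [← hu, ← hv]
  exact sub_eq_zero.2 this

theorem pull_prS_atPole (a : K0 X) : K0.pull atPole (K0.pull prS a) = a := by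
  rw [K0.pull_comp]
  exact K0.pull_id a

theorem hh_atPole [CompactSpace X] [T2Space X] : K0.pull atPole (hh X) = 0 := by
  rw [hh, map_sub, K0.pull_of, ← zl_cl, cl_atPole, map_one, VB.mk_triv]
  simp

theorem decomp_inj [CompactSpace X] [T2Space X] {a b a' b' : K0 X}
    (h : K0.pull prS a + K0.pull prS b * hh X = K0.pull prS a' + K0.pull prS b' * hh X) :
    a = a' ∧ b = b' := by
  have h1 := congrArg (K0.pull atPole) h
  simp only [map_add, map_mul, hh_atPole, mul_zero, add_zero, pull_prS_atPole] at h1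
  subst h1
  refine ⟨rfl, sub_eq_zero.1 (pull_hh_inj ?_)⟩
  rw [map_sub]
  linear_combination h

theorem psi_hh (y : K0 X) : K0.psi (K0.pull prS y * hh X) = 2 * (K0.pull prS (K0.psi y) * hh X) := by
  have h1 := K0.psi_mul_line (K0.pull prS y) (hopf_line.pull (sndS (X := X)))
  change K0.psi (_ * K0.of (VB.H X)) = _ * K0.of (VB.H X) ^ 2 at h1
  rw [of_H, mul_add, map_add, mul_one, K0.psi_pull] at h1
  linear_combination h1 + K0.pull prS (K0.psi y) * hh_sq (X := X)

theorem psi_decomp (a b : K0 X) : K0.psi (K0.pull prS a + K0.pull prS b * hh X) =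
    K0.pull prS (K0.psi a) + K0.pull prS (2 * K0.psi b) * hh X := by
  rw [map_add, psi_hh, K0.psi_pull, map_mul, map_ofNat]
  ring

end BottK

end

section
open Matrix
open scoped Kronecker TensorProduct unitInterval

namespace BottK
variable {X Y Z : Type} [TopologicalSpace X] [TopologicalSpace Y] [TopologicalSpace Z]
variable {ι κ : Type} [Fintype ι] [DecidableEq ι] [Fintype κ] [DecidableEq κ]

theorem idem_factor (e : Matrix ι ι ℂ) (he : e * e = e) :
    ∃ (r : ℕ) (a : Matrix ι (Fin r) ℂ) (b : Matrix (Fin r) ι ℂ), a * b = e ∧ b * a = 1 := by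
  let f := Matrix.toLin' e
  have hf : ∀ x, f (f x) = f x := fun x => by
    simp only [f, Matrix.toLin'_apply, Matrix.mulVec_mulVec, he]
  let V := LinearMap.range f
  let bs := Module.finBasis ℂ V
  let i : (Fin (Module.finrank ℂ V) → ℂ) →ₗ[ℂ] (ι → ℂ) := V.subtype ∘ₗ bs.equivFun.symm.toLinearMap
  let p : (ι → ℂ) →ₗ[ℂ] (Fin (Module.finrank ℂ V) → ℂ) := bs.equivFun.toLinearMap ∘ₗ f.rangeRestrict
  refine ⟨_, LinearMap.toMatrix' i, LinearMap.toMatrix' p, ?_, ?_⟩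
  · rw [← LinearMap.toMatrix'_comp]
    have : i ∘ₗ p = f := by
      apply LinearMap.ext
      intro x
      simp [i, p]
    rw [this]
    simp [f]
  · rw [← LinearMap.toMatrix'_comp]
    have : p ∘ₗ i = LinearMap.id := by
      apply LinearMap.ext
      intro x
      simp only [i, p, LinearMap.comp_apply, LinearEquiv.coe_coe, LinearMap.id_apply]
      rw [← LinearEquiv.eq_symm_apply]
      apply Subtype.ext
      obtain ⟨y, hy⟩ := (bs.equivFun.symm x).2
      simp only [LinearMap.codRestrict_apply, LinearMap.rangeRestrict, Submodule.subtype_apply]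
      rw [← hy, hf]
    rw [this, LinearMap.toMatrix'_id]

theorem VB.unit_nat (a : VB Unit) : ∃ n : ℕ, a = n := by
  induction a using VB.ind with | _ A
  obtain ⟨r, a, b, h1, h2⟩ := idem_factor (A.e ()) (A.idem ())
  refine ⟨r, ?_⟩
  rw [← VB.mk_triv_fin]
  exact VB.mk_eq.2 ⟨fun _ => a, fun _ => b, continuous_const, continuous_const,
    fun _ => h1, fun _ => h2⟩

theorem VB.unit_inj {m n : ℕ} (h : (m : VB Unit) = n) : m = n := by
  rw [← VB.mk_triv_fin, ← VB.mk_triv_fin] at h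
  obtain ⟨a, b, -, -, h1, h2⟩ := VB.mk_eq.1 h
  have h1 : a () * b () = (1 : Matrix (Fin m) (Fin m) ℂ) := h1 ()
  have h2 : b () * a () = (1 : Matrix (Fin n) (Fin n) ℂ) := h2 ()
  have := Matrix.trace_mul_comm (a ()) (b ())
  rw [h1, h2] at this
  simpa using this

theorem K0.unit_int (y : K0 Unit) : ∃ n : ℤ, y = n := by
  obtain ⟨a, b, rfl⟩ := K0.exists_sub y
  obtain ⟨m, rfl⟩ := VB.unit_nat a
  obtain ⟨n, rfl⟩ := VB.unit_nat b
  exact ⟨m - n, by simp⟩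

theorem K0.unit_inj {m n : ℕ} (h : (m : K0 Unit) = n) : m = n := by
  rw [← map_natCast K0.of, ← map_natCast K0.of] at h
  obtain ⟨c, hc⟩ := K0.of_eq h
  obtain ⟨k, rfl⟩ := VB.unit_nat c
  rw [← Nat.cast_add, ← Nat.cast_add] at hc
  exact Nat.add_right_cancel (VB.unit_inj hc)

theorem K0.unit_inj_int {m : ℤ} (h : (m : K0 Unit) = 0) : m = 0 := by
  rcases m with m | m
  · have : ((m : ℕ) : K0 Unit) = (0 : ℕ) := by simpa using h
    simp [K0.unit_inj this]
  · have : ((m + 1 : ℕ) : K0 Unit) = (0 : ℕ) := by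
      rw [Int.cast_negSucc, neg_eq_zero] at h
      simpa using h
    exact absurd (K0.unit_inj this) (by simp)

theorem K0.unit_contra (b : K0 Unit) (h : 16 * K0.psi b = 4 * b + 8) : False := by
  obtain ⟨n, rfl⟩ := K0.unit_int b
  have e : K0.psi (n : K0 Unit) = n := by
    rw [← zsmul_one n, map_zsmul, K0.psi_one]
  rw [e] at h
  have : ((12 * n - 8 : ℤ) : K0 Unit) = 0 := by
    push_cast
    linear_combination h
  have := K0.unit_inj_int this
  omega

/-- a purely algebraic contradiction -/
theorem no_d1 (d : K0 ((Unit × S2) × S2))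
    (h : 4 * K0.psi d = 4 * d + 8 * (K0.pull prS (hh Unit) * hh (Unit × S2))) : False := by
  obtain ⟨x, y, rfl⟩ := Img.all d
  rw [psi_decomp] at h
  have h1 := (decomp_inj (a := 4 * K0.psi x) (b := 4 * (2 * K0.psi y)) (a' := 4 * x) (b' := 4 * y + 8 * hh Unit) (by
    simp only [map_mul, map_add, map_ofNat] at h ⊢
    linear_combination h)).2
  obtain ⟨a, b, rfl⟩ := Img.all y
  rw [psi_decomp] at h1
  have h2 := (decomp_inj (a := 8 * K0.psi a) (b := 8 * (2 * K0.psi b)) (a' := 4 * a) (b' := 4 * b + 8) (by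
    simp only [map_mul, map_add, map_ofNat] at h1 ⊢
    linear_combination h1)).2
  exact K0.unit_contra b (by linear_combination h2)

abbrev BB : Type := (Unit × S2) × S2

theorem hh_mapS (f : C(X, Y)) : K0.pull (mapS f) (hh Y) = hh X := by
  rw [hh, map_sub, K0.pull_of, H_eq, hh, H_eq, map_one]
  congr 2

theorem pull_prS_mapS (f : C(X, Y)) (y : K0 Y) :
    K0.pull (mapS f) (K0.pull prS y) = K0.pull prS (K0.pull f y) := by
  rw [K0.pull_comp, K0.pull_comp]; rfl

theorem psi_hh' : K0.psi (hh X) = 2 * hh X := by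
  have := psi_hh (1 : K0 X)
  simpa [K0.psi_one] using this

theorem no_E (E : K0 ((BB × S2) × S2))
    (h1 : K0.pull atPole E = 2 + 2 * (K0.pull prS (K0.pull prS (hh Unit)) * hh BB))
    (h2 : K0.pull (mapS atPole) E = 2 + 2 * (K0.pull prS (hh (Unit × S2)) * hh BB))
    (h3 : K0.psi E = E ^ 2 - 2) : False := by
  obtain ⟨a, d, rfl⟩ := Img.all E
  simp only [map_add, map_mul, hh_atPole, mul_zero, add_zero, pull_prS_atPole] at h1
  obtain ⟨d0, d1, rfl⟩ := Img.all d
  rw [map_add, map_mul, hh_mapS, pull_prS_mapS, pull_prS_mapS, map_add, map_mul, hh_atPole,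
    mul_zero, add_zero, pull_prS_atPole, h1] at h2
  simp only [map_add, map_mul, map_ofNat, hh_atPole, mul_zero, add_zero] at h2
  have h4 := (decomp_inj (a := 2) (a' := 2) (b := d0) (b' := 2 * hh (Unit × S2)) (by
    simp only [map_mul, map_add, map_ofNat] at h2 ⊢
    linear_combination h2)).2
  rw [psi_decomp, h4] at h3
  generalize hD : K0.pull prS (2 * hh (Unit × S2)) + K0.pull prS d1 * hh BB = D at h3
  have h5 := (decomp_inj (a := K0.psi a)
    (a' := a ^ 2 - 2)
    (b := 2 * K0.psi D)
    (b' := 2 * a * D) (by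
    rw [h3]
    simp only [map_mul, map_add, map_ofNat, map_sub, map_pow]
    linear_combination (K0.pull prS D) ^ 2 *
      hh_sq (X := BB × S2))).2
  subst hD
  rw [psi_decomp, h1] at h5
  have e : K0.psi (2 * hh (Unit × S2)) = 4 * hh (Unit × S2) := by
    rw [two_mul, map_add, psi_hh']; ring
  rw [e] at h5
  have h6 := (decomp_inj (a := 8 * hh (Unit × S2)) (a' := 8 * hh (Unit × S2))
    (b := 4 * K0.psi d1) (b' := 4 * d1 + 8 * (K0.pull prS (hh Unit) * hh (Unit × S2))) (by
    simp only [map_mul, map_add, map_ofNat] at h5 ⊢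
    linear_combination h5 + 4 * K0.pull prS (K0.pull prS (hh Unit)) * K0.pull prS d1 *
      hh_sq (X := BB))).2
  exact no_d1 d1 h6

end BottK

end

section

open Matrix
open scoped Kronecker TensorProduct unitInterval

namespace BottK
variable {X Y Z : Type} [TopologicalSpace X] [TopologicalSpace Y] [TopologicalSpace Z]
variable {ι κ : Type} [Fintype ι] [DecidableEq ι] [Fintype κ] [DecidableEq κ]

theorem asym_det (M : Matrix (Fin 2) (Fin 2) ℂ) (h : M.det = 1) :
    asym (Fin 2) * (M ⊗ₖ M) = asym (Fin 2) := by
  have e : asym (Fin 2) = asym (Fin 2) * ((1 : Matrix (Fin 2) (Fin 2) ℂ) ⊗ₖ 1) := by simp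
  rw [Matrix.det_fin_two] at h
  conv_rhs => rw [e]
  ext ⟨i, j⟩ ⟨i', j'⟩
  rw [asym_kron_apply, asym_kron_apply]
  fin_cases i <;> fin_cases j <;> fin_cases i' <;> fin_cases j' <;> simp <;>
    first | ring1 | linear_combination h | linear_combination -h | linear_combination 2⁻¹ * h | linear_combination -2⁻¹ * h

/-- a loop that is fibrewise conjugate to a loop in `SL₂` has constant exterior square -/
theorem lam_loop [CompactSpace X] [T2Space X] {a : Bun X} (L : Loop a)
    (h : ∀ p, ∃ (α : Matrix a.ι (Fin 2) ℂ) (β : Matrix (Fin 2) a.ι ℂ) (M M' : Matrix (Fin 2) (Fin 2) ℂ),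
      M.det = 1 ∧ M'.det = 1 ∧ α * β = a.e p.1 ∧ L.g p = α * M * β ∧ L.g' p = α * M' * β) :
    VB.lam L.cl = VB.pull prS (VB.lam (VB.mk a)) := by
  rw [← cl_lam, VB.lam_mk, ← cl_const]
  have key : ∀ (α : Matrix a.ι (Fin 2) ℂ) (β : Matrix (Fin 2) a.ι ℂ) (M : Matrix (Fin 2) (Fin 2) ℂ),
      M.det = 1 → asym a.ι * ((α * M * β) ⊗ₖ (α * M * β)) = asym a.ι * ((α * β) ⊗ₖ (α * β)) := by
    intro α β M hM
    rw [mul_kronecker_mul, mul_kronecker_mul, mul_kronecker_mul, ← Matrix.mul_assoc, ← Matrix.mul_assoc,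
      ← Matrix.mul_assoc, asym_kron, Matrix.mul_assoc _ (asym _), asym_det M hM]
  congr 1
  apply Loop.ext'
  · funext p
    obtain ⟨α, β, M, M', h1, h2, h3, h4, h5⟩ := h p
    show asym a.ι * (L.g p ⊗ₖ L.g p) = asym a.ι * (a.e p.1 ⊗ₖ a.e p.1)
    rw [h4, ← h3, key _ _ _ h1]
  · funext p
    obtain ⟨α, β, M, M', h1, h2, h3, h4, h5⟩ := h p
    show asym a.ι * (L.g' p ⊗ₖ L.g' p) = asym a.ι * (a.e p.1 ⊗ₖ a.e p.1)
    rw [h5, ← h3, key _ _ _ h2]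

theorem lam_two : VB.lam (2 : VB X) = 1 := by
  rw [← one_add_one_eq_two, VB.lam_add, VB.lam_one]; simp

/-- the loop `z ↦ z q + z⁻¹ (1-q)` -/
noncomputable def gq (q : Matrix (Fin 2) (Fin 2) ℂ) (z : Circle) : Matrix (Fin 2) (Fin 2) ℂ :=
  (z : ℂ) • q + ((z⁻¹ : Circle) : ℂ) • (1 - q)

@[reducible] noncomputable def zinv (a : Bun X) : Loop a where
  g p := ((p.2⁻¹ : Circle) : ℂ) • a.e p.1
  g' p := (p.2 : ℂ) • a.e p.1
  cg' := (by fun_prop : Continuous fun p : X × Circle => (p.2 : ℂ)).smul (a.cont.comp continuous_fst)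
  cg := (by fun_prop : Continuous fun p : X × Circle => ((p.2⁻¹ : Circle) : ℂ)).smul (a.cont.comp continuous_fst)
  gg' p := by simp [a.idem, smul_smul]
  g'g p := by simp [a.idem, smul_smul]
  ag p := by simp [a.idem]
  ag' p := by simp [a.idem]

theorem zinv_cl [CompactSpace X] [T2Space X] (a : Bun X) :
    (zinv a).cl = VB.pull prS (VB.mk a) * VB.H' X := by
  have h : (zinv a).zs = Loop.const a := by
    apply Loop.ext'
    · funext p; simp [smul_smul]
    · funext p; simp [smul_smul]
  have h2 := cl_zs (zinv a)
  rw [h, cl_const] at h2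
  rw [h2, mul_assoc, H_mul, mul_one]

theorem gcl_gq [CompactSpace X] [T2Space X] (f : C(X, S2)) :
    GLf (fun p : X × Circle => gq (hopf.e (f p.1)) p.2) ∧
    K0.of (gcl (fun p : X × Circle => gq (hopf.e (f p.1)) p.2)) =
      2 + 2 * (K0.pull prS (K0.pull f (K0.of (VB.mk hopf) - 1)) * hh X) := by
  have h := gcl_split (X := X) (Loop.const (hopf.pull f)).zs (zinv (hopf.pull f).compl)
  refine ⟨h.1, ?_⟩
  have h2 := congrArg K0.of h.2
  rw [cl_zs, zinv_cl, cl_const, map_add, map_mul, map_mul, of_H, of_H'] at h2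
  refine Eq.trans ?_ (h2.trans ?_)
  · rfl
  · have e := congrArg (fun y => K0.pull (prS (X := X)) (K0.of y)) (VB.mk_add_compl (hopf.pull f))
    simp only [map_add, map_natCast, Fintype.card_fin] at e
    simp only [map_sub, map_one, K0.pull_of, VB.pull_mk] at e ⊢
    push_cast at e
    linear_combination e * (1 - hh X)

theorem star_hopf (s : S2) : star (hopf.e s) = hopf.e s := by
  ext i j
  fin_cases i <;> fin_cases j <;> simp [hopf, Matrix.star_eq_conjTranspose]

theorem gq_mul {q : Matrix (Fin 2) (Fin 2) ℂ} (h : q * q = q) (z w : Circle) : gq q z * gq q w = gq q (z * w) := by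
  simp only [gq, Matrix.add_mul, Matrix.mul_add, Matrix.smul_mul, Matrix.mul_smul, Matrix.mul_sub,
    Matrix.sub_mul, h, Matrix.mul_one, Matrix.one_mul, sub_self, smul_zero, add_zero, zero_add, smul_smul,
    mul_inv, Circle.coe_mul, sub_zero, smul_sub, smul_add, mul_comm (w : ℂ), mul_comm ((w⁻¹ : Circle) : ℂ)]
  abel

theorem gq_one (q : Matrix (Fin 2) (Fin 2) ℂ) : gq q 1 = 1 := by simp [gq]

theorem gq_star {q : Matrix (Fin 2) (Fin 2) ℂ} (h : star q = q) (z : Circle) : star (gq q z) = gq q z⁻¹ := by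
  simp only [gq, star_add, star_smul, star_sub, h, star_one, inv_inv]
  rw [Circle.coe_inv_eq_conj]
  simp

theorem gq_det (s : S2) (z : Circle) : (gq (hopf.e s) z).det = 1 := by
  have h := S2.conj_mul s
  have hz : (z : ℂ) * (z : ℂ)⁻¹ = 1 := mul_inv_cancel₀ (by simp)
  rw [Matrix.det_fin_two]
  simp [gq]
  linear_combination hz - ((z : ℂ) - (z : ℂ)⁻¹) ^ 2 * h

/-- the corresponding map to `SU(2)` -/
noncomputable def gU (p : S2 × Circle) : SU 2 :=
  ⟨⟨gq (hopf.e p.1) p.2, by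
    rw [Matrix.mem_unitaryGroup_iff, gq_star (star_hopf _), gq_mul (hopf.idem _), mul_inv_cancel, gq_one]⟩,
    gq_det _ _⟩

noncomputable def toM (u : SU 2) : Matrix (Fin 2) (Fin 2) ℂ := u.1.1

theorem toM_mul (u v : SU 2) : toM (u * v) = toM u * toM v := rfl
theorem toM_one : toM 1 = 1 := rfl
theorem toM_det (u : SU 2) : (toM u).det = 1 := u.2
theorem toM_gU (p) : toM (gU p) = gq (hopf.e p.1) p.2 := rfl
theorem continuous_toM : Continuous toM := continuous_subtype_val.comp continuous_subtype_val
theorem continuous_gU : Continuous gU := by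
  refine Continuous.subtype_mk (Continuous.subtype_mk ?_ _) _
  have := hopf.cont
  exact ((by fun_prop : Continuous fun p : S2 × Circle => (p.2 : ℂ)).smul (hopf.cont.comp continuous_fst)).add
    ((by fun_prop : Continuous fun p : S2 × Circle => ((p.2⁻¹ : Circle) : ℂ)).smul
      (continuous_const.sub (hopf.cont.comp continuous_fst)))

end BottK

end

section
open Matrix
open scoped Kronecker TensorProduct unitInterval

namespace BottK
variable {X Y Z : Type} [TopologicalSpace X] [TopologicalSpace Y] [TopologicalSpace Z]
variable {ι κ : Type} [Fintype ι] [DecidableEq ι] [Fintype κ] [DecidableEq κ]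

theorem desc_conj [CompactSpace X] [T2Space X] {A : Bun (X × S2)} {a : Bun X} {L : Loop a}
    {α : W X → Matrix A.ι a.ι ℂ} {β : W X → Matrix a.ι A.ι ℂ} (h : IsCl A L α β)
    {M : W X × Circle → Matrix a.ι a.ι ℂ} (cM : Continuous M)
    (M0 : ∀ x z z' v, M (((x, z), 0), v) = M (((x, z'), 0), v))
    (M1 : ∀ x z z' v, L.g (x, z) * M (((x, z), 1), v) * L.g' (x, z) =
      L.g (x, z') * M (((x, z'), 1), v) * L.g' (x, z')) :
    ∃ f : (X × S2) × Circle → Matrix A.ι A.ι ℂ, Continuous f ∧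
      ∀ w v, f (ppi w, v) = α w * M (w, v) * β w := by
  let s : W (X × Circle) → W X × Circle := fun w => (((w.1.1.1, w.1.2), w.2), w.1.1.2)
  have cs : Continuous s := by fun_prop
  let F : W (X × Circle) → Matrix A.ι A.ι ℂ := fun w => α (s w).1 * M (s w) * β (s w).1
  have cF : Continuous F := ((h.ca.comp (continuous_fst.comp cs)).matrix_mul (cM.comp cs)).matrix_mul
    (h.cb.comp (continuous_fst.comp cs))
  have hF : Des F := by
    rintro ⟨x, v⟩ z z'
    constructor
    · show α ((x, z), 0) * M (((x, z), 0), v) * β ((x, z), 0) =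
        α ((x, z'), 0) * M (((x, z'), 0), v) * β ((x, z'), 0)
      rw [h.a0 x z z', h.b0 x z z', M0 x z z']
    · show α ((x, z), 1) * M (((x, z), 1), v) * β ((x, z), 1) =
        α ((x, z'), 1) * M (((x, z'), 1), v) * β ((x, z'), 1)
      have key : ∀ z, α ((x, z), 1) * M (((x, z), 1), v) * β ((x, z), 1) =
          (α ((x, z), 1) * L.g' (x, z)) * (L.g (x, z) * M (((x, z), 1), v) * L.g' (x, z)) *
            (L.g (x, z) * β ((x, z), 1)) := by
        intro z
        have e1 : α ((x, z), 1) = α ((x, z), 1) * (L.g' (x, z) * L.g (x, z)) := by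
          rw [L.g'g]; exact (h.aa ((x, z), 1)).symm
        have e2 : β ((x, z), 1) = (L.g' (x, z) * L.g (x, z)) * β ((x, z), 1) := by
          rw [L.g'g]; exact (h.bb ((x, z), 1)).symm
        conv_lhs => rw [e1, e2]
        simp only [Matrix.mul_assoc]
      rw [key z, key z', h.a1 x z z', h.b1 x z z', M1 x z z']
  obtain ⟨f, cf, hf⟩ := descend cF hF
  refine ⟨fun p => f ((p.1.1, p.2), p.1.2), cf.comp (by fun_prop), ?_⟩
  rintro ⟨⟨x, z⟩, t⟩ v
  exact hf (((x, v), z), t)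

theorem loop_conj [CompactSpace X] [T2Space X] {A : Bun (X × S2)} {a : Bun X} {L : Loop a}
    {α : W X → Matrix A.ι a.ι ℂ} {β : W X → Matrix a.ι A.ι ℂ} (h : IsCl A L α β)
    {M M' : W X × Circle → Matrix a.ι a.ι ℂ} (cM : Continuous M) (cM' : Continuous M')
    (M0 : ∀ x z z' v, M (((x, z), 0), v) = M (((x, z'), 0), v))
    (M1 : ∀ x z z' v, L.g (x, z) * M (((x, z), 1), v) * L.g' (x, z) =
      L.g (x, z') * M (((x, z'), 1), v) * L.g' (x, z'))
    (M0' : ∀ x z z' v, M' (((x, z), 0), v) = M' (((x, z'), 0), v))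
    (M1' : ∀ x z z' v, L.g (x, z) * M' (((x, z), 1), v) * L.g' (x, z) =
      L.g (x, z') * M' (((x, z'), 1), v) * L.g' (x, z'))
    (hM : ∀ p, M p * a.e p.1.1.1 = M p) (hM' : ∀ p, M' p * a.e p.1.1.1 = M' p)
    (hMM' : ∀ p, M p * M' p = a.e p.1.1.1) (hM'M : ∀ p, M' p * M p = a.e p.1.1.1) :
    ∃ N : Loop A, ∀ w v, N.g (ppi w, v) = α w * M (w, v) * β w ∧
      N.g' (ppi w, v) = α w * M' (w, v) * β w := by
  obtain ⟨f, cf, hf⟩ := desc_conj h cM M0 M1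
  obtain ⟨f', cf', hf'⟩ := desc_conj h cM' M0' M1'
  have mm : ∀ (w : W X) (U V : Matrix a.ι a.ι ℂ), U * a.e w.1.1 = U →
      (α w * U * β w) * (α w * V * β w) = α w * (U * V) * β w := by
    intro w U V hU
    calc (α w * U * β w) * (α w * V * β w) = α w * (U * (β w * α w)) * V * β w := by
          simp only [Matrix.mul_assoc]
      _ = _ := by rw [h.ba, hU]; simp only [Matrix.mul_assoc]
  have me : ∀ (w : W X) (U : Matrix a.ι a.ι ℂ),
      A.e (ppi w) * (α w * U * β w) = α w * U * β w := by
    intro w U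
    calc A.e (ppi w) * (α w * U * β w) = α w * (β w * α w) * U * β w := by
          rw [← h.ab]; simp only [Matrix.mul_assoc]
      _ = _ := by rw [h.ba, h.aa]
  have ee : ∀ w, α w * a.e w.1.1 * β w = A.e (ppi w) := fun w => by rw [h.aa, h.ab]
  refine ⟨⟨f, f', cf, cf', ?_, ?_, ?_, ?_⟩, fun w v => ⟨hf w v, hf' w v⟩⟩
  · rintro ⟨y, v⟩
    obtain ⟨w, rfl⟩ := ppi_surj y
    rw [hf, hf', mm _ _ _ (hM (w, v)), hMM', ee]
  · rintro ⟨y, v⟩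
    obtain ⟨w, rfl⟩ := ppi_surj y
    rw [hf, hf', mm _ _ _ (hM' (w, v)), hM'M, ee]
  · rintro ⟨y, v⟩
    obtain ⟨w, rfl⟩ := ppi_surj y
    rw [hf, me]
  · rintro ⟨y, v⟩
    obtain ⟨w, rfl⟩ := ppi_surj y
    rw [hf', me]

noncomputable def fn : C(BB, S2) := sndS.comp prS

theorem pull_fn : K0.pull fn (K0.of (VB.mk hopf) - 1) = K0.pull prS (hh Unit) := by
  rw [hh, H_eq, ← K0.pull_of]
  simp only [map_sub, map_one, K0.pull_comp]
  rfl

theorem pull_fm : K0.pull (sndS (X := Unit × S2)) (K0.of (VB.mk hopf) - 1) = hh (Unit × S2) := by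
  rw [hh, H_eq, ← K0.pull_of]
  simp only [map_sub, map_one]

theorem gl_cl_lam [CompactSpace X] [T2Space X] {f : X × Circle → Matrix (Fin 2) (Fin 2) ℂ} (h : GLf f)
    (hd : ∀ p, (f p).det = 1) : VB.lam (gl f h).cl = 1 := by
  rw [lam_loop, VB.mk_triv, Fintype.card_fin]
  · have := lam_two (X := X)
    push_cast
    rw [this, map_one]
  · intro p
    exact ⟨1, 1, f p, (f p)⁻¹, hd p, by rw [Matrix.det_nonsing_inv, hd]; simp, by simp, by simp, by simp⟩

theorem main_contra (H : C(I × (SU 2 × SU 2), SU 2)) (H0 : ∀ u v, H (0, u, v) = 1)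
    (H1 : ∀ u v, H (1, u, v) = u * v * u⁻¹ * v⁻¹) : False := by
  have hN := (gcl_gq fn).1
  have kN := (gcl_gq fn).2
  have hm := (gcl_gq (sndS (X := Unit × S2))).1
  have km := (gcl_gq (sndS (X := Unit × S2))).2
  rw [gcl_eq hN, pull_fn] at kN
  rw [gcl_eq hm, pull_fm] at km
  have lN := gl_cl_lam hN (fun p => gq_det _ _)
  obtain ⟨A, hA, α, β, h⟩ := (gl _ hN).exists_cl
  rw [← hA] at kN lN
  let Φ : W BB × Circle → SU 2 := fun p =>
    H (p.1.2, (gU (fn p.1.1.1, p.1.1.2))⁻¹, gU (p.1.1.1.2, p.2)) * gU (p.1.1.1.2, p.2)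
  have cΦ : Continuous Φ := by
    have c1 : Continuous fun p : W BB × Circle => gU (fn p.1.1.1, p.1.1.2) := continuous_gU.comp (by fun_prop)
    have c2 : Continuous fun p : W BB × Circle => gU (p.1.1.1.2, p.2) := continuous_gU.comp (by fun_prop)
    have c3 : Continuous fun p : W BB × Circle => p.1.2 := by fun_prop
    exact (H.continuous.comp (c3.prodMk (c1.inv.prodMk c2))).mul c2
  have Φ0 : ∀ x z v, Φ (((x, z), 0), v) = gU (x.2, v) := fun x z v => by simp [Φ, H0]
  have Φ1 : ∀ x z v, gU (fn x, z) * Φ (((x, z), 1), v) * (gU (fn x, z))⁻¹ = gU (x.2, v) := fun x z v => by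
    simp only [Φ, H1]; group
  have g1 : ∀ x z, (gl _ hN).g (x, z) = toM (gU (fn x, z)) := fun x z => rfl
  have g2 : ∀ x z, (gl _ hN).g' (x, z) = toM (gU (fn x, z))⁻¹ := fun x z => by
    show (toM (gU (fn x, z)))⁻¹ = toM (gU (fn x, z))⁻¹
    apply Matrix.inv_eq_right_inv
    rw [← toM_mul, mul_inv_cancel, toM_one]
  have Φ1' : ∀ x z v, gU (fn x, z) * (Φ (((x, z), 1), v))⁻¹ * (gU (fn x, z))⁻¹ = (gU (x.2, v))⁻¹ := fun x z v => by
    rw [← Φ1 x z v]; group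
  obtain ⟨N, hNN⟩ := loop_conj h (M := fun p => toM (Φ p)) (M' := fun p => toM (Φ p)⁻¹)
    (continuous_toM.comp cΦ) (continuous_toM.comp cΦ.inv)
    (fun x z z' v => by simp only [Φ0])
    (fun x z z' v => by rw [g1, g1, g2, g2, ← toM_mul, ← toM_mul, ← toM_mul, ← toM_mul, Φ1, Φ1])
    (fun x z z' v => by simp only [Φ0])
    (fun x z z' v => by rw [g1, g1, g2, g2, ← toM_mul, ← toM_mul, ← toM_mul, ← toM_mul, Φ1', Φ1'])
    (fun p => Matrix.mul_one _) (fun p => Matrix.mul_one _)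
    (fun p => by rw [← toM_mul, mul_inv_cancel, toM_one])
    (fun p => by rw [← toM_mul, inv_mul_cancel, toM_one])
  refine no_E (K0.of N.cl) ?_ ?_ ?_
  · rw [K0.pull_of, cl_atPole]
    exact kN
  · rw [K0.pull_of, ← cl_pull]
    refine Eq.trans (congrArg K0.of ?_) km
    let j : BB → W BB := fun x => ((x, 1), 0)
    have cj : Continuous j := by fun_prop
    have pj : ∀ x, ppi (j x) = (x, pole) := fun x => rfl
    refine cl_equiv (c := fun x => α (j x)) (c' := fun x => α (j x)) (d := fun x => β (j x))
      (d' := fun x => β (j x)) (h.ca.comp cj) (h.cb.comp cj) (fun x => h.ab (j x)) (fun x => h.ba (j x)) ?_ ?_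
    · rintro ⟨x, v⟩
      have e := (hNN (j x) v).1
      show toM (gU (x.2, v)) = β (j x) * N.g (ppi (j x), v) * α (j x)
      have e3 : β (j x) * α (j x) = 1 := h.ba (j x)
      rw [e]
      show toM (gU (x.2, v)) = β (j x) * (α (j x) * toM (Φ (((x, 1), 0), v)) * β (j x)) * α (j x)
      rw [Φ0, Matrix.mul_assoc, Matrix.mul_assoc _ (β _), e3, Matrix.mul_one, ← Matrix.mul_assoc, e3, Matrix.one_mul]
    · rintro ⟨x, v⟩
      have e := (hNN (j x) v).2
      have e4 : (toM (gU (x.2, v)))⁻¹ = toM (gU (x.2, v))⁻¹ := by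
        apply Matrix.inv_eq_right_inv
        rw [← toM_mul, mul_inv_cancel, toM_one]
      show (toM (gU (x.2, v)))⁻¹ = β (j x) * N.g' (ppi (j x), v) * α (j x)
      have e3 : β (j x) * α (j x) = 1 := h.ba (j x)
      rw [e, e4]
      show toM (gU (x.2, v))⁻¹ = β (j x) * (α (j x) * toM (Φ (((x, 1), 0), v))⁻¹ * β (j x)) * α (j x)
      rw [Φ0, Matrix.mul_assoc, Matrix.mul_assoc _ (β _), e3, Matrix.mul_one, ← Matrix.mul_assoc, e3, Matrix.one_mul]
  · rw [K0.psi_of, lam_loop, lN, map_one, map_one, mul_one]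
    rintro ⟨y, v⟩
    obtain ⟨w, rfl⟩ := ppi_surj y
    exact ⟨α w, β w, toM (Φ (w, v)), toM (Φ (w, v))⁻¹, toM_det _, toM_det _, h.ab w,
      (hNN w v).1, (hNN w v).2⟩

end BottK

end

/-- **Theorem (Samelson).** The commutator map `c : SU(2) × SU(2) → SU(2)`,
`c(u,v) = u v u⁻¹ v⁻¹`, is continuous and not null-homotopic. -/
theorem commutatorMap_SU2_not_nullHomotopic :
    Continuous (fun uv : SU 2 × SU 2 => uv.1 * uv.2 * uv.1⁻¹ * uv.2⁻¹) ∧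
    ∀ c : C(SU 2 × SU 2, SU 2),
      (∀ u v : SU 2, c (u, v) = u * v * u⁻¹ * v⁻¹) →
        ¬∃ y : SU 2, c.Homotopic (ContinuousMap.const (SU 2 × SU 2) y) := by
  refine ⟨by fun_prop, ?_⟩
  rintro c hc ⟨y, ⟨F⟩⟩
  let H : C(unitInterval × (SU 2 × SU 2), SU 2) :=
    ⟨fun p => F (unitInterval.symm p.1, p.2) * (F (unitInterval.symm p.1, (1, 1)))⁻¹, by fun_prop⟩
  refine BottK.main_contra H ?_ ?_
  · intro u v
    simp [H]
  · intro u v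
    simp [H, hc]
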